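/- arXiv:2001.01933 — 2 statements merged into one kernel-verified Lean document; each statement's English description precedes it below -/
import Mathlib

section
/- Let n range over even natural numbers and let Δ be drawn from U(n). Then with high probability Δ has a complete (n/2 − 2)-skeleton; that is, the probability that every nonempty subset of [n] of size at most n/2 − 2 is a face of Δ tends to 1 as n → ∞ through even values. -/
open scoped Classical

noncomputable section

/-- `Δ` is a simplicial complex on vertex set `Fin n`: all faces are nonempty
and it is downward closed. -/
def IsComplex {n : ℕ} (Δ : Finset (Finset (Fin n))) : Prop :=
  (∀ x ∈ Δ, x.Nonempty) ∧
    ∀ x ∈ Δ, ∀ y : Finset (Fin n), y.Nonempty → y ⊆ x → y ∈ Δ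

/-- The finite set of all simplicial complexes on `n` vertices. -/
def allComplexes (n : ℕ) : Finset (Finset (Finset (Fin n))) :=
  Finset.univ.filter IsComplex

/-- The probability, under the uniform measure `U(n)` on all simplicial
complexes on `n` vertices, of the event `P`. -/
def uniformProb (n : ℕ) (P : Finset (Finset (Fin n)) → Prop) : ℝ :=
  (((allComplexes n).filter P).card : ℝ) / ((allComplexes n).card : ℝ)

/-! ### Greedy covering -/

lemma greedy_cover {α β : Type*} [DecidableEq α] [DecidableEq β]
    (dom : Finset α) (f : α → Finset β) (p t : ℕ) (ht : 0 < t) :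
    ∃ T ⊆ dom, t * T.card ≤ p * (T.biUnion f).card ∧
      ∀ y ∈ dom, p * (f y \ T.biUnion f).card < t := by
  obtain ⟨T, hT, hmax⟩ := Finset.exists_max_image
    (dom.powerset.filter (fun T => t * T.card ≤ p * (T.biUnion f).card)) Finset.card
    ⟨∅, by simp⟩
  simp only [Finset.mem_filter, Finset.mem_powerset] at hT hmax
  refine ⟨T, hT.1, hT.2, fun y hy => ?_⟩
  by_contra! hlt
  have hyT : y ∉ T := by
    intro h
    have : f y \ T.biUnion f = ∅ := by
      rw [Finset.sdiff_eq_empty_iff_subset]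
      exact Finset.subset_biUnion_of_mem f h
    rw [this] at hlt
    simp at hlt; omega
  have h2 := hmax (insert y T) ⟨by
    intro x hx
    rcases Finset.mem_insert.1 hx with rfl | hx
    · exact hy
    · exact hT.1 hx, by
    rw [Finset.card_insert_of_notMem hyT, Finset.biUnion_insert]
    have : (f y ∪ T.biUnion f).card = (f y \ T.biUnion f).card + (T.biUnion f).card := by
      rw [← Finset.card_union_of_disjoint Finset.sdiff_disjoint]
      simp
    rw [this]
    nlinarith [hT.2]⟩
  rw [Finset.card_insert_of_notMem hyT] at h2
  omega

/-! ### Biregular bipartite graphs with codegree at most one -/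

structure Bip (V W : Type*) (d k : ℕ) where
  N : V → Finset W
  M : W → Finset V
  mem : ∀ y z, z ∈ N y ↔ y ∈ M z
  cN : ∀ y, (N y).card = d
  cM : ∀ z, (M z).card = k
  codeg : ∀ y y', y ≠ y' → ∀ z z', z ∈ N y → z ∈ N y' → z' ∈ N y → z' ∈ N y' → z = z'

namespace Bip

variable {V W : Type*} [Fintype V] [Fintype W] [DecidableEq V] [DecidableEq W] {d k : ℕ}
  (B : Bip V W d k)

/-- neighbourhood of a set -/
def NS (X : Finset V) : Finset W := X.biUnion B.N

/-- closure -/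
def cl (G : Finset W) : Finset V := Finset.univ.filter (fun y => B.N y ⊆ G)

/-- second neighbourhood -/
def J (y : V) : Finset V := (B.N y).biUnion B.M

def JA (y y' : V) : Prop := ∃ z, z ∈ B.N y ∧ z ∈ B.N y'

lemma dcw (A : Finset V) (C : Finset W) (f : W → ℕ) :
    ∑ y ∈ A, ∑ z ∈ B.N y ∩ C, f z = ∑ z ∈ C, (B.M z ∩ A).card * f z := by
  have h1 : ∀ y ∈ A, ∑ z ∈ B.N y ∩ C, f z = ∑ z ∈ C, if y ∈ B.M z then f z else 0 := by
    intro y _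
    rw [← Finset.sum_filter]
    apply Finset.sum_congr _ (fun _ _ => rfl)
    ext z; simp [B.mem, and_comm]
  rw [Finset.sum_congr rfl h1, Finset.sum_comm]
  apply Finset.sum_congr rfl
  intro z _
  rw [← Finset.sum_filter, Finset.sum_const, smul_eq_mul]
  congr 2
  ext y; simp [and_comm]

lemma dc (A : Finset V) (C : Finset W) :
    ∑ y ∈ A, (B.N y ∩ C).card = ∑ z ∈ C, (B.M z ∩ A).card := by
  have := B.dcw A C (fun _ => 1)
  simpa using this

lemma codeg_sum (y : V) (Q : Finset V) :
    ∑ z ∈ B.N y, (B.M z ∩ Q).card ≤ d + (B.J y ∩ Q).card := by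
  have h1 : ∀ z ∈ B.N y, (B.M z ∩ Q).card ≤ 1 + ((B.M z ∩ Q).erase y).card := by
    intro z _
    have := Finset.pred_card_le_card_erase (s := B.M z ∩ Q) (a := y)
    omega
  have h2 : ∑ z ∈ B.N y, ((B.M z ∩ Q).erase y).card
      = ((B.N y).biUnion (fun z => (B.M z ∩ Q).erase y)).card := by
    rw [Finset.card_biUnion]
    intro z hz z' hz' hne
    refine Finset.disjoint_left.2 ?_
    intro u hu hu'
    simp only [Finset.mem_erase, Finset.mem_inter] at hu hu'
    exact hne (B.codeg y u (Ne.symm hu.1) z z' hz ((B.mem _ _).2 hu.2.1) hz' ((B.mem _ _).2 hu'.2.1))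
  have h3 : ((B.N y).biUnion (fun z => (B.M z ∩ Q).erase y)).card ≤ (B.J y ∩ Q).card := by
    apply Finset.card_le_card
    intro u hu
    simp only [Finset.mem_biUnion, Finset.mem_erase, Finset.mem_inter, J] at hu ⊢
    obtain ⟨z, hz, _, h, h'⟩ := hu
    exact ⟨⟨z, hz, h⟩, h'⟩
  calc _ ≤ ∑ z ∈ B.N y, (1 + ((B.M z ∩ Q).erase y).card) := Finset.sum_le_sum h1
    _ = d + ((B.N y).biUnion (fun z => (B.M z ∩ Q).erase y)).card := by
        rw [Finset.sum_add_distrib, h2]; simp [B.cN]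
    _ ≤ _ := by omega

/-! decoding -/
def dW (T2 : Finset V) : Finset V := T2.biUnion B.J
def dF1 (T2 : Finset V) : Finset W := Finset.univ.filter (fun z => k ≤ 2 * (B.M z ∩ B.dW T2).card)
def dF2 (T2 T3 : Finset V) : Finset W := B.dF1 T2 ∪ B.NS T3
def dS2 (P : ℕ) (T2 T3 : Finset V) : Finset V :=
  Finset.univ.filter (fun y => P * (B.N y \ B.dF2 T2 T3).card < d)
def dS3 (P : ℕ) (T2 T3 : Finset V) (T4 : Finset W) : Finset V :=
  B.dS2 P T2 T3 \ T4.biUnion B.M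
def dF3 (P : ℕ) (T2 T3 : Finset V) (T4 : Finset W) : Finset W :=
  Finset.univ.filter (fun z => k ≤ P * (B.M z ∩ B.dS3 P T2 T3 T4).card)
def dF4 (P : ℕ) (T2 T3 : Finset V) (T4 : Finset W) (T5 : Finset V) : Finset W :=
  B.dF3 P T2 T3 T4 ∪ B.NS T5
def dS4 (P : ℕ) (T2 T3 : Finset V) (T4 : Finset W) (T5 : Finset V) : Finset V :=
  (B.dS3 P T2 T3 T4).filter (fun y => P * (B.N y \ B.dF4 P T2 T3 T4 T5).card < d)
def dR (P : ℕ) (T2 T3 : Finset V) (T4 : Finset W) (T5 : Finset V) (T6 : Finset W) : Finset V :=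
  B.cl (B.dF4 P T2 T3 T4 T5 ∪ T6)

end Bip

namespace Bip

variable {V W : Type*} [Fintype V] [Fintype W] [DecidableEq V] [DecidableEq W] {d k : ℕ}
  (B : Bip V W d k)

lemma mem_cl {G : Finset W} {y : V} : y ∈ B.cl G ↔ B.N y ⊆ G := by simp [cl]

lemma M_inter_cl_of_notMem {G : Finset W} {z : W} (hz : z ∉ G) : B.M z ∩ B.cl G = ∅ := by
  rw [Finset.eq_empty_iff_forall_notMem]
  intro y hy
  rw [Finset.mem_inter, mem_cl] at hy
  exact hz (hy.2 ((B.mem _ _).2 hy.1))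

lemma sum_out (G : Finset W) :
    ∑ z ∈ G, (B.M z \ B.cl G).card + d * (B.cl G).card = k * G.card := by
  have h1 : d * (B.cl G).card = ∑ z ∈ G, (B.M z ∩ B.cl G).card := by
    rw [← B.dc]
    rw [Finset.sum_congr rfl (g := fun _ => d)]
    · simp [mul_comm]
    · intro y hy
      rw [Finset.inter_eq_left.2 (B.mem_cl.1 hy), B.cN]
  rw [h1, ← Finset.sum_add_distrib, Finset.sum_congr rfl (g := fun _ => k)]
  · simp [mul_comm]
  · intro z _
    rw [Finset.card_sdiff_add_card_inter, B.cM]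

lemma sum_out_le (G : Finset W) {b : ℕ} (hb : G.card = (B.cl G).card + b) (hkd : k < d) :
    ∑ z ∈ G, (B.M z \ B.cl G).card ≤ k * b := by
  have := B.sum_out G
  rw [hb] at this
  nlinarith

lemma cl_le (G : Finset W) {b : ℕ} (hb : G.card = (B.cl G).card + b) (hkd : k < d) :
    (B.cl G).card ≤ k * b := by
  have := B.sum_out G
  rw [hb] at this
  have h2 : (k + 1) * (B.cl G).card ≤ d * (B.cl G).card := Nat.mul_le_mul_right _ hkd
  rw [mul_add] at this
  rw [add_mul] at h2
  omega

lemma cN_inter_le (y : V) (C : Finset W) : (B.N y ∩ C).card ≤ d :=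
  (Finset.card_le_card Finset.inter_subset_left).trans (B.cN y).le

lemma cM_inter_le (z : W) (C : Finset V) : (B.M z ∩ C).card ≤ k :=
  (Finset.card_le_card Finset.inter_subset_left).trans (B.cM z).le

lemma markov {α : Type*} (C : Finset α) (f : α → ℕ) (t : ℕ) (h : ∀ z ∈ C, t ≤ f z) :
    t * C.card ≤ ∑ z ∈ C, f z := by
  have := Finset.card_nsmul_le_sum C f t h
  simpa [mul_comm] using this

/-- The first approximation. -/
lemma stepAB (G : Finset W) {b : ℕ} (hb : G.card = (B.cl G).card + b) (hkd : k < d) (hk : 0 < k)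
    (ha : 0 < (B.cl G).card) (Λ : ℕ) (hΛ : 0 < Λ) :
    ∃ T2 ⊆ B.cl G, d * k * T2.card ≤ Λ * (B.cl G).card ∧
      (B.dF1 T2 \ G).card ≤ 2 * Λ ^ 2 * b ∧
      ∃ c1 c2 : ℕ, (G \ B.dF1 T2).card ≤ c1 + c2 ∧
        Λ * k ^ 2 * c1 ≤ 8 * (Λ * k ^ 2 * b + (B.cl G).card * (Λ * d + d * k)) ∧
        3 * k * Λ * c2 ≤ 4 * (Λ * k * b + d * (B.cl G).card) := by
  set R := B.cl G with hR
  set a := R.card with haa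
  have he := B.sum_out_le G hb hkd
  rw [← hR] at he
  have hak : a ≤ k * b := B.cl_le G hb hkd
  have hb0 : 0 < b := by
    rcases Nat.eq_zero_or_pos b with h | h
    · subst h; omega
    · exact h
  have hNG : ∀ y ∈ R, B.N y ⊆ G := fun y hy => B.mem_cl.1 hy
  let out : V → ℕ := fun y => ∑ z ∈ B.N y, (B.M z \ R).card
  have hout : ∑ y ∈ R, out y ≤ k * (k * b) := by
    have h1 : ∑ y ∈ R, out y = ∑ y ∈ R, ∑ z ∈ B.N y ∩ G, (B.M z \ R).card := by
      apply Finset.sum_congr rfl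
      intro y hy
      rw [Finset.inter_eq_left.2 (hNG y hy)]
    rw [h1, B.dcw]
    calc _ ≤ ∑ z ∈ G, k * (B.M z \ R).card := by
          apply Finset.sum_le_sum
          intro z _
          apply Nat.mul_le_mul_right
          exact B.cM_inter_le _ _
      _ ≤ _ := by rw [← Finset.mul_sum]; exact Nat.mul_le_mul_left _ he
  let H : Finset V := R.filter (fun y => a * out y ≤ Λ * (k ^ 2 * b))
  let NH : Finset V := R.filter (fun y => ¬ a * out y ≤ Λ * (k ^ 2 * b))
  have hHR : H ⊆ R := Finset.filter_subset _ _
  have hNH : Λ * NH.card ≤ a := by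
    have h1 : (Λ * (k ^ 2 * b)) * NH.card ≤ ∑ y ∈ NH, a * out y := by
      apply markov
      intro y hy
      exact le_of_lt (not_le.1 (Finset.mem_filter.1 hy).2)
    have h2 : ∑ y ∈ NH, a * out y ≤ a * (k * (k * b)) := by
      rw [← Finset.mul_sum]
      apply Nat.mul_le_mul_left
      exact (Finset.sum_le_sum_of_subset (Finset.filter_subset _ _)).trans hout
    have h3 : 0 < k ^ 2 * b := by positivity
    have h4 : (k ^ 2 * b) * (Λ * NH.card) ≤ (k ^ 2 * b) * a := by nlinarith
    exact Nat.le_of_mul_le_mul_left h4 h3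
  obtain ⟨T2, hT2H, hT2c, hT2m⟩ := greedy_cover H (fun y => B.J y ∩ R) Λ (d * k)
    (Nat.mul_pos (by omega) hk)
  have hbi : T2.biUnion (fun y => B.J y ∩ R) = B.dW T2 ∩ R := by
    ext u; simp [dW]; tauto
  rw [hbi] at hT2c hT2m
  set Wc := B.dW T2 with hWc
  have hT2a : d * k * T2.card ≤ Λ * a :=
    hT2c.trans (Nat.mul_le_mul_left _ (Finset.card_le_card Finset.inter_subset_right))
  -- |Wc \ R|
  have hWR : d * (Wc \ R).card ≤ Λ ^ 2 * (k * b) := by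
    have h1 : (Wc \ R).card ≤ ∑ y ∈ T2, out y := by
      have : Wc \ R ⊆ T2.biUnion (fun y => (B.N y).biUnion (fun z => B.M z \ R)) := by
        intro u hu
        simp only [hWc, dW, J, Finset.mem_sdiff, Finset.mem_biUnion] at hu ⊢
        obtain ⟨⟨y, hy, z, hz, h⟩, h'⟩ := hu
        exact ⟨y, hy, z, hz, h, h'⟩
      refine (Finset.card_le_card this).trans (Finset.card_biUnion_le.trans ?_)
      exact Finset.sum_le_sum (fun y _ => Finset.card_biUnion_le)
    have h2 : a * ∑ y ∈ T2, out y ≤ T2.card * (Λ * (k ^ 2 * b)) := by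
      rw [Finset.mul_sum]
      have := Finset.sum_le_card_nsmul T2 (fun y => a * out y) (Λ * (k ^ 2 * b))
        (fun y hy => (Finset.mem_filter.1 (hT2H hy)).2)
      simpa using this
    have h3 : (a * k) * (d * (Wc \ R).card) ≤ (a * k) * (Λ ^ 2 * (k * b)) := by
      calc (a * k) * (d * (Wc \ R).card) = (d * k) * (a * (Wc \ R).card) := by ring
        _ ≤ (d * k) * (T2.card * (Λ * (k ^ 2 * b))) :=
            Nat.mul_le_mul_left _ ((Nat.mul_le_mul_left _ h1).trans h2)
        _ = (d * k * T2.card) * (Λ * (k ^ 2 * b)) := by ring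
        _ ≤ (Λ * a) * (Λ * (k ^ 2 * b)) := Nat.mul_le_mul_right _ hT2a
        _ = _ := by ring
    exact Nat.le_of_mul_le_mul_left h3 (by positivity)
  refine ⟨T2, hT2H.trans hHR, hT2a, ?_, ?_⟩
  · -- F1 \ G
    have h1 : k * (B.dF1 T2 \ G).card ≤ ∑ z ∈ B.dF1 T2 \ G, 2 * (B.M z ∩ (Wc \ R)).card := by
      apply markov
      intro z hz
      simp only [dF1, Finset.mem_sdiff, Finset.mem_filter, Finset.mem_univ, true_and] at hz
      have h0 := B.M_inter_cl_of_notMem hz.2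
      have : B.M z ∩ (Wc \ R) = B.M z ∩ Wc := by
        ext u
        simp only [Finset.mem_inter, Finset.mem_sdiff]
        constructor
        · tauto
        · rintro ⟨h, h'⟩
          refine ⟨h, h', fun h'' => ?_⟩
          have : u ∈ B.M z ∩ B.cl G := Finset.mem_inter.2 ⟨h, h''⟩
          rw [h0] at this
          simp at this
      rw [this]; exact hz.1
    rw [← Finset.mul_sum, ← B.dc] at h1
    have h2 : ∑ y ∈ Wc \ R, (B.N y ∩ (B.dF1 T2 \ G)).card ≤ (Wc \ R).card * d := by
      have := Finset.sum_le_card_nsmul (Wc \ R) (fun y => (B.N y ∩ (B.dF1 T2 \ G)).card) d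
        (fun y _ => B.cN_inter_le _ _)
      simpa using this
    have h3 : k * (B.dF1 T2 \ G).card ≤ k * (2 * Λ ^ 2 * b) := by nlinarith
    exact Nat.le_of_mul_le_mul_left h3 hk
  · let C1 := G.filter (fun z => 2 * (B.M z ∩ Wc).card < k ∧ k ≤ 4 * (B.M z ∩ H).card)
    let C2 := G.filter (fun z => 4 * (B.M z ∩ H).card < k)
    refine ⟨C1.card, C2.card, ?_, ?_, ?_⟩
    · refine (Finset.card_le_card ?_).trans (Finset.card_union_le C1 C2)
      intro z hz
      simp only [dF1, Finset.mem_sdiff, Finset.mem_filter, Finset.mem_univ, true_and,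
        Finset.mem_union, C1, C2, ← hWc] at hz ⊢
      rcases lt_or_ge (4 * (B.M z ∩ H).card) k with h | h
      · right; exact ⟨hz.1, h⟩
      · left; exact ⟨hz.1, not_le.1 hz.2, h⟩
    · -- first kind
      have h1 : k ^ 2 * C1.card ≤ ∑ z ∈ C1, 8 * ((B.M z ∩ H).card * (B.M z \ Wc).card) := by
        apply markov
        intro z hz
        simp only [C1, Finset.mem_filter] at hz
        have h := Finset.card_sdiff_add_card_inter (B.M z) Wc
        rw [B.cM] at h
        have h' : k ≤ 2 * (B.M z \ Wc).card := by omega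
        have h'' := Nat.mul_le_mul hz.2.2 h'
        nlinarith
      have h2 : ∑ z ∈ C1, 8 * ((B.M z ∩ H).card * (B.M z \ Wc).card) ≤
          8 * ∑ y ∈ H, ∑ z ∈ B.N y ∩ G, (B.M z \ Wc).card := by
        rw [B.dcw, ← Finset.mul_sum]
        apply Nat.mul_le_mul_left
        exact Finset.sum_le_sum_of_subset (Finset.filter_subset _ _)
      have h3 : ∀ y ∈ H, Λ * ∑ z ∈ B.N y ∩ G, (B.M z \ Wc).card ≤
          Λ * out y + (Λ * d + d * k) := by
        intro y hy
        rw [Finset.inter_eq_left.2 (hNG y (hHR hy))]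
        have h4 : ∑ z ∈ B.N y, (B.M z \ Wc).card ≤
            out y + ∑ z ∈ B.N y, (B.M z ∩ (R \ Wc)).card := by
          rw [← Finset.sum_add_distrib]
          apply Finset.sum_le_sum
          intro z _
          refine (Finset.card_le_card ?_).trans (Finset.card_union_le _ _)
          intro u hu
          simp only [Finset.mem_sdiff, Finset.mem_union, Finset.mem_inter] at hu ⊢
          tauto
        have h5 := B.codeg_sum y (R \ Wc)
        have h6 := hT2m y hy
        have h7 : (B.J y ∩ R) \ (Wc ∩ R) = B.J y ∩ (R \ Wc) := by
          ext u; simp only [Finset.mem_sdiff, Finset.mem_inter]; tauto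
        rw [h7] at h6
        nlinarith
      have h4 : Λ * ∑ y ∈ H, ∑ z ∈ B.N y ∩ G, (B.M z \ Wc).card ≤
          Λ * (k * (k * b)) + a * (Λ * d + d * k) := by
        rw [Finset.mul_sum]
        refine (Finset.sum_le_sum h3).trans ?_
        rw [Finset.sum_add_distrib, ← Finset.mul_sum, Finset.sum_const, smul_eq_mul]
        refine Nat.add_le_add (Nat.mul_le_mul_left _ ?_)
          (Nat.mul_le_mul_right _ (Finset.card_le_card hHR))
        exact (Finset.sum_le_sum_of_subset hHR).trans hout
      have h5 := Nat.mul_le_mul_left Λ (h1.trans h2)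
      nlinarith
    · have h1 : (3 * k) * C2.card ≤ ∑ z ∈ C2, 4 * (B.M z \ H).card := by
        apply markov
        intro z hz
        simp only [C2, Finset.mem_filter] at hz
        have h := Finset.card_sdiff_add_card_inter (B.M z) H
        rw [B.cM] at h
        omega
      have h2 : ∑ z ∈ C2, 4 * (B.M z \ H).card ≤ 4 * ∑ z ∈ G, (B.M z \ H).card := by
        rw [← Finset.mul_sum]
        apply Nat.mul_le_mul_left
        exact Finset.sum_le_sum_of_subset (Finset.filter_subset _ _)
      have h3 : ∑ z ∈ G, (B.M z \ H).card ≤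
          ∑ z ∈ G, (B.M z \ R).card + ∑ z ∈ G, (B.M z ∩ NH).card := by
        rw [← Finset.sum_add_distrib]
        apply Finset.sum_le_sum
        intro z _
        refine (Finset.card_le_card ?_).trans (Finset.card_union_le _ _)
        intro u hu
        simp only [Finset.mem_sdiff, Finset.mem_union, Finset.mem_inter, H, NH,
          Finset.mem_filter] at hu ⊢
        tauto
      rw [← B.dc] at h3
      have h4 : ∑ y ∈ NH, (B.N y ∩ G).card ≤ NH.card * d := by
        have := Finset.sum_le_card_nsmul NH (fun y => (B.N y ∩ G).card) d
          (fun y _ => B.cN_inter_le _ _)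
        simpa using this
      have h5 : (3 * k) * C2.card ≤ 4 * (k * b + NH.card * d) := by omega
      have h6 := Nat.mul_le_mul_left Λ h5
      have h7 := Nat.mul_le_mul_left d hNH
      calc 3 * k * Λ * C2.card = Λ * (3 * k * C2.card) := by ring
        _ ≤ _ := h6
        _ = 4 * (Λ * k * b + d * (Λ * NH.card)) := by ring
        _ ≤ _ := by omega
end Bip

namespace Bip

variable {V W : Type*} [Fintype V] [Fintype W] [DecidableEq V] [DecidableEq W] {d k : ℕ}
  (B : Bip V W d k)

lemma JA_self (hd : 0 < d) (y : V) : B.JA y y := by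
  have : (B.N y).Nonempty := Finset.card_pos.1 (by rw [B.cN]; exact hd)
  obtain ⟨z, hz⟩ := this
  exact ⟨z, hz, hz⟩

lemma JA_symm {y y' : V} (h : B.JA y y') : B.JA y' y := by
  obtain ⟨z, hz, hz'⟩ := h
  exact ⟨z, hz', hz⟩

lemma mem_J {y u : V} : u ∈ B.J y ↔ B.JA y u := by
  simp only [J, Finset.mem_biUnion, JA, B.mem]

lemma extra_le (G : Finset W) {b : ℕ} (hb : G.card = (B.cl G).card + b) (hkd : k < d)
    (F : Finset W) (S : Finset V) (h : ∀ y ∈ S \ B.cl G, d ≤ 2 * (B.N y ∩ F).card) :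
    (S \ B.cl G).card ≤ 2 * b + 2 * (F \ G).card := by
  set R := B.cl G with hR
  have he := B.sum_out_le G hb hkd
  rw [← hR] at he
  have h1 : d * (S \ R).card ≤ ∑ y ∈ S \ R, 2 * (B.N y ∩ F).card := markov _ _ _ h
  rw [← Finset.mul_sum, B.dc] at h1
  have h2 : ∑ z ∈ F, (B.M z ∩ (S \ R)).card ≤ ∑ z ∈ G, (B.M z \ R).card + ∑ z ∈ F \ G, k := by
    calc _ ≤ ∑ z ∈ G ∪ (F \ G), (B.M z ∩ (S \ R)).card := by
          apply Finset.sum_le_sum_of_subset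
          intro z hz
          simp only [Finset.mem_union, Finset.mem_sdiff]; tauto
      _ = ∑ z ∈ G, (B.M z ∩ (S \ R)).card + ∑ z ∈ F \ G, (B.M z ∩ (S \ R)).card :=
          Finset.sum_union Finset.disjoint_sdiff
      _ ≤ _ := by
          refine Nat.add_le_add (Finset.sum_le_sum ?_) (Finset.sum_le_sum ?_)
          · intro z _
            apply Finset.card_le_card
            intro u
            simp only [Finset.mem_inter, Finset.mem_sdiff]; tauto
          · intro z _; exact B.cM_inter_le _ _
  simp only [Finset.sum_const, smul_eq_mul] at h2
  have h3 : d * (S \ R).card ≤ d * (2 * b + 2 * (F \ G).card) := by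
    have h4 : k * (b + (F \ G).card) ≤ d * (b + (F \ G).card) := Nat.mul_le_mul_right _ hkd.le
    calc _ ≤ _ := h1
      _ ≤ 2 * (k * b + (F \ G).card * k) := by omega
      _ = 2 * (k * (b + (F \ G).card)) := by ring
      _ ≤ 2 * (d * (b + (F \ G).card)) := by omega
      _ = _ := by ring
  exact Nat.le_of_mul_le_mul_left h3 (by omega)

lemma half_of (P : ℕ) (hP : 2 ≤ P) (y : V) (F : Finset W) (h : P * (B.N y \ F).card < d) :
    d ≤ 2 * (B.N y ∩ F).card := by
  have h1 := Finset.card_sdiff_add_card_inter (B.N y) F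
  rw [B.cN] at h1
  have : 2 * (B.N y \ F).card ≤ P * (B.N y \ F).card := Nat.mul_le_mul_right _ hP
  omega

lemma NS_subset {G : Finset W} {T : Finset V} (h : T ⊆ B.cl G) : B.NS T ⊆ G := by
  intro z hz
  simp only [NS, Finset.mem_biUnion] at hz
  obtain ⟨y, hy, hz⟩ := hz
  exact B.mem_cl.1 (h hy) hz

lemma stepC (G : Finset W) {b : ℕ} (hb : G.card = (B.cl G).card + b) (hkd : k < d)
    (P : ℕ) (hP : 2 ≤ P) (T2 : Finset V) :
    ∃ T3 ⊆ B.cl G, d * T3.card ≤ P * (G \ B.dF1 T2).card ∧ B.cl G ⊆ B.dS2 P T2 T3 ∧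
      (B.dS2 P T2 T3 \ B.cl G).card ≤ 2 * b + 2 * (B.dF1 T2 \ G).card := by
  obtain ⟨T3, h1, h2, h3⟩ := greedy_cover (B.cl G) (fun y => B.N y \ B.dF1 T2) P d (by omega)
  have hsub : T3.biUnion (fun y => B.N y \ B.dF1 T2) = B.NS T3 \ B.dF1 T2 := by
    ext z; simp only [NS, Finset.mem_biUnion, Finset.mem_sdiff]
    constructor
    · rintro ⟨y, hy, h, h'⟩; exact ⟨⟨y, hy, h⟩, h'⟩
    · rintro ⟨⟨y, hy, h⟩, h'⟩; exact ⟨y, hy, h, h'⟩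
  rw [hsub] at h2 h3
  refine ⟨T3, h1, h2.trans (Nat.mul_le_mul_left _ (Finset.card_le_card
    (Finset.sdiff_subset_sdiff (B.NS_subset h1) (le_refl _)))), ?_, ?_⟩
  · intro y hy
    simp only [dS2, Finset.mem_filter, Finset.mem_univ, true_and]
    have : B.N y \ B.dF2 T2 T3 = (B.N y \ B.dF1 T2) \ (B.NS T3 \ B.dF1 T2) := by
      ext z; simp only [dF2, Finset.mem_sdiff, Finset.mem_union]; tauto
    rw [this]; exact h3 y hy
  · have h4 := B.extra_le G hb hkd (B.dF2 T2 T3) (B.dS2 P T2 T3) (by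
      intro y hy
      simp only [dS2, Finset.mem_sdiff, Finset.mem_filter, Finset.mem_univ, true_and] at hy
      exact B.half_of P hP y _ hy.1)
    have h5 : B.dF2 T2 T3 \ G = B.dF1 T2 \ G := by
      ext z
      have : z ∈ B.NS T3 → z ∈ G := fun h => B.NS_subset h1 h
      simp only [dF2, Finset.mem_sdiff, Finset.mem_union]; tauto
    rwa [h5] at h4

lemma stepD (G : Finset W) {b : ℕ} (hb : G.card = (B.cl G).card + b) (hkd : k < d) (hk : 0 < k)
    (P : ℕ) (hP : 2 ≤ P) (T2 T3 : Finset V) (hS : B.cl G ⊆ B.dS2 P T2 T3) :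
    ∃ T4 : Finset W, (∀ z ∈ T4, (B.M z ∩ B.dS2 P T2 T3).Nonempty) ∧
      k * T4.card ≤ P * (B.dS2 P T2 T3 \ B.cl G).card ∧
      B.cl G ⊆ B.dS3 P T2 T3 T4 ∧ B.dF3 P T2 T3 T4 ⊆ G ∧
      (G \ B.dF3 P T2 T3 T4).card ≤ 2 * b := by
  set R := B.cl G with hR
  set S2 := B.dS2 P T2 T3 with hS2
  obtain ⟨T4, h1, h2, h3⟩ := greedy_cover
    (Finset.univ.filter (fun z => z ∉ G ∧ k ≤ P * (B.M z ∩ S2).card)) (fun z => B.M z ∩ S2) P k hk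
  have hT4 : ∀ z ∈ T4, z ∉ G ∧ k ≤ P * (B.M z ∩ S2).card := by
    intro z hz; simpa using h1 hz
  have hTR : ∀ u ∈ R, u ∉ T4.biUnion B.M := by
    intro u hu hu'
    simp only [Finset.mem_biUnion] at hu'
    obtain ⟨z, hz, hz'⟩ := hu'
    exact (hT4 z hz).1 (B.mem_cl.1 hu ((B.mem _ _).2 hz'))
  have hsub : T4.biUnion (fun z => B.M z ∩ S2) ⊆ S2 \ R := by
    intro u hu
    simp only [Finset.mem_biUnion, Finset.mem_inter] at hu
    obtain ⟨z, hz, hz', hz''⟩ := hu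
    refine Finset.mem_sdiff.2 ⟨hz'', fun h => hTR u h ?_⟩
    exact Finset.mem_biUnion.2 ⟨z, hz, hz'⟩
  have hRS3 : R ⊆ B.dS3 P T2 T3 T4 := by
    intro u hu
    simp only [dS3, Finset.mem_sdiff]
    exact ⟨hS hu, hTR u hu⟩
  refine ⟨T4, ?_, h2.trans (Nat.mul_le_mul_left _ (Finset.card_le_card hsub)), hRS3, ?_, ?_⟩
  · intro z hz
    rw [← Finset.card_pos]
    by_contra hc
    have := (hT4 z hz).2
    have h0 : (B.M z ∩ S2).card = 0 := by omega
    rw [h0] at this; omega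
  · intro z hz
    simp only [dF3, Finset.mem_filter, Finset.mem_univ, true_and] at hz
    by_contra hzG
    have heq : B.M z ∩ B.dS3 P T2 T3 T4 = (B.M z ∩ S2) \ T4.biUnion (fun z => B.M z ∩ S2) := by
      ext u
      simp only [dS3, Finset.mem_inter, Finset.mem_sdiff, Finset.mem_biUnion, ← hS2, not_exists,
        not_and]
      constructor
      · rintro ⟨ha, hb, hc⟩; exact ⟨⟨ha, hb⟩, fun x hx hx' => absurd hx' (hc x hx)⟩
      · rintro ⟨⟨ha, hb⟩, hc⟩; exact ⟨ha, hb, fun x hx hx' => hc x hx hx' hb⟩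
    have h4 := h3 z (by
      simp only [Finset.mem_filter, Finset.mem_univ, true_and]
      refine ⟨hzG, hz.trans (Nat.mul_le_mul_left _ (Finset.card_le_card ?_))⟩
      apply Finset.inter_subset_inter_left
      exact Finset.sdiff_subset)
    rw [← heq] at h4
    omega
  · have he := B.sum_out_le G hb hkd
    rw [← hR] at he
    have h5 : k * (G \ B.dF3 P T2 T3 T4).card ≤
        ∑ z ∈ G \ B.dF3 P T2 T3 T4, 2 * (B.M z \ R).card := by
      apply markov
      intro z hz
      simp only [dF3, Finset.mem_sdiff, Finset.mem_filter, Finset.mem_univ, true_and, not_le] at hz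
      have h6 : (B.M z ∩ R).card ≤ (B.M z ∩ B.dS3 P T2 T3 T4).card :=
        Finset.card_le_card (Finset.inter_subset_inter_left hRS3)
      have h7 := Finset.card_sdiff_add_card_inter (B.M z) R
      rw [B.cM] at h7
      have h8 : 2 * (B.M z ∩ B.dS3 P T2 T3 T4).card ≤ P * (B.M z ∩ B.dS3 P T2 T3 T4).card :=
        Nat.mul_le_mul_right _ hP
      omega
    have h6 : ∑ z ∈ G \ B.dF3 P T2 T3 T4, 2 * (B.M z \ R).card ≤ 2 * (k * b) := by
      rw [← Finset.mul_sum]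
      exact Nat.mul_le_mul_left _ ((Finset.sum_le_sum_of_subset Finset.sdiff_subset).trans he)
    have h7 : k * (G \ B.dF3 P T2 T3 T4).card ≤ k * (2 * b) := by
      calc _ ≤ _ := h5.trans h6
        _ = _ := by ring
    exact Nat.le_of_mul_le_mul_left h7 hk

lemma stepE (G : Finset W) {b : ℕ} (hb : G.card = (B.cl G).card + b) (hkd : k < d)
    (P : ℕ) (hP : 2 ≤ P) (T2 T3 : Finset V) (T4 : Finset W)
    (hS : B.cl G ⊆ B.dS3 P T2 T3 T4) (hF : B.dF3 P T2 T3 T4 ⊆ G)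
    (hc : (G \ B.dF3 P T2 T3 T4).card ≤ 2 * b) :
    ∃ T5 ⊆ B.cl G, d * T5.card ≤ 2 * P * b ∧
      B.dF4 P T2 T3 T4 T5 ⊆ G ∧ B.cl G ⊆ B.dS4 P T2 T3 T4 T5 ∧
      P * (B.dS4 P T2 T3 T4 T5).card ≤ P * (B.dF4 P T2 T3 T4 T5).card + 4 * b := by
  set R := B.cl G with hR
  set F3 := B.dF3 P T2 T3 T4 with hF3
  obtain ⟨T5, h1, h2, h3⟩ := greedy_cover R (fun y => B.N y \ F3) P d (by omega)
  have hsub : T5.biUnion (fun y => B.N y \ F3) = B.NS T5 \ F3 := by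
    ext z; simp only [NS, Finset.mem_biUnion, Finset.mem_sdiff]
    constructor
    · rintro ⟨y, hy, h, h'⟩; exact ⟨⟨y, hy, h⟩, h'⟩
    · rintro ⟨⟨y, hy, h⟩, h'⟩; exact ⟨y, hy, h, h'⟩
  rw [hsub] at h2 h3
  have hF4 : B.dF4 P T2 T3 T4 T5 ⊆ G := Finset.union_subset hF (B.NS_subset h1)
  set F4 := B.dF4 P T2 T3 T4 T5 with hF4d
  have hF34 : F3 ⊆ F4 := Finset.subset_union_left
  have hRS4 : R ⊆ B.dS4 P T2 T3 T4 T5 := by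
    intro y hy
    simp only [dS4, Finset.mem_filter]
    refine ⟨hS hy, ?_⟩
    have : B.N y \ B.dF4 P T2 T3 T4 T5 = (B.N y \ F3) \ (B.NS T5 \ F3) := by
      ext z; simp only [dF4, Finset.mem_sdiff, Finset.mem_union, ← hF3]; tauto
    rw [this]; exact h3 y hy
  set S4 := B.dS4 P T2 T3 T4 T5 with hS4
  have hS4m : ∀ y ∈ S4, P * (B.N y \ F4).card < d := by
    intro y hy
    simp only [hS4, dS4, Finset.mem_filter] at hy
    exact hy.2
  have hSR : (S4 \ R).card ≤ 2 * b := by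
    have h4 := B.extra_le G hb hkd F4 S4 (by
      intro y hy
      exact B.half_of P hP y _ (hS4m y (Finset.mem_sdiff.1 hy).1))
    rw [Finset.sdiff_eq_empty_iff_subset.2 hF4] at h4
    simpa using h4
  refine ⟨T5, h1, ?_, hF4, hRS4, ?_⟩
  · refine h2.trans ?_
    have : (B.NS T5 \ F3).card ≤ (G \ F3).card :=
      Finset.card_le_card (Finset.sdiff_subset_sdiff (B.NS_subset h1) (le_refl _))
    calc _ ≤ P * (2 * b) := Nat.mul_le_mul_left _ (this.trans hc)
      _ = _ := by ring
  · have e1 : d * S4.card = ∑ y ∈ S4, (B.N y ∩ F4).card + ∑ y ∈ S4, (B.N y \ F4).card := by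
      rw [← Finset.sum_add_distrib, Finset.sum_congr rfl (g := fun _ => d)]
      · simp [mul_comm]
      · intro y _
        have := Finset.card_sdiff_add_card_inter (B.N y) F4
        rw [B.cN] at this; omega
    have e2 : ∑ y ∈ S4, (B.N y ∩ F4).card ≤ k * F4.card := by
      rw [B.dc]
      have := Finset.sum_le_card_nsmul F4 (fun z => (B.M z ∩ S4).card) k
        (fun z _ => B.cM_inter_le _ _)
      simpa [mul_comm] using this
    have e3 : ∑ y ∈ S4, (B.N y \ F4).card =
        ∑ y ∈ S4 \ R, (B.N y \ F4).card + ∑ y ∈ R, (B.N y \ F4).card :=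
      (Finset.sum_sdiff hRS4).symm
    have e4 : ∑ y ∈ S4 \ R, P * (B.N y \ F4).card ≤ (S4 \ R).card * d := by
      have := Finset.sum_le_card_nsmul (S4 \ R) (fun y => P * (B.N y \ F4).card) d
        (fun y hy => (hS4m y (Finset.mem_sdiff.1 hy).1).le)
      simpa using this
    have e5 : ∑ y ∈ R, (B.N y \ F4).card = ∑ z ∈ G \ F4, (B.M z ∩ R).card := by
      rw [← B.dc]
      apply Finset.sum_congr rfl
      intro y hy
      congr 1
      ext z
      have : z ∈ B.N y → z ∈ G := fun h => B.mem_cl.1 hy h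
      simp only [Finset.mem_sdiff, Finset.mem_inter]; tauto
    have e6 : ∑ z ∈ G \ F4, P * (B.M z ∩ R).card ≤ (G \ F4).card * k := by
      have := Finset.sum_le_card_nsmul (G \ F4) (fun z => P * (B.M z ∩ R).card) k
        (fun z hz => by
          have hz3 : z ∉ F3 := fun h => (Finset.mem_sdiff.1 hz).2 (hF34 h)
          simp only [hF3, dF3, Finset.mem_filter, Finset.mem_univ, true_and, not_le] at hz3
          refine le_trans (Nat.mul_le_mul_left _ (Finset.card_le_card ?_)) hz3.le
          exact Finset.inter_subset_inter_left hS)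
      simpa using this
    have e7 : (G \ F4).card ≤ 2 * b :=
      (Finset.card_le_card (Finset.sdiff_subset_sdiff (le_refl _) hF34)).trans hc
    rw [← Finset.mul_sum] at e4 e6
    rw [← e5] at e6
    have e8 : (S4 \ R).card * d ≤ 2 * b * d := Nat.mul_le_mul_right _ hSR
    have e9 : (G \ F4).card * k ≤ 2 * b * d := Nat.mul_le_mul e7 hkd.le
    have e10 : k * F4.card ≤ d * F4.card := Nat.mul_le_mul_right _ hkd.le
    have e11 : d * (P * S4.card) ≤ d * (P * F4.card + 4 * b) := by
      calc d * (P * S4.card) = P * (d * S4.card) := by ring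
        _ ≤ P * (d * F4.card + (∑ y ∈ S4 \ R, (B.N y \ F4).card + ∑ y ∈ R, (B.N y \ F4).card)) := by
            apply Nat.mul_le_mul_left; omega
        _ = P * (d * F4.card) + (P * ∑ y ∈ S4 \ R, (B.N y \ F4).card
              + P * ∑ y ∈ R, (B.N y \ F4).card) := by ring
        _ ≤ P * (d * F4.card) + (2 * b * d + 2 * b * d) := by omega
        _ = _ := by ring
    exact Nat.le_of_mul_le_mul_left e11 (by omega)

lemma stepNet (G : Finset W) {b : ℕ} (hb : G.card = (B.cl G).card + b) (hkd : k < d) (hk : 8 ≤ k) :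
    ∃ T1 ⊆ B.cl G, d * T1.card ≤ 12 * b ∧
      ∀ y ∈ B.cl G, ∃ t ∈ T1, ∃ u ∈ B.cl G, B.JA y u ∧ B.JA u t := by
  set R := B.cl G with hR
  have he := B.sum_out_le G hb hkd
  have hak : R.card ≤ k * b := B.cl_le G hb hkd
  rw [← hR] at he
  let Li := G.filter (fun z => k ≤ 2 * (B.M z \ R).card)
  have hLi : Li.card ≤ 2 * b := by
    have h1 : k * Li.card ≤ ∑ z ∈ Li, 2 * (B.M z \ R).card :=
      markov _ _ _ (fun z hz => (Finset.mem_filter.1 hz).2)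
    have h2 : ∑ z ∈ Li, 2 * (B.M z \ R).card ≤ 2 * (k * b) := by
      rw [← Finset.mul_sum]
      exact Nat.mul_le_mul_left _
        ((Finset.sum_le_sum_of_subset (Finset.filter_subset _ _)).trans he)
    have h3 : k * Li.card ≤ k * (2 * b) := by
      calc _ ≤ _ := h1.trans h2
        _ = _ := by ring
    exact Nat.le_of_mul_le_mul_left h3 (by omega)
  obtain ⟨Ta, a1, a2, a3⟩ := greedy_cover R (fun y => B.N y ∩ Li) 2 d (by omega)
  obtain ⟨Tb, b1, b2, b3⟩ := greedy_cover R (fun y => B.J y ∩ R) 8 (d * k)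
    (Nat.mul_pos (by omega) (by omega))
  refine ⟨Ta ∪ Tb, Finset.union_subset a1 b1, ?_, ?_⟩
  · have h1 : d * Ta.card ≤ 4 * b := by
      have : (Ta.biUnion (fun y => B.N y ∩ Li)).card ≤ Li.card := by
        apply Finset.card_le_card
        intro z hz
        simp only [Finset.mem_biUnion, Finset.mem_inter] at hz
        obtain ⟨_, _, _, h⟩ := hz; exact h
      omega
    have h2 : d * Tb.card ≤ 8 * b := by
      have : (Tb.biUnion (fun y => B.J y ∩ R)).card ≤ R.card := by
        apply Finset.card_le_card
        intro z hz
        simp only [Finset.mem_biUnion, Finset.mem_inter] at hz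
        obtain ⟨_, _, _, h⟩ := hz; exact h
      have h3 : k * (d * Tb.card) ≤ k * (8 * b) := by
        calc k * (d * Tb.card) = d * k * Tb.card := by ring
          _ ≤ 8 * (k * b) := by omega
          _ = _ := by ring
      exact Nat.le_of_mul_le_mul_left h3 (by omega)
    have := Nat.mul_le_mul_left d (Finset.card_union_le Ta Tb)
    rw [mul_add] at this
    omega
  · intro y hy
    by_cases hl : d ≤ 2 * (B.N y ∩ Li).card
    · have h1 := a3 y hy
      have : ∃ z ∈ B.N y ∩ Li, z ∈ Ta.biUnion (fun y => B.N y ∩ Li) := by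
        by_contra hno
        push Not at hno
        rw [Finset.sdiff_eq_self_of_disjoint (Finset.disjoint_left.2 hno)] at h1
        omega
      obtain ⟨z, hz, hz'⟩ := this
      simp only [Finset.mem_biUnion, Finset.mem_inter] at hz hz'
      obtain ⟨t, ht, hzt, _⟩ := hz'
      exact ⟨t, Finset.mem_union_left _ ht, y, hy, B.JA_self (by omega) y, z, hz.1, hzt⟩
    · have h1 := b3 y hy
      have hJ : d * k ≤ 8 * (B.J y ∩ R).card := by
        have c1 := B.codeg_sum y R
        have c2 : k * (B.N y \ Li).card ≤ ∑ z ∈ B.N y \ Li, 2 * (B.M z ∩ R).card := by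
          apply markov
          intro z hz
          rw [Finset.mem_sdiff] at hz
          have hzG : z ∈ G := B.mem_cl.1 hy hz.1
          have hz2 : ¬ (k ≤ 2 * (B.M z \ R).card) := fun h => hz.2 (Finset.mem_filter.2 ⟨hzG, h⟩)
          have h7 := Finset.card_sdiff_add_card_inter (B.M z) R
          rw [B.cM] at h7
          omega
        rw [← Finset.mul_sum] at c2
        have c3 : ∑ z ∈ B.N y \ Li, (B.M z ∩ R).card ≤ ∑ z ∈ B.N y, (B.M z ∩ R).card :=
          Finset.sum_le_sum_of_subset Finset.sdiff_subset
        have c4 := Finset.card_sdiff_add_card_inter (B.N y) Li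
        rw [B.cN] at c4
        have c5 : d ≤ 2 * (B.N y \ Li).card := by omega
        have c6 : k * d ≤ k * (2 * (B.N y \ Li).card) := Nat.mul_le_mul_left _ c5
        have c7 : d * 8 ≤ d * k := Nat.mul_le_mul_left _ hk
        rw [mul_comm k d] at c6
        have c8 : k * (2 * (B.N y \ Li).card) = 2 * (k * (B.N y \ Li).card) := by ring
        omega
      have : ∃ z ∈ B.J y ∩ R, z ∈ Tb.biUnion (fun y => B.J y ∩ R) := by
        by_contra hno
        push Not at hno
        rw [Finset.sdiff_eq_self_of_disjoint (Finset.disjoint_left.2 hno)] at h1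
        omega
      obtain ⟨u, hu, hu'⟩ := this
      simp only [Finset.mem_biUnion, Finset.mem_inter, mem_J] at hu hu'
      obtain ⟨t, ht, hut, _⟩ := hu'
      exact ⟨t, Finset.mem_union_right _ ht, u, hu.2, hu.1, B.JA_symm hut⟩

end Bip

lemma size_aux {x t c b A : ℕ} (h : x * t ≤ c * b) (hx : c * A ≤ x) (hc : 0 < c) : A * t ≤ b := by
  have h1 : c * A * t ≤ x * t := Nat.mul_le_mul_right _ hx
  have h2 : c * (A * t) ≤ c * b := by
    calc _ = c * A * t := by ring
      _ ≤ _ := h1.trans h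
  exact Nat.le_of_mul_le_mul_left h2 hc

namespace Bip

variable {V W : Type*} [Fintype V] [Fintype W] [DecidableEq V] [DecidableEq W] {d k : ℕ}
  (B : Bip V W d k)

lemma code_mid (q : ℕ) (hq : 1 ≤ q) (hkq : 2 ^ 40 * q ^ 9 ≤ k) (hkd : k < d)
    (G : Finset W) {b : ℕ} (hb : G.card = (B.cl G).card + b) (hbq : 2 ^ 10 * q ^ 2 ≤ b)
    (ha : 0 < (B.cl G).card) :
    ∃ T1 T2 T3 T5 : Finset V, ∃ T4 T6 : Finset W,
      T1 ⊆ B.cl G ∧ T2 ⊆ B.cl G ∧ T3 ⊆ B.cl G ∧ T5 ⊆ B.cl G ∧ T6 ⊆ G ∧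
      (∀ z ∈ T4, ∃ y1, z ∈ B.N y1 ∧ ∃ y2, B.JA y1 y2 ∧ ∃ t ∈ B.cl G, B.JA y2 t) ∧
      (∀ y ∈ B.cl G, ∃ t ∈ T1, ∃ u ∈ B.cl G, B.JA y u ∧ B.JA u t) ∧
      ((T6 = ∅ ∧ B.cl G ⊆ B.dS4 (16 * q) T2 T3 T4 T5 ∧
        16 * q * (B.dS4 (16 * q) T2 T3 T4 T5).card + 16 * q * (q *
          (T1.card + T2.card + T3.card + T4.card + T5.card + T6.card + 1)) + 2 * b
          ≤ 16 * q * G.card) ∨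
       (B.cl G = B.dR (16 * q) T2 T3 T4 T5 T6 ∧
        16 * q * (B.cl G).card + 16 * q * (q *
          (T1.card + T2.card + T3.card + T4.card + T5.card + T6.card + 1)) + 2 * b
          ≤ 16 * q * G.card)) := by
  have hq0 : 0 < q := hq
  have hq2 : q ^ 2 ≤ q ^ 9 := Nat.pow_le_pow_right hq0 (by norm_num)
  have hq5 : q ^ 5 ≤ q ^ 9 := Nat.pow_le_pow_right hq0 (by norm_num)
  have hq3 : q ^ 3 ≤ q ^ 9 := Nat.pow_le_pow_right hq0 (by norm_num)
  have hqp2 : 1 ≤ q ^ 2 := Nat.one_le_pow _ _ hq0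
  have hqp3 : 1 ≤ q ^ 3 := Nat.one_le_pow _ _ hq0
  have hqp9 : 1 ≤ q ^ 9 := Nat.one_le_pow _ _ hq0
  have hk8 : 8 ≤ k := by omega
  have hP : 2 ≤ 16 * q := by omega
  have hak : (B.cl G).card ≤ k * b := B.cl_le G hb hkd
  obtain ⟨T1, s1, c1, net⟩ := B.stepNet G hb hkd hk8
  obtain ⟨T2, s2, c2, f1, x1, x2, g1, ex1, ex2⟩ := B.stepAB G hb hkd (by omega) ha (2 ^ 13 * q ^ 3)
    (by positivity)
  obtain ⟨T3, s3, c3, r2, e3⟩ := B.stepC G hb hkd (16 * q) hP T2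
  obtain ⟨T4, n4, c4, r3, f3, e4⟩ := B.stepD G hb hkd (by omega) (16 * q) hP T2 T3 r2
  obtain ⟨T5, s5, c5, f4, r4, e5⟩ := B.stepE G hb hkd (16 * q) hP T2 T3 T4 r3 f3 e4
  -- sizes
  have z1 : (2 ^ 10 * q ^ 2) * T1.card ≤ b := size_aux c1 (by omega) (by norm_num)
  have z2 : (2 ^ 10 * q ^ 2) * T2.card ≤ b := by
    have h : d * T2.card ≤ (2 ^ 13 * q ^ 3) * b := by
      have : k * (d * T2.card) ≤ k * ((2 ^ 13 * q ^ 3) * b) := by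
        calc k * (d * T2.card) = d * k * T2.card := by ring
          _ ≤ _ := c2
          _ ≤ 2 ^ 13 * q ^ 3 * (k * b) := Nat.mul_le_mul_left _ hak
          _ = _ := by ring
      exact Nat.le_of_mul_le_mul_left this (by omega)
    refine size_aux h ?_ (by positivity)
    have : 2 ^ 13 * q ^ 3 * (2 ^ 10 * q ^ 2) = 2 ^ 23 * q ^ 5 := by ring
    omega
  have z5 : (2 ^ 10 * q ^ 2) * T5.card ≤ b := by
    refine size_aux c5 ?_ (by positivity)
    have : 2 * (16 * q) * (2 ^ 10 * q ^ 2) = 2 ^ 15 * q ^ 3 := by ring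
    omega
  have hS2 : (B.dS2 (16 * q) T2 T3 \ B.cl G).card ≤ 6 * (2 ^ 26 * q ^ 6) * b := by
    have h1 : 2 * (2 ^ 13 * q ^ 3) ^ 2 * b = 2 * (2 ^ 26 * q ^ 6 * b) := by ring
    have h2 : 1 ≤ 2 ^ 26 * q ^ 6 := Nat.one_le_iff_ne_zero.2 (by positivity)
    have h3 : 1 * b ≤ 2 ^ 26 * q ^ 6 * b := Nat.mul_le_mul_right _ h2
    have h4 : 6 * (2 ^ 26 * q ^ 6) * b = 6 * (2 ^ 26 * q ^ 6 * b) := by ring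
    omega
  have z4 : (2 ^ 7 * q ^ 2) * T4.card ≤ b := by
    have h : k * T4.card ≤ (2 ^ 33 * q ^ 7) * b := by
      calc _ ≤ _ := c4
        _ ≤ 16 * q * (6 * (2 ^ 26 * q ^ 6) * b) := Nat.mul_le_mul_left _ hS2
        _ = (96 * 2 ^ 26) * (q ^ 7 * b) := by ring
        _ ≤ (2 ^ 33) * (q ^ 7 * b) := Nat.mul_le_mul_right _ (by norm_num)
        _ = _ := by ring
    refine size_aux h ?_ (by positivity)
    have : 2 ^ 33 * q ^ 7 * (2 ^ 7 * q ^ 2) = 2 ^ 40 * q ^ 9 := by ring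
    omega
  have hΛk : 2 ^ 20 * (2 ^ 13 * q ^ 3) ≤ k := by omega
  have z3 : (46 * q ^ 2) * T3.card ≤ b := by
    set Λ := 2 ^ 13 * q ^ 3 with hΛ
    have hΛ0 : 0 < Λ := by positivity
    have y1 : Λ * x1 ≤ 9 * (d * b) := by
      have h1 : (k ^ 2) * (Λ * x1) ≤ (k ^ 2) * (9 * (d * b)) := by
        calc (k ^ 2) * (Λ * x1) = Λ * k ^ 2 * x1 := by ring
          _ ≤ _ := ex1
          _ ≤ 8 * (Λ * k ^ 2 * b + (k * b) * (Λ * d + d * k)) := by gcongr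
          _ = (8 * (Λ * k + Λ * d + d * k)) * (k * b) := by ring
          _ ≤ (9 * (d * k)) * (k * b) := by
              apply Nat.mul_le_mul_right
              have a1 : Λ * k ≤ Λ * d := Nat.mul_le_mul_left _ hkd.le
              have a2 : 2 ^ 20 * Λ * d ≤ k * d := Nat.mul_le_mul_right _ hΛk
              have a3 : 2 ^ 20 * Λ * d = 2 ^ 20 * (Λ * d) := by ring
              have a4 : k * d = d * k := by ring
              omega
          _ = _ := by ring
      exact Nat.le_of_mul_le_mul_left h1 (by positivity)
    have y2 : Λ * x2 ≤ 2 * (d * b) := by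
      have h1 : (3 * k) * (Λ * x2) ≤ (3 * k) * (2 * (d * b)) := by
        calc (3 * k) * (Λ * x2) = 3 * k * Λ * x2 := by ring
          _ ≤ _ := ex2
          _ ≤ 4 * (Λ * k * b + d * (k * b)) := by gcongr
          _ = (4 * (Λ + d)) * (k * b) := by ring
          _ ≤ (6 * d) * (k * b) := by
              apply Nat.mul_le_mul_right
              omega
          _ = _ := by ring
      exact Nat.le_of_mul_le_mul_left h1 (by omega)
    have h1 : Λ * T3.card ≤ 11 * (16 * q) * b := by
      have : d * (Λ * T3.card) ≤ d * (11 * (16 * q) * b) := by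
        calc d * (Λ * T3.card) = Λ * (d * T3.card) := by ring
          _ ≤ Λ * (16 * q * (x1 + x2)) :=
              Nat.mul_le_mul_left _ (c3.trans (Nat.mul_le_mul_left _ g1))
          _ = 16 * q * (Λ * x1 + Λ * x2) := by ring
          _ ≤ 16 * q * (9 * (d * b) + 2 * (d * b)) := by gcongr
          _ = _ := by ring
      exact Nat.le_of_mul_le_mul_left this (by omega)
    refine size_aux h1 ?_ (by positivity)
    have : 11 * (16 * q) * (46 * q ^ 2) = 8096 * q ^ 3 := by ring
    omega
  set s := T1.card + T2.card + T3.card + T4.card + T5.card + 1 with hs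
  have hsz : 16 * q ^ 2 * s ≤ b := by
    have e : 16 * q ^ 2 * s = 16 * (q ^ 2 * T1.card) + 16 * (q ^ 2 * T2.card)
        + 16 * (q ^ 2 * T3.card) + 16 * (q ^ 2 * T4.card) + 16 * (q ^ 2 * T5.card)
        + 16 * q ^ 2 := by rw [hs]; ring
    rw [mul_assoc] at z1 z2 z3 z4 z5
    omega
  have hT4 : ∀ z ∈ T4, ∃ y1, z ∈ B.N y1 ∧ ∃ y2, B.JA y1 y2 ∧ ∃ t ∈ B.cl G, B.JA y2 t := by
    intro z hz
    obtain ⟨y1, hy1⟩ := n4 z hz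
    rw [Finset.mem_inter] at hy1
    refine ⟨y1, (B.mem _ _).2 hy1.1, ?_⟩
    have h2 := hy1.2
    simp only [dS2, Finset.mem_filter, Finset.mem_univ, true_and] at h2
    have h3 := B.half_of _ hP y1 _ h2
    have h4 : (B.N y1 ∩ B.dF2 T2 T3).Nonempty := Finset.card_pos.1 (by omega)
    obtain ⟨z1, hz1⟩ := h4
    simp only [Finset.mem_inter, dF2, Finset.mem_union] at hz1
    rcases hz1.2 with h5 | h5
    · simp only [dF1, Finset.mem_filter, Finset.mem_univ, true_and] at h5
      have h6 : (B.M z1 ∩ B.dW T2).Nonempty := Finset.card_pos.1 (by omega)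
      obtain ⟨y2, hy2⟩ := h6
      simp only [Finset.mem_inter, dW, Finset.mem_biUnion, mem_J] at hy2
      obtain ⟨ha, t, ht, h7⟩ := hy2
      exact ⟨y2, ⟨z1, hz1.1, (B.mem _ _).2 ha⟩, t, s2 ht, B.JA_symm h7⟩
    · simp only [NS, Finset.mem_biUnion] at h5
      obtain ⟨t, ht, h6⟩ := h5
      exact ⟨t, ⟨z1, hz1.1, h6⟩, t, s3 ht, B.JA_self (by omega) t⟩
  have hqs : 16 * q * (q * s) ≤ b := by
    calc _ = 16 * q ^ 2 * s := by ring
      _ ≤ _ := hsz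
  set S4 := B.dS4 (16 * q) T2 T3 T4 T5 with hS4
  set F4 := B.dF4 (16 * q) T2 T3 T4 T5 with hF4
  have hGF : (G \ F4).card + F4.card = G.card := Finset.card_sdiff_add_card_eq_card f4
  by_cases hcase : 8 * b ≤ 16 * q * (G \ F4).card
  · refine ⟨T1, T2, T3, T5, T4, ∅, s1, s2, s3, s5, Finset.empty_subset _, hT4, net, Or.inl ⟨rfl, r4, ?_⟩⟩
    rw [Finset.card_empty, add_zero, ← hs, ← hGF, mul_add (16 * q) (G \ F4).card, ← hS4]
    linarith
  · refine ⟨T1, T2, T3, T5, T4, G \ F4, s1, s2, s3, s5, Finset.sdiff_subset, hT4, net, Or.inr ⟨?_, ?_⟩⟩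
    · rw [dR, ← hF4, Finset.union_sdiff_of_subset f4]
    · have h1 : T1.card + T2.card + T3.card + T4.card + T5.card + (G \ F4).card + 1
          = s + (G \ F4).card := by omega
      rw [h1, hb]
      push Not at hcase
      have h2 : q * (16 * q * (G \ F4).card) ≤ q * (8 * b) := Nat.mul_le_mul_left _ hcase.le
      have h3 : 16 * q * (q * (s + (G \ F4).card)) = 16 * q * (q * s) + q * (16 * q * (G \ F4).card) := by
        ring
      have h4 : 16 * q * ((B.cl G).card + b) = 16 * q * (B.cl G).card + 16 * (q * b) := by ring
      have h5 : q * (8 * b) = 8 * (q * b) := by ring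
      have h6 : 1 * b ≤ q * b := Nat.mul_le_mul_right _ hq
      omega

end Bip

/-! ### Counting connected sets -/
section conn
variable {α : Type*} [DecidableEq α]

def walks (nb : α → Finset α) : ℕ → α → Finset (List α)
  | 0, r => {[r]}
  | n + 1, r => (nb r).biUnion (fun x => (walks nb n x).image (fun l => r :: l))

lemma walks_card (nb : α → Finset α) (Δ : ℕ) (h : ∀ x, (nb x).card ≤ Δ) (n : ℕ) (r : α) :
    (walks nb n r).card ≤ Δ ^ n := by
  induction n generalizing r with
  | zero => simp [walks]
  | succ n ih =>
    rw [walks]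
    calc _ ≤ ∑ x ∈ nb r, ((walks nb n x).image (fun l => r :: l)).card := Finset.card_biUnion_le
      _ ≤ ∑ x ∈ nb r, Δ ^ n := Finset.sum_le_sum (fun x _ => Finset.card_image_le.trans (ih x))
      _ = (nb r).card * Δ ^ n := by simp
      _ ≤ Δ * Δ ^ n := Nat.mul_le_mul_right _ (h r)
      _ = _ := by ring

lemma mem_walks (nb : α → Finset α) (t : List α) (r : α)
    (h : List.IsChain (fun a b => b ∈ nb a) (r :: t)) : r :: t ∈ walks nb t.length r := by
  induction t generalizing r with
  | nil => simp [walks]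
  | cons x t ih =>
    rw [List.isChain_cons_cons] at h
    simp only [List.length_cons, walks, Finset.mem_biUnion, Finset.mem_image]
    exact ⟨x, h.1, x :: t, ih x h.2, rfl⟩

def ConnFrom (nb : α → Finset α) (r : α) (C : Finset α) : Prop :=
  r ∈ C ∧ ∀ x ∈ C, Relation.ReflTransGen (fun a b => b ∈ C ∧ b ∈ nb a) r x

lemma exists_walk (nb : α → Finset α) (hs : ∀ a b, b ∈ nb a → a ∈ nb b) (r : α) (C : Finset α)
    (hC : ConnFrom nb r C) :
    ∃ t : List α, List.IsChain (fun a b => b ∈ nb a) (r :: t) ∧ t.length = 2 * (C.card - 1) ∧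
      (r :: t).toFinset = C := by
  obtain ⟨A, hA, hmax⟩ := Finset.exists_max_image
    (C.powerset.filter (fun A => ∃ t : List α, List.IsChain (fun a b => b ∈ nb a) (r :: t) ∧
      t.length = 2 * (A.card - 1) ∧ (r :: t).toFinset = A)) Finset.card
    ⟨{r}, by
      simp only [Finset.mem_filter, Finset.mem_powerset, Finset.singleton_subset_iff]
      exact ⟨hC.1, [], by simp, by simp, by simp⟩⟩
  simp only [Finset.mem_filter, Finset.mem_powerset] at hA hmax
  obtain ⟨hAC, t, ht1, ht2, ht3⟩ := hA
  have hrA : r ∈ A := by rw [← ht3]; simp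
  by_cases hEq : A = C
  · subst hEq; exact ⟨t, ht1, ht2, ht3⟩
  exfalso
  have hex : ∃ u ∈ A, ∃ w ∈ C, w ∉ A ∧ w ∈ nb u := by
    by_contra hno
    push Not at hno
    apply hEq
    apply Finset.Subset.antisymm hAC
    intro x hx
    have := hC.2 x hx
    clear hx
    induction this with
    | refl => exact hrA
    | tail _ hbc ih =>
      by_contra hc
      exact hno _ ih _ hbc.1 hc hbc.2
  obtain ⟨u, hu, w, hw, hwA, hadj⟩ := hex
  have hu' : u ∈ r :: t := by rw [← ht3] at hu; simpa using hu
  obtain ⟨p, s, hps⟩ := List.append_of_mem hu'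
  have hch : List.IsChain (fun a b => b ∈ nb a) (p ++ u :: w :: u :: s) := by
    rw [hps, List.isChain_split] at ht1
    rw [List.isChain_split]
    refine ⟨ht1.1, ?_⟩
    rw [List.isChain_cons_cons, List.isChain_cons_cons]
    exact ⟨hadj, hs _ _ hadj, ht1.2⟩
  have hlen : (p ++ u :: s).length = t.length + 1 := by rw [← hps]; simp
  have hset : (p ++ u :: w :: u :: s).toFinset = insert w A := by
    rw [← ht3, hps]
    ext x; simp
  have hhead : ∃ t', p ++ u :: w :: u :: s = r :: t' := by
    cases p with
    | nil =>
      simp only [List.nil_append, List.cons.injEq] at hps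
      exact ⟨w :: u :: s, by simp [hps.1]⟩
    | cons p0 p =>
      simp only [List.cons_append, List.cons.injEq] at hps
      exact ⟨p ++ u :: w :: u :: s, by simp [hps.1]⟩
  obtain ⟨t', ht'⟩ := hhead
  have hlen' : (p ++ u :: w :: u :: s).length = t'.length + 1 := by rw [ht']; simp
  simp only [List.length_append, List.length_cons] at hlen hlen'
  have hApos : 0 < A.card := Finset.card_pos.2 ⟨r, hrA⟩
  have := hmax (insert w A) ⟨by
    intro x hx
    rcases Finset.mem_insert.1 hx with rfl | hx
    · exact hw
    · exact hAC hx, t', by rw [← ht']; exact hch, by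
      rw [Finset.card_insert_of_notMem hwA]; omega, by rw [← ht']; exact hset⟩
  rw [Finset.card_insert_of_notMem hwA] at this
  omega

lemma conn_sum [Fintype α] (nb : α → Finset α) (hs : ∀ a b, b ∈ nb a → a ∈ nb b)
    (Δ : ℕ) (hΔ : 1 ≤ Δ) (h : ∀ x, (nb x).card ≤ Δ) (r : α) (q : ℕ) (hq : 2 * Δ ^ 2 ≤ 2 ^ q) :
    ∑ C ∈ (Finset.univ : Finset (Finset α)).filter (ConnFrom nb r), ((1 : ℝ) / 2) ^ (q * C.card)
      ≤ 1 := by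
  set 𝒞 := (Finset.univ : Finset (Finset α)).filter (ConnFrom nb r) with h𝒞
  have hcard : ∀ s, (𝒞.filter (fun C => C.card = s)).card ≤ Δ ^ (2 * (s - 1)) := by
    intro s
    refine le_trans ?_ (walks_card nb Δ h (2 * (s - 1)) r)
    refine le_trans (Finset.card_le_card ?_)
      (Finset.card_image_le (f := fun l : List α => l.toFinset))
    intro C hC
    simp only [h𝒞, Finset.mem_filter, Finset.mem_univ, true_and] at hC
    obtain ⟨t, h1, h2, h3⟩ := exists_walk nb hs r C hC.1
    refine Finset.mem_image.2 ⟨r :: t, ?_, h3⟩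
    rw [← hC.2, ← h2]; exact mem_walks nb t r h1
  have hpos : ∀ C ∈ 𝒞, C.card ∈ Finset.Icc 1 (Fintype.card α) := by
    intro C hC
    simp only [h𝒞, Finset.mem_filter, Finset.mem_univ, true_and] at hC
    exact Finset.mem_Icc.2 ⟨Finset.card_pos.2 ⟨r, hC.1⟩, Finset.card_le_univ C⟩
  rw [← Finset.sum_fiberwise_of_maps_to hpos]
  have hx : (Δ : ℝ) ^ 2 * (1 / 2) ^ q ≤ 1 / 2 := by
    have h1 : (2 : ℝ) * Δ ^ 2 ≤ 2 ^ q := by exact_mod_cast hq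
    rw [one_div_pow, mul_one_div, div_le_div_iff₀ (by positivity) (by norm_num)]
    linarith
  have hterm : ∀ s ∈ Finset.Icc 1 (Fintype.card α),
      ∑ C ∈ 𝒞.filter (fun C => C.card = s), ((1 : ℝ) / 2) ^ (q * C.card) ≤ (1 / 2) ^ s := by
    intro s hs1
    rw [Finset.sum_congr rfl (g := fun _ => ((1 : ℝ) / 2) ^ (q * s))]
    · rw [Finset.sum_const, nsmul_eq_mul]
      have h1 : ((𝒞.filter (fun C => C.card = s)).card : ℝ) ≤ (Δ : ℝ) ^ (2 * s) := by
        have h2 : Δ ^ (2 * (s - 1)) ≤ Δ ^ (2 * s) := Nat.pow_le_pow_right hΔ (by omega)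
        exact_mod_cast (hcard s).trans h2
      calc _ ≤ (Δ : ℝ) ^ (2 * s) * (1 / 2) ^ (q * s) :=
            mul_le_mul_of_nonneg_right h1 (by positivity)
        _ = ((Δ : ℝ) ^ 2 * (1 / 2) ^ q) ^ s := by rw [pow_mul, pow_mul, mul_pow]
        _ ≤ _ := pow_le_pow_left₀ (by positivity) hx s
    · intro C hC
      rw [(Finset.mem_filter.1 hC).2]
  refine (Finset.sum_le_sum hterm).trans ?_
  have key : ∀ N : ℕ, ∑ s ∈ Finset.Icc 1 N, ((1 : ℝ) / 2) ^ s = 1 - (1 / 2) ^ N := by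
    intro N
    induction N with
    | zero => simp
    | succ N ih =>
      rw [Finset.sum_Icc_succ_top (by omega), ih, pow_succ]; ring
  rw [key]
  have : (0 : ℝ) ≤ (1 / 2) ^ (Fintype.card α) := by positivity
  linarith

/-- Summation over encoded objects. -/
lemma code_sum {D S : Type*} [DecidableEq S] (𝒟 : Finset D) (𝒞 : Finset (Finset α)) (q : ℕ)
    (hC : ∑ C ∈ 𝒞, ((1 : ℝ) / 2) ^ (q * C.card) ≤ 1)
    (code : D → Finset α) (hcode : ∀ x ∈ 𝒟, code x ∈ 𝒞)
    (fits : D → Finset α → Prop) (cap : Finset α → ℝ)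
    (hcap : ∀ C ∈ 𝒞, (((𝒟.filter (fun x => fits x C)).card : ℕ) : ℝ) ≤ cap C)
    (hpos : ∀ C ∈ 𝒞, 0 < cap C)
    (hfits : ∀ x ∈ 𝒟, fits x (code x)) (wt : D → ℝ) (η : ℝ) (hη : 0 ≤ η)
    (hwt : ∀ x ∈ 𝒟, wt x * cap (code x) ≤ (1 / 2) ^ (q * (code x).card) * η) :
    ∑ x ∈ 𝒟, wt x ≤ η := by
  rw [← Finset.sum_fiberwise_of_maps_to hcode]
  have : ∀ C ∈ 𝒞, ∑ x ∈ 𝒟.filter (fun x => code x = C), wt x ≤ (1 / 2) ^ (q * C.card) * η := by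
    intro C hCm
    have h1 : ∀ x ∈ 𝒟.filter (fun x => code x = C), wt x ≤ (1 / 2) ^ (q * C.card) * η / cap C := by
      intro x hx
      rw [Finset.mem_filter] at hx
      have := hwt x hx.1
      rw [hx.2] at this
      rwa [le_div_iff₀ (hpos C hCm)]
    have h2 := Finset.sum_le_card_nsmul _ _ _ h1
    rw [nsmul_eq_mul] at h2
    have h3 : ((𝒟.filter (fun x => code x = C)).card : ℝ) ≤ cap C := by
      refine le_trans ?_ (hcap C hCm)
      exact_mod_cast Finset.card_le_card (by
        intro x hx
        rw [Finset.mem_filter] at hx ⊢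
        refine ⟨hx.1, ?_⟩
        have := hfits x hx.1
        rwa [hx.2] at this)
    refine h2.trans ?_
    calc _ ≤ cap C * ((1 / 2) ^ (q * C.card) * η / cap C) := by
          apply mul_le_mul_of_nonneg_right h3
          have := hpos C hCm
          positivity
      _ = _ := by have := hpos C hCm; field_simp
  refine (Finset.sum_le_sum this).trans ?_
  rw [← Finset.sum_mul]
  nlinarith
end conn

/-! ### Layers of the cube -/

abbrev Lay (n j : ℕ) := {s : Finset (Fin n) // s.card = j}

lemma up_card {n j : ℕ} (y : Lay n j) :
    ((Finset.univ : Finset (Lay n (j + 1))).filter (fun z => y.1 ⊆ z.1)).card = n - j := by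
  have h1 : (y.1ᶜ).card = n - j := by rw [Finset.card_compl, y.2]; simp
  rw [← h1]
  symm
  refine Finset.card_bij (fun a ha => ⟨insert a y.1, by
    rw [Finset.card_insert_of_notMem (Finset.mem_compl.1 ha), y.2]⟩) ?_ ?_ ?_
  · intro a ha
    simp only [Finset.mem_filter, Finset.mem_univ, true_and]
    exact Finset.subset_insert _ _
  · intro a ha b hb hab
    have hab' : insert a y.1 = insert b y.1 := congrArg Subtype.val hab
    have : a ∈ insert b y.1 := by rw [← hab']; exact Finset.mem_insert_self _ _
    rcases Finset.mem_insert.1 this with h | h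
    · exact h
    · exact absurd h (Finset.mem_compl.1 ha)
  · intro z hz
    simp only [Finset.mem_filter, Finset.mem_univ, true_and] at hz
    have h2 : (z.1 \ y.1).card = 1 := by
      rw [Finset.card_sdiff_of_subset hz, z.2, y.2]; omega
    obtain ⟨a, ha⟩ := Finset.card_eq_one.1 h2
    have ha1 : a ∈ z.1 \ y.1 := by rw [ha]; simp
    rw [Finset.mem_sdiff] at ha1
    refine ⟨a, Finset.mem_compl.2 ha1.2, ?_⟩
    apply Subtype.ext
    apply Finset.eq_of_subset_of_card_le
    · intro x hx
      rcases Finset.mem_insert.1 hx with rfl | h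
      · exact ha1.1
      · exact hz h
    · rw [Finset.card_insert_of_notMem ha1.2, z.2, y.2]

lemma down_card {n j : ℕ} (z : Lay n (j + 1)) :
    ((Finset.univ : Finset (Lay n j)).filter (fun y => y.1 ⊆ z.1)).card = j + 1 := by
  refine Eq.trans ?_ z.2
  symm
  refine Finset.card_bij (fun a ha => ⟨z.1.erase a, by
    rw [Finset.card_erase_of_mem ha, z.2]; omega⟩) ?_ ?_ ?_
  · intro a ha
    simp only [Finset.mem_filter, Finset.mem_univ, true_and]
    exact Finset.erase_subset _ _
  · intro a ha b hb hab
    have hab' : z.1.erase a = z.1.erase b := congrArg Subtype.val hab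
    by_contra hne
    have : a ∈ z.1.erase b := Finset.mem_erase.2 ⟨hne, ha⟩
    rw [← hab'] at this
    simp at this
  · intro y hy
    simp only [Finset.mem_filter, Finset.mem_univ, true_and] at hy
    have h2 : (z.1 \ y.1).card = 1 := by
      rw [Finset.card_sdiff_of_subset hy, z.2, y.2]; omega
    obtain ⟨a, ha⟩ := Finset.card_eq_one.1 h2
    have ha1 : a ∈ z.1 \ y.1 := by rw [ha]; simp
    rw [Finset.mem_sdiff] at ha1
    refine ⟨a, ha1.1, ?_⟩
    apply Subtype.ext
    symm
    apply Finset.eq_of_subset_of_card_le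
    · intro x hx
      refine Finset.mem_erase.2 ⟨?_, hy hx⟩
      rintro rfl; exact ha1.2 hx
    · rw [Finset.card_erase_of_mem ha1.1, z.2, y.2]; omega

def layB (n j : ℕ) : Bip (Lay n j) (Lay n (j + 1)) (n - j) (j + 1) where
  N y := Finset.univ.filter (fun z => y.1 ⊆ z.1)
  M z := Finset.univ.filter (fun y => y.1 ⊆ z.1)
  mem y z := by simp
  cN := up_card
  cM := down_card
  codeg := by
    intro y y' hne z z' h1 h2 h3 h4
    simp only [Finset.mem_filter, Finset.mem_univ, true_and] at h1 h2 h3 h4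
    have hcard : j + 1 ≤ (y.1 ∪ y'.1).card := by
      by_contra hc
      apply hne
      apply Subtype.ext
      have e1 : y.1 = y.1 ∪ y'.1 := Finset.eq_of_subset_of_card_le Finset.subset_union_left
        (by rw [y.2]; omega)
      have e2 : y'.1 = y.1 ∪ y'.1 := Finset.eq_of_subset_of_card_le Finset.subset_union_right
        (by rw [y'.2]; omega)
      rw [e1, ← e2]
    have e1 : y.1 ∪ y'.1 = z.1 := Finset.eq_of_subset_of_card_le (Finset.union_subset h1 h2)
      (by rw [z.2]; exact hcard)
    have e2 : y.1 ∪ y'.1 = z'.1 := Finset.eq_of_subset_of_card_le (Finset.union_subset h3 h4)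
      (by rw [z'.2]; exact hcard)
    exact Subtype.ext (e1.symm.trans e2)

lemma mem_layN {n j : ℕ} {y : Lay n j} {z : Lay n (j + 1)} :
    z ∈ (layB n j).N y ↔ y.1 ⊆ z.1 := by simp [layB]

/-! ### Hamming distance -/

def ham {n : ℕ} (s t : Finset (Fin n)) : ℕ := (symmDiff s t).card

lemma ham_comm {n : ℕ} (s t : Finset (Fin n)) : ham s t = ham t s := by
  rw [ham, ham, symmDiff_comm]

lemma ham_self {n : ℕ} (s : Finset (Fin n)) : ham s s = 0 := by
  simp [ham]

lemma ham_tri {n : ℕ} (s t u : Finset (Fin n)) : ham s u ≤ ham s t + ham t u := by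
  refine (Finset.card_le_card (symmDiff_triangle s t u)).trans ?_
  exact Finset.card_union_le _ _

lemma ham_N {n j : ℕ} {y : Lay n j} {z : Lay n (j + 1)} (h : z ∈ (layB n j).N y) :
    ham y.1 z.1 ≤ 1 := by
  rw [mem_layN] at h
  have : symmDiff y.1 z.1 = z.1 \ y.1 := by
    ext x
    have : x ∈ y.1 → x ∈ z.1 := fun hx => h hx
    simp only [Finset.mem_symmDiff, Finset.mem_sdiff]; tauto
  rw [ham, this, Finset.card_sdiff_of_subset h, z.2, y.2]; omega

lemma ham_JA {n j : ℕ} {y y' : Lay n j} (h : (layB n j).JA y y') : ham y.1 y'.1 ≤ 2 := by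
  obtain ⟨z, h1, h2⟩ := h
  have a1 := ham_N h1
  have a2 := ham_N h2
  rw [ham_comm] at a2
  have := ham_tri y.1 z.1 y'.1
  omega

lemma small_card (n r : ℕ) :
    ((Finset.univ : Finset (Finset (Fin n))).filter (fun u => u.card ≤ r)).card ≤ (n + 1) ^ r := by
  induction r with
  | zero =>
    have : (Finset.univ : Finset (Finset (Fin n))).filter (fun u => u.card ≤ 0) ⊆ {∅} := by
      intro u hu; simpa using hu
    simpa using Finset.card_le_card this
  | succ r ih =>
    have hsub : (Finset.univ : Finset (Finset (Fin n))).filter (fun u => u.card ≤ r + 1) ⊆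
        (((Finset.univ : Finset (Finset (Fin n))).filter (fun u => u.card ≤ r)) ×ˢ
          (Finset.univ : Finset (Option (Fin n)))).image
          (fun p => match p.2 with | none => p.1 | some a => insert a p.1) := by
      intro u hu
      simp only [Finset.mem_filter, Finset.mem_univ, true_and] at hu
      rw [Finset.mem_image]
      rcases u.eq_empty_or_nonempty with rfl | ⟨a, ha⟩
      · exact ⟨(∅, none), by simp, rfl⟩
      · refine ⟨(u.erase a, some a), ?_, by simp [Finset.insert_erase ha]⟩
        simp only [Finset.mem_product, Finset.mem_filter, Finset.mem_univ, true_and, and_true]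
        rw [Finset.card_erase_of_mem ha]; omega
    refine (Finset.card_le_card hsub).trans (Finset.card_image_le.trans ?_)
    rw [Finset.card_product, pow_succ]
    apply Nat.mul_le_mul ih
    simp

abbrev Cd (n : ℕ) := Finset (Fin n) × Fin 7

def nbC (n : ℕ) (p : Cd n) : Finset (Cd n) := Finset.univ.filter (fun p' => ham p.1 p'.1 ≤ 20)

lemma nbC_symm (n : ℕ) (a b : Cd n) (h : b ∈ nbC n a) : a ∈ nbC n b := by
  simp only [nbC, Finset.mem_filter, Finset.mem_univ, true_and] at h ⊢
  rwa [ham_comm]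

lemma nbC_card (n : ℕ) (p : Cd n) : (nbC n p).card ≤ 7 * (n + 1) ^ 20 := by
  have hsub : nbC n p ⊆ (((Finset.univ : Finset (Finset (Fin n))).filter (fun u => u.card ≤ 20)) ×ˢ
      (Finset.univ : Finset (Fin 7))).image (fun x => (symmDiff p.1 x.1, x.2)) := by
    intro c hc
    simp only [nbC, Finset.mem_filter, Finset.mem_univ, true_and] at hc
    rw [Finset.mem_image]
    refine ⟨(symmDiff p.1 c.1, c.2), by simpa [ham] using hc, ?_⟩
    simp [symmDiff_symmDiff_cancel_left]
  refine (Finset.card_le_card hsub).trans (Finset.card_image_le.trans ?_)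
  rw [Finset.card_product, mul_comm]
  have := small_card n 20
  simp only [Finset.card_univ, Fintype.card_fin]
  omega

def mkC {n : ℕ} (T : Fin 7 → Finset (Finset (Fin n))) : Finset (Cd n) :=
  Finset.univ.filter (fun p => p.1 ∈ T p.2)

lemma mkC_card {n : ℕ} (T : Fin 7 → Finset (Finset (Fin n))) :
    (mkC T).card ≤ ∑ i, (T i).card := by
  have : mkC T ⊆ (Finset.univ : Finset (Fin 7)).biUnion (fun i => (T i).image (fun s => (s, i))) := by
    intro p hp
    simp only [mkC, Finset.mem_filter, Finset.mem_univ, true_and] at hp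
    simp only [Finset.mem_biUnion, Finset.mem_univ, true_and, Finset.mem_image]
    exact ⟨p.2, p.1, hp, rfl⟩
  refine (Finset.card_le_card this).trans (Finset.card_biUnion_le.trans ?_)
  exact Finset.sum_le_sum (fun i _ => Finset.card_image_le)

def subC {n : ℕ} (C : Finset (Cd n)) (i : Fin 7) (j : ℕ) : Finset (Lay n j) :=
  Finset.univ.filter (fun y => (y.1, i) ∈ C)

def raw {n j : ℕ} (T : Finset (Lay n j)) : Finset (Finset (Fin n)) := T.image Subtype.val

lemma mem_raw {n j : ℕ} {T : Finset (Lay n j)} {y : Lay n j} : y.1 ∈ raw T ↔ y ∈ T := by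
  simp only [raw, Finset.mem_image]
  constructor
  · rintro ⟨a, ha, h⟩; rwa [← Subtype.ext h]
  · intro h; exact ⟨y, h, rfl⟩

lemma raw_card {n j : ℕ} (T : Finset (Lay n j)) : (raw T).card ≤ T.card := Finset.card_image_le

lemma subC_mkC {n j : ℕ} (T : Fin 7 → Finset (Finset (Fin n))) (i : Fin 7) (S : Finset (Lay n j))
    (h : T i = raw S) : subC (mkC T) i j = S := by
  ext y
  simp [subC, mkC, h, mem_raw]

/-- linked set of a layer -/
def Linked {n j : ℕ} (v : Lay n j) (X : Finset (Lay n j)) : Prop :=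
  v ∈ X ∧ ∀ x ∈ X, Relation.ReflTransGen (fun a b => b ∈ X ∧ (layB n j).JA a b) v x

lemma code_conn {n j : ℕ} (v : Lay n j) (X : Finset (Lay n j)) (hX : Linked v X)
    (T : Fin 7 → Finset (Finset (Fin n))) (h0 : T 0 = {v.1})
    (hloc : ∀ i, ∀ s ∈ T i, ∃ y ∈ X, ham y.1 s ≤ 8)
    (hnet : ∀ y ∈ X, ∃ i, ∃ t ∈ T i, ham y.1 t ≤ 4) :
    ConnFrom (nbC n) (v.1, 0) (mkC T) := by
  refine ⟨by simp [mkC, h0], ?_⟩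
  have key : ∀ y, Relation.ReflTransGen (fun a b => b ∈ X ∧ (layB n j).JA a b) v y →
      y ∈ X ∧ ∀ p ∈ mkC T, ham y.1 p.1 ≤ 8 →
        Relation.ReflTransGen (fun a b => b ∈ mkC T ∧ b ∈ nbC n a) (v.1, (0 : Fin 7)) p := by
    intro y hy
    induction hy with
    | refl =>
      refine ⟨hX.1, fun p hp hh => Relation.ReflTransGen.single ⟨hp, ?_⟩⟩
      simp only [nbC, Finset.mem_filter, Finset.mem_univ, true_and]; omega
    | @tail y y' _ hyy ih =>
      refine ⟨hyy.1, fun p hp hh => ?_⟩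
      obtain ⟨i, t, ht, hd⟩ := hnet y ih.1
      have h1 := ih.2 (t, i) (by simp [mkC, ht]) (by simp only; omega)
      refine h1.tail ⟨hp, ?_⟩
      simp only [nbC, Finset.mem_filter, Finset.mem_univ, true_and]
      have a1 := ham_JA hyy.2
      have a2 := ham_tri t y.1 p.1
      have a3 := ham_tri y.1 y'.1 p.1
      rw [ham_comm] at hd
      omega
  intro p hp
  have hp' := hp
  simp only [mkC, Finset.mem_filter, Finset.mem_univ, true_and] at hp'
  obtain ⟨y, hy, hh⟩ := hloc _ _ hp'
  exact (key y (hX.2 y hy)).2 p hp hh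

/-! ### Truncated up-sets and their components -/

def UpTo (n j : ℕ) (D : Finset (Finset (Fin n))) : Prop :=
  (∀ w ∈ D, w.card ≤ j) ∧ ∀ w ∈ D, ∀ u, w ⊆ u → u.card ≤ j → u ∈ D

def top {n : ℕ} (j : ℕ) (D : Finset (Finset (Fin n))) : Finset (Lay n j) :=
  Finset.univ.filter (fun y => y.1 ∈ D)

lemma mem_top {n j : ℕ} {D : Finset (Finset (Fin n))} {y : Lay n j} : y ∈ top j D ↔ y.1 ∈ D := by
  simp [top]

def gg {n : ℕ} (j : ℕ) (D : Finset (Finset (Fin n))) : ℕ := ((layB n j).NS (top j D)).card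

def compTop {n j : ℕ} (v : Lay n j) (D : Finset (Finset (Fin n))) : Finset (Lay n j) :=
  Finset.univ.filter
    (fun u => Relation.ReflTransGen (fun a b => b ∈ top j D ∧ (layB n j).JA a b) v u)

def comp {n j : ℕ} (v : Lay n j) (D : Finset (Finset (Fin n))) : Finset (Finset (Fin n)) :=
  D.filter (fun w => ∃ u ∈ compTop v D, w ⊆ u.1)

lemma exists_sup {n j : ℕ} (hj : j ≤ n) (w : Finset (Fin n)) (hw : w.card ≤ j) :
    ∃ u : Lay n j, w ⊆ u.1 := by
  obtain ⟨u, h1, h2⟩ := Finset.exists_superset_card_eq hw (by simpa using hj)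
  exact ⟨⟨u, h2⟩, h1⟩

section
variable {n j : ℕ} {D : Finset (Finset (Fin n))}

lemma layTop_nonempty (hj : j ≤ n) (hD : UpTo n j D) {w : Finset (Fin n)} (hw : w ∈ D) :
    (top j D).Nonempty := by
  obtain ⟨u, hu⟩ := exists_sup hj w (hD.1 w hw)
  exact ⟨u, mem_top.2 (hD.2 w hw _ hu u.2.le)⟩

lemma compTop_sub {v : Lay n j} (hv : v ∈ top j D) : compTop v D ⊆ top j D := by
  intro u hu
  simp only [compTop, Finset.mem_filter, Finset.mem_univ, true_and] at hu
  rcases Relation.ReflTransGen.cases_tail hu with h | ⟨c, _, h⟩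
  · rw [h]; exact hv
  · exact h.1

lemma mem_compTop_self (v : Lay n j) : v ∈ compTop v D := by
  simp only [compTop, Finset.mem_filter, Finset.mem_univ, true_and]
  exact Relation.ReflTransGen.refl

lemma compTop_step {v a b : Lay n j} (ha : a ∈ compTop v D) (hb : b ∈ top j D)
    (h : (layB n j).JA a b) : b ∈ compTop v D := by
  simp only [compTop, Finset.mem_filter, Finset.mem_univ, true_and] at ha ⊢
  exact ha.tail ⟨hb, h⟩

lemma compTop_linked (v : Lay n j) : Linked v (compTop v D) := by
  refine ⟨mem_compTop_self v, fun x hx => ?_⟩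
  simp only [compTop, Finset.mem_filter, Finset.mem_univ, true_and] at hx
  have : x ∈ compTop v D ∧
    Relation.ReflTransGen (fun a b => b ∈ compTop v D ∧ (layB n j).JA a b) v x := by
    induction hx with
    | refl => exact ⟨mem_compTop_self v, Relation.ReflTransGen.refl⟩
    | tail _ h ih =>
      have := compTop_step ih.1 h.1 h.2
      exact ⟨this, ih.2.tail ⟨this, h.2⟩⟩
  exact this.2

lemma sup_link (hD : UpTo n j D) {w : Finset (Fin n)} (hw : w ∈ D) (v : Lay n j) (u' : Lay n j)
    (hu' : w ⊆ u'.1) (m : ℕ) : ∀ u : Lay n j, w ⊆ u.1 → (u'.1 \ u.1).card = m →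
    u ∈ compTop v D → u' ∈ compTop v D := by
  induction m with
  | zero =>
    intro u _ h hc
    rw [Finset.card_eq_zero, Finset.sdiff_eq_empty_iff_subset] at h
    have : u'.1 = u.1 := Finset.eq_of_subset_of_card_le h (by rw [u.2, u'.2])
    rwa [Subtype.ext this]
  | succ m ih =>
    intro u hu h hc
    have h1 : (u'.1 \ u.1).Nonempty := Finset.card_pos.1 (by omega)
    obtain ⟨a, ha⟩ := h1
    have h2 : (u.1 \ u'.1).card = (u'.1 \ u.1).card := by
      have e1 := Finset.card_sdiff_add_card_inter u.1 u'.1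
      have e2 := Finset.card_sdiff_add_card_inter u'.1 u.1
      rw [Finset.inter_comm] at e2
      rw [u.2] at e1
      rw [u'.2] at e2
      omega
    have h3 : (u.1 \ u'.1).Nonempty := Finset.card_pos.1 (by omega)
    obtain ⟨b, hb⟩ := h3
    rw [Finset.mem_sdiff] at ha hb
    have hab : a ≠ b := by rintro rfl; exact ha.2 hb.1
    have hcard : (insert a (u.1.erase b)).card = j := by
      rw [Finset.card_insert_of_notMem (fun h => ha.2 (Finset.mem_of_mem_erase h)),
        Finset.card_erase_of_mem hb.1, u.2]
      have : 0 < u.1.card := Finset.card_pos.2 ⟨b, hb.1⟩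
      rw [u.2] at this
      omega
    have hwsub : w ⊆ insert a (u.1.erase b) := by
      intro x hx
      refine Finset.mem_insert_of_mem (Finset.mem_erase.2 ⟨?_, hu hx⟩)
      rintro rfl; exact hb.2 (hu' hx)
    have hJ : (layB n j).JA u ⟨insert a (u.1.erase b), hcard⟩ := by
      refine ⟨⟨insert a u.1, by rw [Finset.card_insert_of_notMem ha.2, u.2]⟩, ?_, ?_⟩
      · rw [mem_layN]; exact Finset.subset_insert _ _
      · rw [mem_layN]; exact Finset.insert_subset_insert _ (Finset.erase_subset _ _)
    refine ih ⟨insert a (u.1.erase b), hcard⟩ hwsub ?_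
      (compTop_step hc (mem_top.2 (hD.2 w hw _ hwsub hcard.le)) hJ)
    have : u'.1 \ insert a (u.1.erase b) = (u'.1 \ u.1).erase a := by
      ext x
      simp only [Finset.mem_sdiff, Finset.mem_insert, Finset.mem_erase, not_or, not_and, not_not]
      constructor
      · rintro ⟨p1, p2, p3⟩
        refine ⟨p2, p1, fun hx => ?_⟩
        by_cases hxb : x = b
        · subst hxb; exact hb.2 p1
        · exact p3 hxb hx
      · rintro ⟨p1, p2, p3⟩
        exact ⟨p2, p1, fun _ hx => p3 hx⟩
    simp only [this]
    rw [Finset.card_erase_of_mem (Finset.mem_sdiff.2 ha)]; omega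

lemma comp_sup (hD : UpTo n j D) {v : Lay n j} {w : Finset (Fin n)} (hw : w ∈ comp v D)
    (u' : Lay n j) (hu' : w ⊆ u'.1) : u' ∈ compTop v D := by
  simp only [comp, Finset.mem_filter] at hw
  obtain ⟨hwD, u, hu, hwu⟩ := hw
  exact sup_link hD hwD v u' hu' _ u hwu rfl hu

lemma comp_sub (v : Lay n j) : comp v D ⊆ D := Finset.filter_subset _ _

lemma comp_upTo (hj : j ≤ n) (hD : UpTo n j D) (v : Lay n j) : UpTo n j (comp v D) := by
  refine ⟨fun w hw => hD.1 w (comp_sub v hw), fun w hw u hwu hu => ?_⟩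
  obtain ⟨u', hu'⟩ := exists_sup hj u hu
  simp only [comp, Finset.mem_filter]
  exact ⟨hD.2 w (comp_sub v hw) u hwu hu, u', comp_sup hD hw u' (hwu.trans hu'), hu'⟩

lemma top_comp (hD : UpTo n j D) {v : Lay n j} (hv : v ∈ top j D) :
    top j (comp v D) = compTop v D := by
  ext u
  rw [mem_top]
  constructor
  · intro h; exact comp_sup hD h u (le_refl _)
  · intro h
    simp only [comp, Finset.mem_filter]
    exact ⟨mem_top.1 (compTop_sub hv h), u, h, le_refl _⟩

lemma rest_upTo (hD : UpTo n j D) (v : Lay n j) : UpTo n j (D \ comp v D) := by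
  refine ⟨fun w hw => hD.1 w (Finset.mem_sdiff.1 hw).1, fun w hw u hwu hu => ?_⟩
  rw [Finset.mem_sdiff] at hw ⊢
  have hu' := hD.2 w hw.1 u hwu hu
  refine ⟨hu', fun hc => hw.2 ?_⟩
  simp only [comp, Finset.mem_filter] at hc ⊢
  obtain ⟨_, x, hx, hux⟩ := hc
  exact ⟨hw.1, x, hx, hwu.trans hux⟩

lemma top_rest (v : Lay n j) : top j (D \ comp v D) = top j D \ top j (comp v D) := by
  ext u; simp [mem_top]

lemma gg_split (hD : UpTo n j D) {v : Lay n j} (hv : v ∈ top j D) :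
    gg j D = gg j (comp v D) + gg j (D \ comp v D) := by
  unfold gg
  rw [← Finset.card_union_of_disjoint]
  · congr 1
    rw [top_rest]
    ext z
    simp only [Bip.NS, Finset.mem_biUnion, Finset.mem_union, Finset.mem_sdiff]
    constructor
    · rintro ⟨a, ha, hz⟩
      by_cases h : a ∈ top j (comp v D)
      · exact Or.inl ⟨a, h, hz⟩
      · exact Or.inr ⟨a, ⟨ha, h⟩, hz⟩
    · rintro (⟨a, ha, hz⟩ | ⟨a, ⟨ha, _⟩, hz⟩)
      · exact ⟨a, mem_top.2 (comp_sub v (mem_top.1 ha)), hz⟩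
      · exact ⟨a, ha, hz⟩
  · rw [Finset.disjoint_left, top_rest]
    intro z hz hz'
    simp only [Bip.NS, Finset.mem_biUnion, Finset.mem_sdiff] at hz hz'
    obtain ⟨a, ha, hza⟩ := hz
    obtain ⟨b, ⟨hb, hb'⟩, hzb⟩ := hz'
    rw [top_comp hD hv] at ha hb'
    exact hb' (compTop_step ha hb ⟨z, hza, hzb⟩)

end

/-! ### Partition function -/

def UF (n j : ℕ) : Finset (Finset (Finset (Fin n))) := Finset.univ.filter (UpTo n j)

def bb {n : ℕ} (j : ℕ) (D : Finset (Finset (Fin n))) : ℕ :=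
  gg j D - ((layB n j).cl ((layB n j).NS (top j D))).card

def LF {n j : ℕ} (v : Lay n j) : Finset (Finset (Finset (Fin n))) :=
  (UF n j).filter (fun D => Linked v (top j D))

lemma Z_bound {n j : ℕ} (hj : j ≤ n) (w : ℝ) (hw : 0 ≤ w)
    (hkey : ∀ v : Lay n j, ∑ D ∈ LF v, ((1 : ℝ) / 2) ^ gg j D ≤ w) (R : Finset (Lay n j)) :
    ∑ D ∈ (UF n j).filter (fun D => top j D ⊆ R), ((1 : ℝ) / 2) ^ gg j D ≤ (1 + w) ^ R.card := by
  induction R using Finset.induction_on with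
  | empty =>
    have hsub : (UF n j).filter (fun D => top j D ⊆ ∅) ⊆ {∅} := by
      intro D hD
      simp only [UF, Finset.mem_filter, Finset.mem_univ, true_and, Finset.subset_empty] at hD
      rw [Finset.mem_singleton]
      by_contra hne
      obtain ⟨x, hx⟩ := Finset.nonempty_iff_ne_empty.2 hne
      have := layTop_nonempty hj hD.1 hx
      rw [hD.2] at this
      simp at this
    refine (Finset.sum_le_sum_of_subset_of_nonneg hsub (fun _ _ _ => by positivity)).trans ?_
    rw [Finset.sum_singleton, Finset.card_empty, pow_zero]
    exact pow_le_one₀ (by norm_num) (by norm_num)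
  | insert v R hv ih =>
    rw [Finset.card_insert_of_notMem hv, pow_succ]
    set A := (UF n j).filter (fun D => top j D ⊆ insert v R) with hA
    set A0 := (UF n j).filter (fun D => top j D ⊆ R) with hA0
    have hnn : ∀ D : Finset (Finset (Fin n)), 0 ≤ ((1 : ℝ) / 2) ^ gg j D := fun D => by positivity
    have hsplit : ∑ D ∈ A, ((1 : ℝ) / 2) ^ gg j D =
        ∑ D ∈ A.filter (fun D => v ∈ top j D), ((1 : ℝ) / 2) ^ gg j D +
        ∑ D ∈ A.filter (fun D => ¬ v ∈ top j D), ((1 : ℝ) / 2) ^ gg j D :=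
      (Finset.sum_filter_add_sum_filter_not _ _ _).symm
    have h2 : ∑ D ∈ A.filter (fun D => ¬ v ∈ top j D), ((1 : ℝ) / 2) ^ gg j D ≤
        ∑ D ∈ A0, ((1 : ℝ) / 2) ^ gg j D := by
      apply Finset.sum_le_sum_of_subset_of_nonneg
      · intro D hD
        simp only [hA, hA0, Finset.mem_filter] at hD ⊢
        refine ⟨hD.1.1, fun x hx => ?_⟩
        rcases Finset.mem_insert.1 (hD.1.2 hx) with rfl | h
        · exact absurd hx hD.2
        · exact h
      · intro D _ _; exact hnn D
    have h1 : ∑ D ∈ A.filter (fun D => v ∈ top j D), ((1 : ℝ) / 2) ^ gg j D ≤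
        ∑ p ∈ (LF v) ×ˢ A0, ((1 : ℝ) / 2) ^ gg j p.1 * ((1 : ℝ) / 2) ^ gg j p.2 := by
      let φ : Finset (Finset (Fin n)) → Finset (Finset (Fin n)) × Finset (Finset (Fin n)) :=
        fun D => (comp v D, D \ comp v D)
      have hinj : Set.InjOn φ (A.filter (fun D => v ∈ top j D)) := by
        intro D _ D' _ h
        simp only [φ, Prod.mk.injEq] at h
        have e1 : D = comp v D ∪ (D \ comp v D) :=
          (Finset.union_sdiff_of_subset (comp_sub v)).symm
        have e2 : D' = comp v D' ∪ (D' \ comp v D') :=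
          (Finset.union_sdiff_of_subset (comp_sub v)).symm
        rw [e1, e2, h.2, h.1]
      calc _ = ∑ D ∈ A.filter (fun D => v ∈ top j D),
            ((1 : ℝ) / 2) ^ gg j (φ D).1 * ((1 : ℝ) / 2) ^ gg j (φ D).2 := by
            apply Finset.sum_congr rfl
            intro D hD
            simp only [hA, UF, Finset.mem_filter, Finset.mem_univ, true_and] at hD
            rw [← pow_add, gg_split hD.1.1 hD.2]
        _ = ∑ p ∈ (A.filter (fun D => v ∈ top j D)).image φ,
            ((1 : ℝ) / 2) ^ gg j p.1 * ((1 : ℝ) / 2) ^ gg j p.2 := by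
            rw [Finset.sum_image hinj]
        _ ≤ _ := by
            apply Finset.sum_le_sum_of_subset_of_nonneg
            · intro p hp
              rw [Finset.mem_image] at hp
              obtain ⟨D, hD, rfl⟩ := hp
              simp only [hA, UF, Finset.mem_filter, Finset.mem_univ, true_and] at hD
              simp only [φ, Finset.mem_product, LF, UF, hA0, Finset.mem_filter, Finset.mem_univ,
                true_and]
              refine ⟨⟨comp_upTo hj hD.1.1 v, ?_⟩, rest_upTo hD.1.1 v, ?_⟩
              · rw [top_comp hD.1.1 hD.2]; exact compTop_linked v
              · intro x hx
                rw [top_rest, Finset.mem_sdiff, top_comp hD.1.1 hD.2] at hx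
                rcases Finset.mem_insert.1 (hD.1.2 hx.1) with rfl | h
                · exact absurd (mem_compTop_self _) hx.2
                · exact h
            · intro p _ _; positivity
    rw [Finset.sum_product] at h1
    simp only [← Finset.mul_sum, ← Finset.sum_mul] at h1
    have h3 : (∑ D ∈ LF v, ((1 : ℝ) / 2) ^ gg j D) * ∑ D ∈ A0, ((1 : ℝ) / 2) ^ gg j D ≤
        w * (1 + w) ^ R.card :=
      mul_le_mul (hkey v) ih (Finset.sum_nonneg (fun D _ => hnn D)) hw
    rw [hsplit]
    have : (1 + w) ^ R.card * (1 + w) = w * (1 + w) ^ R.card + (1 + w) ^ R.card := by ring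
    rw [this]
    linarith

/-- number of truncated up-sets with top contained in `S` -/
def Claim (n j : ℕ) (w : ℝ) : Prop :=
  ∀ S : Finset (Lay n j), (((UF n j).filter (fun D => top j D ⊆ S)).card : ℝ) ≤
    (2 * (1 + w)) ^ S.card

lemma claim_zero (n : ℕ) (w : ℝ) (hw : 0 ≤ w) : Claim n 0 w := by
  intro S
  have h1 : ((UF n 0).filter (fun D => top 0 D ⊆ S)).card ≤ 2 ^ S.card := by
    rw [← Finset.card_powerset]
    apply Finset.card_le_card_of_injOn (fun D => top 0 D)
    · intro D hD
      simp only [Finset.coe_filter, Set.mem_setOf_eq] at hD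
      exact Finset.mem_coe.2 (Finset.mem_powerset.2 hD.2)
    · intro D hD D' hD' h
      simp only [UF, Finset.coe_filter, Set.mem_setOf_eq, Finset.mem_filter, Finset.mem_univ,
        true_and] at hD hD' h
      ext x
      constructor
      · intro hx
        have hc : x.card = 0 := Nat.le_zero.1 (hD.1.1 x hx)
        have : (⟨x, hc⟩ : Lay n 0) ∈ top 0 D := mem_top.2 hx
        rw [h] at this; exact mem_top.1 this
      · intro hx
        have hc : x.card = 0 := Nat.le_zero.1 (hD'.1.1 x hx)
        have : (⟨x, hc⟩ : Lay n 0) ∈ top 0 D' := mem_top.2 hx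
        rw [← h] at this; exact mem_top.1 this
  calc _ ≤ ((2 ^ S.card : ℕ) : ℝ) := by exact_mod_cast h1
    _ = (2 : ℝ) ^ S.card := by push_cast; rfl
    _ ≤ _ := pow_le_pow_left₀ (by norm_num) (by linarith) _

lemma claim_succ {n j : ℕ} (hj : j + 1 ≤ n - j) (w : ℝ) (hw : 0 ≤ w)
    (hkey : ∀ v : Lay n j, ∑ D ∈ LF v, ((1 : ℝ) / 2) ^ gg j D ≤ w) : Claim n (j + 1) w := by
  intro S
  set B := layB n j with hB
  set A0 := (UF n j).filter (fun D => top j D ⊆ B.cl S) with hA0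
  have hZ := Z_bound (by omega) w hw hkey (B.cl S)
  have hcl : (B.cl S).card ≤ S.card := by
    have h1 := B.sum_out S
    have h2 : (n - j) * (B.cl S).card ≤ (n - j) * S.card :=
      le_trans (by omega) (Nat.mul_le_mul_right S.card hj)
    exact Nat.le_of_mul_le_mul_left h2 (by omega)
  let tr : Finset (Finset (Fin n)) → Finset (Finset (Fin n)) :=
    fun D => D.filter (fun x => x.card ≤ j)
  have htr : ∀ D ∈ (UF n (j + 1)).filter (fun D => top (j + 1) D ⊆ S),
      UpTo n j (tr D) ∧ B.NS (top j (tr D)) ⊆ top (j + 1) D := by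
    intro D hD
    simp only [UF, Finset.mem_filter, Finset.mem_univ, true_and] at hD
    refine ⟨⟨fun x hx => (Finset.mem_filter.1 hx).2, fun x hx u hxu hu => ?_⟩, ?_⟩
    · exact Finset.mem_filter.2 ⟨hD.1.2 x (Finset.mem_filter.1 hx).1 u hxu (by omega), hu⟩
    · intro z hz
      simp only [Bip.NS, Finset.mem_biUnion] at hz
      obtain ⟨y, hy, hyz⟩ := hz
      rw [mem_layN] at hyz
      rw [mem_top] at hy ⊢
      exact hD.1.2 _ (Finset.mem_filter.1 hy).1 _ hyz z.2.le
  have hmap : ∀ D ∈ (UF n (j + 1)).filter (fun D => top (j + 1) D ⊆ S), tr D ∈ A0 := by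
    intro D hD
    obtain ⟨h1, h2⟩ := htr D hD
    rw [Finset.mem_filter] at hD
    simp only [hA0, UF, Finset.mem_filter, Finset.mem_univ, true_and]
    refine ⟨h1, fun y hy => B.mem_cl.2 (fun z hz => hD.2 (h2 ?_))⟩
    simp only [Bip.NS, Finset.mem_biUnion]
    exact ⟨y, hy, hz⟩
  have hNS : ∀ E ∈ A0, B.NS (top j E) ⊆ S := by
    intro E hE
    exact B.NS_subset (Finset.mem_filter.1 hE).2
  have hfib : ∀ E ∈ A0, (((UF n (j + 1)).filter (fun D => top (j + 1) D ⊆ S)).filter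
      (fun D => tr D = E)).card ≤ 2 ^ (S.card - gg j E) := by
    intro E hE
    have hc : (S \ B.NS (top j E)).card = S.card - gg j E := by
      rw [Finset.card_sdiff_of_subset (hNS E hE)]; rfl
    rw [← hc, ← Finset.card_powerset]
    apply Finset.card_le_card_of_injOn (fun D => top (j + 1) D \ B.NS (top j E))
    · intro D hD
      simp only [Finset.coe_filter, Set.mem_setOf_eq, Finset.mem_filter] at hD
      refine Finset.mem_coe.2 (Finset.mem_powerset.2 ?_)
      exact Finset.sdiff_subset_sdiff hD.1.2 (le_refl _)
    · intro D hD D' hD' h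
      simp only [Finset.coe_filter, Set.mem_setOf_eq] at hD hD' h
      have e1 := (htr D hD.1).2
      have e2 := (htr D' hD'.1).2
      rw [hD.2] at e1
      rw [hD'.2] at e2
      have e3 : top (j + 1) D = top (j + 1) D' := by
        rw [← Finset.sdiff_union_of_subset e1, ← Finset.sdiff_union_of_subset e2, h]
      have e4 : tr D = tr D' := hD.2.trans hD'.2.symm
      have aux : ∀ D1 D2 : Finset (Finset (Fin n)), UpTo n (j + 1) D1 →
          top (j + 1) D1 = top (j + 1) D2 → tr D1 = tr D2 → D1 ⊆ D2 := by
        intro D1 D2 hu a1 a2 x hx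
        have hxc := hu.1 x hx
        rcases Nat.lt_or_ge j x.card with h1 | h1
        · have h2 : x.card = j + 1 := by omega
          have : (⟨x, h2⟩ : Lay n (j + 1)) ∈ top (j + 1) D1 := mem_top.2 hx
          rw [a1] at this; exact mem_top.1 this
        · have : x ∈ tr D1 := Finset.mem_filter.2 ⟨hx, h1⟩
          rw [a2] at this; exact (Finset.mem_filter.1 this).1
      have u1 : UpTo n (j + 1) D := by
        have := hD.1; simp only [UF, Finset.mem_filter, Finset.mem_univ, true_and] at this
        exact this.1
      have u2 : UpTo n (j + 1) D' := by
        have := hD'.1; simp only [UF, Finset.mem_filter, Finset.mem_univ, true_and] at this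
        exact this.1
      exact Finset.Subset.antisymm (aux D D' u1 e3 e4) (aux D' D u2 e3.symm e4.symm)
  rw [Finset.card_eq_sum_card_fiberwise hmap]
  push_cast
  calc _ ≤ ∑ E ∈ A0, (2 : ℝ) ^ S.card * (1 / 2) ^ gg j E := by
        apply Finset.sum_le_sum
        intro E hE
        have h1 : ((((UF n (j + 1)).filter (fun D => top (j + 1) D ⊆ S)).filter
          (fun D => tr D = E)).card : ℝ) ≤ 2 ^ (S.card - gg j E) := by exact_mod_cast hfib E hE
        refine h1.trans (le_of_eq ?_)
        have h2 : gg j E ≤ S.card := Finset.card_le_card (hNS E hE)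
        rw [one_div_pow, mul_one_div, eq_div_iff (by positivity), ← pow_add]
        congr 1; omega
    _ = (2 : ℝ) ^ S.card * ∑ E ∈ A0, (1 / 2) ^ gg j E := by rw [Finset.mul_sum]
    _ ≤ (2 : ℝ) ^ S.card * (1 + w) ^ (B.cl S).card := by gcongr
    _ ≤ (2 : ℝ) ^ S.card * (1 + w) ^ S.card := by
        gcongr
        linarith
    _ = _ := by rw [mul_pow]

lemma gg_eq {n j : ℕ} (hj : j + 1 < n - j) (D : Finset (Finset (Fin n))) :
    gg j D = ((layB n j).cl ((layB n j).NS (top j D))).card + bb j D := by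
  set B := layB n j
  have h1 := B.sum_out (B.NS (top j D))
  have h2 : (n - j) * (B.cl (B.NS (top j D))).card ≤ (n - j) * (B.NS (top j D)).card :=
    le_trans (by omega) (Nat.mul_le_mul_right _ hj.le)
  have h3 := Nat.le_of_mul_le_mul_left h2 (by omega)
  exact (Nat.add_sub_of_le h3).symm

lemma gg_le_bb {n j : ℕ} (hj : j + 1 < n - j) (D : Finset (Finset (Fin n))) :
    gg j D ≤ n * bb j D := by
  have h := gg_eq hj D
  have h1 := (layB n j).cl_le _ h hj
  have h2 : (j + 2) * bb j D ≤ n * bb j D := Nat.mul_le_mul_right _ (by omega)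
  have h3 : (j + 2) * bb j D = (j + 1) * bb j D + bb j D := by ring
  omega

lemma weight_aux (g s c b β n q : ℕ) (hq : 1 ≤ q) (w : ℝ) (hw : 0 ≤ w)
    (hgw : (1 + w) ^ (16 * q * n) ≤ 2) (hgn : g ≤ n * b) (hβ : β ≤ b)
    (h : 16 * q * s + 16 * q * (q * c) + 2 * b ≤ 16 * q * g) :
    ((1 : ℝ) / 2) ^ g * (2 * (1 + w)) ^ s ≤
      (1 / 2) ^ (q * c) * ((1 : ℝ) / 2) ^ ((β : ℝ) / (16 * q)) := by
  have hP : (0 : ℝ) < 16 * q := by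
    have : (1 : ℝ) ≤ q := by exact_mod_cast hq
    linarith
  have hs : s ≤ g := by
    have : 16 * q * s ≤ 16 * q * g := by omega
    exact Nat.le_of_mul_le_mul_left this (by omega)
  have h1 : (1 + w) ^ s ≤ (2 : ℝ) ^ ((b : ℝ) / (16 * q)) := by
    calc (1 + w) ^ s ≤ (1 + w) ^ (n * b) := pow_le_pow_right₀ (by linarith) (hs.trans hgn)
      _ = ((1 + w) ^ (16 * q * n)) ^ ((b : ℝ) / (16 * q)) := by
          rw [← Real.rpow_natCast, ← Real.rpow_natCast, ← Real.rpow_mul (by linarith)]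
          congr 1
          push_cast
          field_simp
      _ ≤ _ := Real.rpow_le_rpow (by positivity) hgw (by positivity)
  have h2 : (s : ℝ) + q * c + 2 * (b / (16 * q)) ≤ g := by
    have : (16 * q * s + 16 * q * (q * c) + 2 * b : ℝ) ≤ 16 * q * g := by exact_mod_cast h
    have e : (16 * q : ℝ) * (s + q * c + 2 * (b / (16 * q))) = 16 * q * s + 16 * q * (q * c) + 2 * b := by
      field_simp
    rw [← e] at this
    exact le_of_mul_le_mul_left this hP
  have hb : (β : ℝ) / (16 * q) ≤ b / (16 * q) := by
    apply div_le_div_of_nonneg_right _ hP.le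
    exact_mod_cast hβ
  have conv : ∀ x : ℝ, ((1 : ℝ) / 2) ^ x = 2 ^ (-x) := by
    intro x
    rw [one_div, Real.inv_rpow (by norm_num), Real.rpow_neg (by norm_num)]
  rw [mul_pow, ← Real.rpow_natCast (1 / 2) g, ← Real.rpow_natCast (1 / 2) (q * c),
    ← Real.rpow_natCast 2 s, conv, conv, conv]
  calc (2 : ℝ) ^ (-(g : ℝ)) * ((2 : ℝ) ^ (s : ℝ) * (1 + w) ^ s)
      ≤ (2 : ℝ) ^ (-(g : ℝ)) * ((2 : ℝ) ^ (s : ℝ) * (2 : ℝ) ^ ((b : ℝ) / (16 * q))) := by gcongr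
    _ = (2 : ℝ) ^ (-(g : ℝ) + (s + b / (16 * q))) := by
        rw [← Real.rpow_add (by norm_num), ← Real.rpow_add (by norm_num)]
    _ ≤ (2 : ℝ) ^ (-((q * c : ℕ) : ℝ) + -((β : ℝ) / (16 * q))) := by
        apply Real.rpow_le_rpow_of_exponent_le (by norm_num)
        push_cast
        linarith
    _ = _ := by rw [Real.rpow_add (by norm_num)]

lemma key_sum {n j q β : ℕ} (hj : j + 1 < n - j) (hq : 1 ≤ q)
    (hΔ : 2 * (7 * (n + 1) ^ 20) ^ 2 ≤ 2 ^ q) (v : Lay n j) (w : ℝ) (hw : 0 ≤ w)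
    (hgw : (1 + w) ^ (16 * q * n) ≤ 2) (hcl : Claim n j w)
    (𝒟 : Finset (Finset (Finset (Fin n)))) (h𝒟 : 𝒟 ⊆ LF v)
    (dec : Finset (Cd n) → Finset (Lay n j))
    (hβ : ∀ D ∈ 𝒟, β ≤ bb j D)
    (hdec : ∀ D ∈ 𝒟, ∃ C, ConnFrom (nbC n) (v.1, 0) C ∧ top j D ⊆ dec C ∧
      16 * q * (dec C).card + 16 * q * (q * C.card) + 2 * bb j D ≤ 16 * q * gg j D) :
    ∑ D ∈ 𝒟, ((1 : ℝ) / 2) ^ gg j D ≤ ((1 : ℝ) / 2) ^ ((β : ℝ) / (16 * q)) := by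
  have hcs := conn_sum (nbC n) (nbC_symm n) (7 * (n + 1) ^ 20)
    (Nat.one_le_iff_ne_zero.2 (by positivity)) (nbC_card n) (v.1, (0 : Fin 7)) q hΔ
  set 𝒞 := (Finset.univ : Finset (Finset (Cd n))).filter (ConnFrom (nbC n) (v.1, (0 : Fin 7)))
    with h𝒞
  let code : Finset (Finset (Fin n)) → Finset (Cd n) := fun D =>
    if h : ∃ C, ConnFrom (nbC n) (v.1, 0) C ∧ top j D ⊆ dec C ∧
      16 * q * (dec C).card + 16 * q * (q * C.card) + 2 * bb j D ≤ 16 * q * gg j D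
    then h.choose else ∅
  have hcode : ∀ D ∈ 𝒟, ConnFrom (nbC n) (v.1, 0) (code D) ∧ top j D ⊆ dec (code D) ∧
      16 * q * (dec (code D)).card + 16 * q * (q * (code D).card) + 2 * bb j D ≤ 16 * q * gg j D := by
    intro D hD
    have h := hdec D hD
    simp only [code, dif_pos h]
    exact h.choose_spec
  refine code_sum 𝒟 𝒞 q hcs code ?_ (fun D C => top j D ⊆ dec C)
    (fun C => (2 * (1 + w)) ^ (dec C).card) ?_ ?_ ?_ _ _ (by positivity) ?_ (S := ℕ)
  · intro D hD
    simp only [h𝒞, Finset.mem_filter, Finset.mem_univ, true_and]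
    exact (hcode D hD).1
  · intro C _
    refine le_trans ?_ (hcl (dec C))
    have h1 : 𝒟.filter (fun D => top j D ⊆ dec C) ⊆ (UF n j).filter (fun D => top j D ⊆ dec C) := by
      intro D hD
      rw [Finset.mem_filter] at hD ⊢
      exact ⟨(Finset.mem_filter.1 (h𝒟 hD.1)).1, hD.2⟩
    have h2 := Finset.card_le_card h1
    refine Nat.cast_le.2 ?_
    convert h2
  · intro C _; positivity
  · intro D hD; exact (hcode D hD).2.1
  · intro D hD
    exact weight_aux _ _ _ (bb j D) β n q hq w hw hgw (gg_le_bb hj D) (hβ D hD) (hcode D hD).2.2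

lemma cl_near {n j : ℕ} (hj : j < n) {X : Finset (Lay n j)} {y : Lay n j}
    (hy : y ∈ (layB n j).cl ((layB n j).NS X)) : ∃ x ∈ X, ham x.1 y.1 ≤ 2 := by
  have h := (layB n j).mem_cl.1 hy
  have : ((layB n j).N y).Nonempty := Finset.card_pos.1 (by rw [(layB n j).cN]; omega)
  obtain ⟨z, hz⟩ := this
  have hz' := h hz
  simp only [Bip.NS, Finset.mem_biUnion] at hz'
  obtain ⟨x, hx, hxz⟩ := hz'
  exact ⟨x, hx, ham_JA ⟨z, hxz, hz⟩⟩

lemma sub_cl {n j : ℕ} (X : Finset (Lay n j)) : X ⊆ (layB n j).cl ((layB n j).NS X) := by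
  intro x hx
  rw [(layB n j).mem_cl]
  intro z hz
  simp only [Bip.NS, Finset.mem_biUnion]
  exact ⟨x, hx, hz⟩

def mkT {n j : ℕ} (v : Lay n j) (T1 T2 T3 T5 : Finset (Lay n j)) (T4 T6 : Finset (Lay n (j + 1))) :
    Fin 7 → Finset (Finset (Fin n)) :=
  ![{v.1}, raw T1, raw T2, raw T3, raw T4, raw T5, raw T6]

lemma mkT_conn {n j : ℕ} (hj : j < n) (v : Lay n j) (X : Finset (Lay n j)) (hX : Linked v X)
    (T1 T2 T3 T5 : Finset (Lay n j)) (T4 T6 : Finset (Lay n (j + 1)))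
    (s1 : T1 ⊆ (layB n j).cl ((layB n j).NS X)) (s2 : T2 ⊆ (layB n j).cl ((layB n j).NS X))
    (s3 : T3 ⊆ (layB n j).cl ((layB n j).NS X)) (s5 : T5 ⊆ (layB n j).cl ((layB n j).NS X))
    (s6 : T6 ⊆ (layB n j).NS X)
    (h4 : ∀ z ∈ T4, ∃ y1, z ∈ (layB n j).N y1 ∧ ∃ y2, (layB n j).JA y1 y2 ∧
      ∃ t ∈ (layB n j).cl ((layB n j).NS X), (layB n j).JA y2 t)
    (hnet : ∀ y ∈ (layB n j).cl ((layB n j).NS X), ∃ t ∈ T1,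
      ∃ u ∈ (layB n j).cl ((layB n j).NS X), (layB n j).JA y u ∧ (layB n j).JA u t) :
    ConnFrom (nbC n) (v.1, 0) (mkC (mkT v T1 T2 T3 T5 T4 T6)) := by
  have aux : ∀ T : Finset (Lay n j), T ⊆ (layB n j).cl ((layB n j).NS X) →
      ∀ s ∈ raw T, ∃ y ∈ X, ham y.1 s ≤ 8 := by
    intro T hT s hs
    simp only [raw, Finset.mem_image] at hs
    obtain ⟨y, hy, rfl⟩ := hs
    obtain ⟨x, hx, h⟩ := cl_near hj (hT hy)
    exact ⟨x, hx, by omega⟩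
  apply code_conn v X hX _ rfl
  · intro i
    fin_cases i
    · intro s hs
      simp only [mkT] at hs
      rw [Finset.mem_singleton.1 hs]
      exact ⟨v, hX.1, by rw [ham_self]; omega⟩
    · exact aux T1 s1
    · exact aux T2 s2
    · exact aux T3 s3
    · intro s hs
      have hs' : s ∈ raw T4 := hs
      simp only [raw, Finset.mem_image] at hs'
      obtain ⟨z, hz, rfl⟩ := hs'
      obtain ⟨y1, a1, y2, a2, t, ht, a3⟩ := h4 z hz
      obtain ⟨x, hx, a4⟩ := cl_near hj ht
      refine ⟨x, hx, ?_⟩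
      have b1 := ham_N a1
      have b2 := ham_JA a2
      have b3 := ham_JA a3
      rw [ham_comm] at b2 b3
      have c1 := ham_tri x.1 t.1 z.1
      have c2 := ham_tri t.1 y2.1 z.1
      have c3 := ham_tri y2.1 y1.1 z.1
      omega
    · exact aux T5 s5
    · intro s hs
      have hs' : s ∈ raw T6 := hs
      simp only [raw, Finset.mem_image] at hs'
      obtain ⟨z, hz, rfl⟩ := hs'
      have := s6 hz
      simp only [Bip.NS, Finset.mem_biUnion] at this
      obtain ⟨x, hx, hxz⟩ := this
      have := ham_N hxz
      exact ⟨x, hx, by omega⟩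
  · intro y hy
    obtain ⟨t, ht, u, _, a1, a2⟩ := hnet y (sub_cl X hy)
    refine ⟨1, t.1, mem_raw.2 ht, ?_⟩
    have b1 := ham_JA a1
    have b2 := ham_JA a2
    have := ham_tri y.1 u.1 t.1
    omega

lemma mkT_card {n j : ℕ} (v : Lay n j) (T1 T2 T3 T5 : Finset (Lay n j))
    (T4 T6 : Finset (Lay n (j + 1))) :
    (mkC (mkT v T1 T2 T3 T5 T4 T6)).card ≤
      T1.card + T2.card + T3.card + T4.card + T5.card + T6.card + 1 := by
  refine (mkC_card _).trans ?_
  have e : ∑ i, (mkT v T1 T2 T3 T5 T4 T6 i).card = 1 + (raw T1).card + (raw T2).card + (raw T3).card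
      + (raw T4).card + (raw T5).card + (raw T6).card := by
    rw [Fin.sum_univ_seven]; rfl
  rw [e]
  have := raw_card T1
  have := raw_card T2
  have := raw_card T3
  have := raw_card T4
  have := raw_card T5
  have := raw_card T6
  omega

lemma key_main {n j q β : ℕ} (hj : j + 1 < n - j) (hq : 1 ≤ q) (hjq : 2 ^ 60 * q ^ 20 ≤ n - j)
    (hΔ : 2 * (7 * (n + 1) ^ 20) ^ 2 ≤ 2 ^ q) (v : Lay n j) (w : ℝ) (hw : 0 ≤ w)
    (hgw : (1 + w) ^ (16 * q * n) ≤ 2) (hcl : Claim n j w)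
    (𝒟 : Finset (Finset (Finset (Fin n)))) (h𝒟 : 𝒟 ⊆ LF v)
    (hβ : ∀ D ∈ 𝒟, β ≤ bb j D) (hbq : ∀ D ∈ 𝒟, 2 ^ 10 * q ^ 2 ≤ bb j D) :
    ∑ D ∈ 𝒟, ((1 : ℝ) / 2) ^ gg j D ≤ 2 * ((1 : ℝ) / 2) ^ ((β : ℝ) / (16 * q)) := by
  set η := ((1 : ℝ) / 2) ^ ((β : ℝ) / (16 * q)) with hη
  have hη0 : 0 ≤ η := by positivity
  set B := layB n j with hB
  by_cases hk : 2 ^ 40 * q ^ 9 ≤ j + 1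
  · let decA : Finset (Cd n) → Finset (Lay n j) := fun C =>
      B.dS4 (16 * q) (subC C 2 j) (subC C 3 j) (subC C 4 (j + 1)) (subC C 5 j)
    let decB : Finset (Cd n) → Finset (Lay n j) := fun C =>
      B.dR (16 * q) (subC C 2 j) (subC C 3 j) (subC C 4 (j + 1)) (subC C 5 j) (subC C 6 (j + 1))
    let pA : Finset (Finset (Fin n)) → Prop := fun D =>
      ∃ C, ConnFrom (nbC n) (v.1, 0) C ∧ top j D ⊆ decA C ∧
      16 * q * (decA C).card + 16 * q * (q * C.card) + 2 * bb j D ≤ 16 * q * gg j D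
    have hsA := key_sum hj hq hΔ v w hw hgw hcl (𝒟.filter pA)
      ((Finset.filter_subset _ _).trans h𝒟) decA (fun D hD => hβ D (Finset.mem_filter.1 hD).1)
      (fun D hD => (Finset.mem_filter.1 hD).2)
    have hsB := key_sum hj hq hΔ v w hw hgw hcl (𝒟.filter (fun D => ¬ pA D))
      ((Finset.filter_subset _ _).trans h𝒟) decB (fun D hD => hβ D (Finset.mem_filter.1 hD).1)
      (by
        intro D hD
        rw [Finset.mem_filter] at hD
        have hlk : Linked v (top j D) := (Finset.mem_filter.1 (h𝒟 hD.1)).2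
        have ha : 0 < (B.cl (B.NS (top j D))).card :=
          Finset.card_pos.2 ⟨v, sub_cl _ hlk.1⟩
        obtain ⟨T1, T2, T3, T5, T4, T6, s1, s2, s3, s5, s6, h4, hnet, hor⟩ :=
          B.code_mid q hq hk hj (B.NS (top j D)) (gg_eq hj D) (hbq D hD.1) ha
        have hconn := mkT_conn (by omega) v (top j D) hlk T1 T2 T3 T5 T4 T6 s1 s2 s3 s5 s6 h4 hnet
        have hcard := mkT_card v T1 T2 T3 T5 T4 T6
        set C := mkC (mkT v T1 T2 T3 T5 T4 T6) with hC
        have e2 : subC C 2 j = T2 := subC_mkC _ _ _ rfl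
        have e3 : subC C 3 j = T3 := subC_mkC _ _ _ rfl
        have e4 : subC C 4 (j + 1) = T4 := subC_mkC _ _ _ rfl
        have e5 : subC C 5 j = T5 := subC_mkC _ _ _ rfl
        have e6 : subC C 6 (j + 1) = T6 := subC_mkC _ _ _ rfl
        have hc2 : 16 * q * (q * C.card) ≤ 16 * q * (q *
          (T1.card + T2.card + T3.card + T4.card + T5.card + T6.card + 1)) := by gcongr
        rcases hor with ⟨_, hA1, hA2⟩ | ⟨hB1, hB2⟩
        · exfalso
          apply hD.2
          refine ⟨C, hconn, ?_, ?_⟩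
          · simp only [decA, e2, e3, e4, e5]
            exact (sub_cl _).trans hA1
          · simp only [decA, e2, e3, e4, e5]
            unfold gg
            linarith
        · refine ⟨C, hconn, ?_, ?_⟩
          · simp only [decB, e2, e3, e4, e5, e6]
            rw [← hB1]; exact sub_cl _
          · simp only [decB, e2, e3, e4, e5, e6]
            rw [← hB1]
            unfold gg
            linarith)
    rw [← Finset.sum_filter_add_sum_filter_not 𝒟 pA]
    linarith
  · refine le_trans (key_sum hj hq hΔ v w hw hgw hcl 𝒟 h𝒟 (fun C => subC C 1 j) hβ ?_) (by linarith)
    intro D hD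
    have hlk : Linked v (top j D) := (Finset.mem_filter.1 (h𝒟 hD)).2
    set R := B.cl (B.NS (top j D)) with hR
    have hvR : v ∈ R := sub_cl _ hlk.1
    have hconn := mkT_conn (by omega) v (top j D) hlk R ∅ ∅ ∅ ∅ ∅ (le_refl _)
      (Finset.empty_subset _) (Finset.empty_subset _) (Finset.empty_subset _)
      (Finset.empty_subset _) (by simp)
      (fun y hy => ⟨y, hy, y, hy, B.JA_self (by omega) y, B.JA_self (by omega) y⟩)
    have hcard := mkT_card v R ∅ ∅ ∅ ∅ ∅
    set C := mkC (mkT v R ∅ ∅ ∅ ∅ ∅) with hC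
    have e1 : subC C 1 j = R := subC_mkC _ _ _ rfl
    refine ⟨C, hconn, ?_, ?_⟩
    · simp only [e1]; exact sub_cl _
    · simp only [e1]
      simp only [Finset.card_empty, add_zero] at hcard
      have hc2 : 16 * q * (q * C.card) ≤ 16 * q * (q * (R.card + 1)) := by gcongr
      have hbg : bb j D ≤ gg j D := by unfold bb; omega
      have hdR : (n - j) * R.card ≤ (j + 1) * gg j D := by
        have h5 := B.sum_out (B.NS (top j D))
        show (n - j) * R.card ≤ (j + 1) * (B.NS (top j D)).card
        rw [← h5]
        exact Nat.le_add_left _ _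
      have hdg : n - j ≤ gg j D := by
        have h1 : (B.N v).card ≤ (B.NS (top j D)).card := Finset.card_le_card (B.mem_cl.1 hvR)
        rw [B.cN] at h1
        exact h1
      push Not at hk
      have hq9 : 0 < q ^ 9 := by positivity
      have hRg : 32 * q ^ 2 * R.card ≤ gg j D := by
        have h1 : (2 ^ 40 * q ^ 9) * (32 * q ^ 2 * R.card) ≤ (2 ^ 40 * q ^ 9) * gg j D := by
          calc (2 ^ 40 * q ^ 9) * (32 * q ^ 2 * R.card) = (2 ^ 45 * q ^ 11) * R.card := by ring
            _ ≤ (n - j) * R.card := by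
                apply Nat.mul_le_mul_right
                refine le_trans ?_ hjq
                exact Nat.mul_le_mul (by norm_num) (Nat.pow_le_pow_right hq (by norm_num))
            _ ≤ _ := hdR
            _ ≤ _ := Nat.mul_le_mul_right _ hk.le
        exact Nat.le_of_mul_le_mul_left h1 (by positivity)
      have hqg : 16 * q ^ 2 ≤ gg j D := by
        refine le_trans ?_ (hjq.trans hdg)
        exact Nat.mul_le_mul (by norm_num) (Nat.pow_le_pow_right hq (by norm_num))
      have e : 16 * q * (q * (R.card + 1)) = 16 * (q ^ 2 * R.card) + 16 * q ^ 2 := by ring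
      have e' : 16 * q * R.card ≤ 16 * (q ^ 2 * R.card) := by
        have : q ≤ q ^ 2 := Nat.le_self_pow (by norm_num) q
        calc 16 * q * R.card = 16 * (q * R.card) := by ring
          _ ≤ _ := by gcongr
      have e'' : 32 * q ^ 2 * R.card = 32 * (q ^ 2 * R.card) := by ring
      have e3 : 16 * 1 * gg j D ≤ 16 * q * gg j D := by gcongr
      omega

/-! ### Expansion from Kruskal-Katona -/

def cpy (n r : ℕ) (c : Fin r) : Fin n ↪ Fin (r * n) :=
  ⟨fun x => finProdFinEquiv (c, x), fun x y h => by
    have := finProdFinEquiv.injective h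
    simpa using this⟩

open scoped FinsetFamily in
lemma kk_copies {n d r K : ℕ} (𝒜 : Finset (Finset (Fin n))) (hs : (𝒜 : Set (Finset (Fin n))).Sized d)
    (hd : 1 ≤ d) (hdK : d ≤ K) (hK : K ≤ r * n) (h : K.choose d ≤ r * 𝒜.card) :
    K.choose (d - 1) ≤ r * (∂ 𝒜).card := by
  set 𝒜' : Finset (Finset (Fin (r * n))) :=
    (Finset.univ : Finset (Fin r)).biUnion (fun c => 𝒜.image (fun s => s.map (cpy n r c))) with h𝒜'
  have hcard : 𝒜'.card = r * 𝒜.card := by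
    rw [h𝒜', Finset.card_biUnion]
    · rw [Finset.sum_congr rfl (g := fun _ => 𝒜.card)]
      · simp
      · intro c _
        exact Finset.card_image_of_injective _ (Finset.map_injective _)
    · intro c _ c' _ hcc
      rw [Function.onFun, Finset.disjoint_left]
      intro s hs1 hs2
      rw [Finset.mem_image] at hs1 hs2
      obtain ⟨a, ha, rfl⟩ := hs1
      obtain ⟨b, hb, hab⟩ := hs2
      have hac := hs ha
      obtain ⟨x, hx⟩ : a.Nonempty := Finset.card_pos.1 (by omega)
      have hx' : cpy n r c x ∈ b.map (cpy n r c') := by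
        rw [hab]; exact Finset.mem_map_of_mem _ hx
      rw [Finset.mem_map] at hx'
      obtain ⟨y, _, hy⟩ := hx'
      have := finProdFinEquiv.injective hy
      simp only [Prod.mk.injEq] at this
      exact hcc this.1.symm
  have hsz : (𝒜' : Set (Finset (Fin (r * n)))).Sized d := by
    intro s hs1
    simp only [h𝒜', Finset.coe_biUnion, Finset.mem_coe, Set.mem_iUnion, Finset.mem_image] at hs1
    obtain ⟨c, _, a, ha, rfl⟩ := hs1
    rw [Finset.card_map]; exact hs ha
  have hkk := Finset.kruskal_katona_lovasz_form (i := 1) hd hdK hK hsz (by rw [hcard]; exact h)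
  refine hkk.trans ?_
  have hsub : (∂^[1] 𝒜') ⊆ (Finset.univ : Finset (Fin r)).biUnion
      (fun c => (∂ 𝒜).image (fun s => s.map (cpy n r c))) := by
    intro s hs1
    simp only [Function.iterate_one] at hs1
    rw [Finset.mem_shadow_iff] at hs1
    obtain ⟨t, ht, x, hx, rfl⟩ := hs1
    simp only [h𝒜', Finset.mem_biUnion, Finset.mem_univ, true_and, Finset.mem_image] at ht
    obtain ⟨c, a, ha, rfl⟩ := ht
    rw [Finset.mem_map] at hx
    obtain ⟨y, hy, rfl⟩ := hx
    simp only [Finset.mem_biUnion, Finset.mem_univ, true_and, Finset.mem_image]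
    exact ⟨c, a.erase y, Finset.mem_shadow_iff.2 ⟨a, ha, y, hy, rfl⟩, Finset.map_erase _ _ _⟩
  refine (Finset.card_le_card hsub).trans (Finset.card_biUnion_le.trans ?_)
  refine (Finset.sum_le_sum (g := fun _ => (∂ 𝒜).card) (fun c _ => Finset.card_image_le)).trans ?_
  simp

open scoped FinsetFamily in
lemma lay_kk {n j r K : ℕ} (hj : j < n) (R : Finset (Lay n j))
    (hdK : n - j ≤ K) (hK : K ≤ r * n) (h : K.choose (n - j) ≤ r * R.card) :
    K.choose (n - j - 1) ≤ r * ((layB n j).NS R).card := by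
  set 𝒜 : Finset (Finset (Fin n)) := R.image (fun y => y.1ᶜ) with h𝒜
  have hc : 𝒜.card = R.card := by
    apply Finset.card_image_of_injective
    intro a b hab
    exact Subtype.ext (compl_injective hab)
  have hs : (𝒜 : Set (Finset (Fin n))).Sized (n - j) := by
    intro s hs1
    simp only [h𝒜, Finset.coe_image, Set.mem_image] at hs1
    obtain ⟨y, _, rfl⟩ := hs1
    rw [Finset.card_compl, y.2, Fintype.card_fin]
  have hk := kk_copies 𝒜 hs (by omega) hdK hK (by rw [hc]; exact h)
  refine hk.trans (Nat.mul_le_mul_left _ ?_)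
  have hsub : ∂ 𝒜 ⊆ ((layB n j).NS R).image (fun z => z.1ᶜ) := by
    intro s hs1
    rw [Finset.mem_shadow_iff] at hs1
    obtain ⟨t, ht, x, hx, rfl⟩ := hs1
    rw [h𝒜, Finset.mem_image] at ht
    obtain ⟨y, hy, rfl⟩ := ht
    rw [Finset.mem_compl] at hx
    rw [Finset.mem_image]
    refine ⟨⟨insert x y.1, by rw [Finset.card_insert_of_notMem hx, y.2]⟩, ?_, ?_⟩
    · rw [Bip.NS, Finset.mem_biUnion]
      exact ⟨y, hy, mem_layN.2 (Finset.subset_insert _ _)⟩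
    · ext u; simp only [Finset.mem_compl, Finset.mem_insert, Finset.mem_erase]; tauto
  exact (Finset.card_le_card hsub).trans Finset.card_image_le

lemma exp_arith1 (d a g : ℕ) (hd : 32 ≤ d) (h : (d + 1) * d * a ≤ 2 * (d + 2 * a) * g)
    (h16 : 16 * a ≤ d ^ 2) : 3 * a ≤ g := by
  by_contra hc
  have hc' : g < 3 * a := by omega
  have h1 : 2 * (d + 2 * a) * g < (d + 1) * d * a := by
    calc 2 * (d + 2 * a) * g < 2 * (d + 2 * a) * (3 * a) := by
          apply Nat.mul_lt_mul_of_pos_left hc'; omega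
      _ = (6 * d + 12 * a) * a := by ring
      _ ≤ (d + 1) * d * a := by
          apply Nat.mul_le_mul_right
          nlinarith
  omega

lemma exp_main {n j : ℕ} (hj : j + 1 < n - j) (hd : 32 ≤ n - j) (D : Finset (Finset (Fin n)))
    (hne : (top j D).Nonempty) :
    n - j ≤ 8 * bb j D ∧ (n - j ≤ (top j D).card → (n - j) ^ 2 ≤ 60 * bb j D) := by
  set B := layB n j with hB
  set R := B.cl (B.NS (top j D)) with hR
  have hg := gg_eq hj D
  have hak : R.card ≤ (j + 1) * bb j D := B.cl_le _ hg hj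
  have hsubR : top j D ⊆ R := sub_cl _
  have hNS : (B.NS R).card ≤ gg j D := by
    apply Finset.card_le_card
    intro z hz
    rw [Bip.NS, Finset.mem_biUnion] at hz
    obtain ⟨y, hy, hz⟩ := hz
    exact B.mem_cl.1 hy hz
  have ha1 : 1 ≤ R.card := Finset.card_pos.2 (hne.mono hsubR)
  have hta := Finset.card_le_card hsubR
  have hdg : n - j ≤ gg j D := by
    obtain ⟨v, hv⟩ := hne
    have h1 : (B.N v).card ≤ (B.NS (top j D)).card := Finset.card_le_card (B.mem_cl.1 (hsubR hv))
    rw [B.cN] at h1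
    exact h1
  have hg' : gg j D = R.card + bb j D := hg
  generalize gg j D = g at *
  generalize bb j D = b at *
  generalize (top j D).card = t at *
  have hkk : ∀ r K, n - j ≤ K → K ≤ r * n → K.choose (n - j) ≤ r * R.card →
      K.choose (n - j - 1) ≤ r * (B.NS R).card := fun r K => lay_kk (by omega) R
  have hn : n - j ≤ n := by omega
  have hkd : j + 1 ≤ n - j := by omega
  generalize R.card = a at *
  generalize (B.NS R).card = ns at *
  clear_value B
  clear hR hsubR R hB B
  generalize hdd : n - j = d at *
  by_cases h16 : 16 * a ≤ d ^ 2
  · have h1 := hkk (d / a + 2) (d + 1) (by omega) (by nlinarith [Nat.zero_le (d / a * n)])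
      (by
        have h2 : d < (d / a + 1) * a := Nat.lt_mul_of_div_lt (by omega) (by omega)
        rw [Nat.choose_succ_self_right]
        nlinarith)
    have h3 : 2 * (d + 1).choose (d - 1) = (d + 1) * d := by
      have h4 : (d + 1).choose (d - 1) = (d + 1).choose 2 := Nat.choose_symm_of_eq_add (by omega)
      rw [h4, Nat.choose_two_right]
      simp only [Nat.add_sub_cancel]
      exact Nat.mul_div_cancel' (by rw [mul_comm]; exact (Nat.even_mul_succ_self d).two_dvd)
    have h5 : (d / a + 2) * a ≤ d + 2 * a := by
      have := Nat.div_mul_le_self d a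
      nlinarith
    have h6 : (d + 1) * d * a ≤ 2 * (d + 2 * a) * g := by
      rw [← h3]
      calc 2 * (d + 1).choose (d - 1) * a
          ≤ 2 * ((d / a + 2) * g) * a := by
            have := h1.trans (Nat.mul_le_mul_left _ hNS)
            gcongr
        _ = 2 * ((d / a + 2) * a) * g := by ring
        _ ≤ _ := by gcongr
    have h7 := exp_arith1 d a g hd h6 h16
    refine ⟨by omega, fun htd => ?_⟩
    have h8 : (d + 1) * d * a ≤ 6 * g * a := by
      calc _ ≤ _ := h6
        _ ≤ 2 * (3 * a) * g := by
          apply Nat.mul_le_mul_right; omega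
        _ = _ := by ring
    have h9 := Nat.le_of_mul_le_mul_right h8 (by omega)
    nlinarith
  · have h1 := hkk 9 (d + 2) (by omega) (by omega)
      (by
        have h4 : (d + 2).choose d = (d + 2).choose 2 := Nat.choose_symm_of_eq_add (by omega)
        rw [h4, Nat.choose_two_right]
        simp only [Nat.add_succ_sub_one]
        apply Nat.div_le_of_le_mul
        nlinarith)
    have h3 : 6 * (d + 2).choose (d - 1) = (d + 2) * (d + 1) * d := by
      have h4 : (d + 2).choose (d - 1) = (d + 2).choose 3 := Nat.choose_symm_of_eq_add (by omega)
      rw [h4]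
      have := Nat.descFactorial_eq_factorial_mul_choose (d + 2) 3
      simp only [Nat.descFactorial, Nat.factorial] at this
      have e1 : d + 2 - 2 = d := by omega
      have e2 : d + 2 - 1 = d + 1 := by omega
      have e3 : d + 2 - 0 = d + 2 := by omega
      simp only [e1, e2, e3] at this
      linarith
    have h4 : (d + 2) * (d + 1) * d ≤ 54 * g := by
      rw [← h3]; have := h1.trans (Nat.mul_le_mul_left _ hNS); omega
    have h5 : g ≤ (d + 1) * b := by nlinarith
    have h6 : (d + 1) * ((d + 2) * d) ≤ (d + 1) * (54 * b) := by nlinarith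
    have h7 := Nat.le_of_mul_le_mul_left h6 (by omega)
    refine ⟨by nlinarith, fun _ => by nlinarith⟩

structure Par (m q : ℕ) : Prop where
  hq : 1 ≤ q
  h1 : 2 * (7 * (2 * m + 1) ^ 20) ^ 2 ≤ 2 ^ q
  h2 : 2 ^ 60 * q ^ 20 ≤ m

def ww (m : ℕ) : ℝ := 1 / ((2 * m : ℕ) : ℝ) ^ 2

lemma ww_nonneg (m : ℕ) : 0 ≤ ww m := by unfold ww; positivity

lemma Par.sq {m q : ℕ} (h : Par m q) : 2 ^ 60 * q ^ 2 ≤ m :=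
  le_trans (Nat.mul_le_mul_left _ (Nat.pow_le_pow_right h.hq (by norm_num))) h.h2

lemma Par.lin {m q : ℕ} (h : Par m q) : 2 ^ 60 * q ≤ m :=
  le_trans (Nat.mul_le_mul_left _ (by nlinarith [h.hq])) h.sq

lemma Par.hgw {m q : ℕ} (h : Par m q) : (1 + ww m) ^ (16 * q * (2 * m)) ≤ 2 := by
  have hm : 2 ^ 60 * q ≤ m := h.lin
  have hq := h.hq
  have hm0 : (0 : ℝ) < m := by
    have : 0 < m := by omega
    exact_mod_cast this
  have hmR : (16 : ℝ) * q ≤ m := by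
    have : 16 * q ≤ m := by omega
    exact_mod_cast this
  have e1 : 1 + ww m ≤ Real.exp (ww m) := by
    have := Real.add_one_le_exp (ww m); linarith
  calc (1 + ww m) ^ (16 * q * (2 * m)) ≤ (Real.exp (ww m)) ^ (16 * q * (2 * m)) := by
        have := ww_nonneg m
        gcongr
    _ = Real.exp ((16 * q * (2 * m) : ℕ) * ww m) := by rw [← Real.exp_nat_mul]
    _ ≤ Real.exp (1 / 2) := by
        apply Real.exp_le_exp.2
        unfold ww
        push_cast
        rw [mul_one_div, div_le_div_iff₀ (by positivity) (by norm_num)]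
        nlinarith
    _ ≤ 2 := by
        have h3 := Real.add_one_le_exp (-(1 / 2 : ℝ))
        rw [Real.exp_neg] at h3
        have hp := Real.exp_pos (1 / 2 : ℝ)
        have h4 : Real.exp (1 / 2) * (-(1 / 2) + 1) ≤ Real.exp (1 / 2) * (Real.exp (1 / 2))⁻¹ :=
          mul_le_mul_of_nonneg_left h3 hp.le
        rw [mul_inv_cancel₀ hp.ne'] at h4
        linarith

lemma half_rpow_le {q : ℕ} {x : ℝ} (h : (q : ℝ) ≤ x) : ((1 : ℝ) / 2) ^ x ≤ 1 / 2 ^ q := by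
  have := Real.rpow_le_rpow_of_exponent_ge (by norm_num : (0 : ℝ) < 1 / 2) (by norm_num) h
  refine this.trans ?_
  rw [Real.rpow_natCast, one_div_pow]

lemma LF_bb {m q j : ℕ} (h : Par m q) (hj : j + 1 ≤ m) {v : Lay (2 * m) j}
    {D : Finset (Finset (Fin (2 * m)))} (hD : D ∈ LF v) :
    m / 8 ≤ bb j D ∧ 2 ^ 10 * q ^ 2 ≤ bb j D ∧ (2 * m - j ≤ (top j D).card →
      m ^ 2 / 60 ≤ bb j D) := by
  have hlk : Linked v (top j D) := (Finset.mem_filter.1 hD).2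
  have hm := h.sq
  have hq := h.hq
  have hq2 : 1 ≤ q ^ 2 := Nat.one_le_pow _ _ hq
  obtain ⟨h1, h2⟩ := exp_main (n := 2 * m) (j := j) (by omega) (by omega) D ⟨v, hlk.1⟩
  refine ⟨by omega, by omega, fun ht => ?_⟩
  have h3 := h2 ht
  have h4 : m ^ 2 ≤ (2 * m - j) ^ 2 := Nat.pow_le_pow_left (by omega) 2
  omega

lemma key_LF {m q j : ℕ} (h : Par m q) (hj : j + 1 ≤ m) (hcl : Claim (2 * m) j (ww m))
    (v : Lay (2 * m) j) : ∑ D ∈ LF v, ((1 : ℝ) / 2) ^ gg j D ≤ ww m := by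
  have hm := h.sq
  have hq := h.hq
  have hq2 : 1 ≤ q ^ 2 := Nat.one_le_pow _ _ hq
  have h2 := h.h2
  refine (key_main (β := m / 8) (by omega) hq (by omega) h.h1 v (ww m) (ww_nonneg m) h.hgw hcl
    (LF v) (le_refl _) (fun D hD => (LF_bb h hj hD).1) (fun D hD => (LF_bb h hj hD).2.1)).trans ?_
  have h3 : (q : ℝ) ≤ ((m / 8 : ℕ) : ℝ) / (16 * q) := by
    have hq0 : (0 : ℝ) < q := by exact_mod_cast hq
    rw [le_div_iff₀ (by positivity)]
    have : q * (16 * q) ≤ m / 8 := by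
      have : q * (16 * q) = 16 * q ^ 2 := by ring
      omega
    exact_mod_cast this
  have h4 := half_rpow_le h3
  have h5 : 2 * (2 * m) ^ 2 ≤ 2 ^ q := by
    refine le_trans ?_ h.h1
    apply Nat.mul_le_mul_left
    apply Nat.pow_le_pow_left
    have : (2 * m + 1) ^ 1 ≤ (2 * m + 1) ^ 20 := Nat.pow_le_pow_right (by omega) (by norm_num)
    rw [pow_one] at this
    omega
  have h6 : (2 : ℝ) * ((2 * m : ℕ) : ℝ) ^ 2 ≤ 2 ^ q := by exact_mod_cast h5
  have hm0 : (0 : ℝ) < ((2 * m : ℕ) : ℝ) := by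
    have : 0 < 2 * m := by omega
    exact_mod_cast this
  have h7 : 2 * ((1 : ℝ) / 2 ^ q) ≤ ww m := by
    unfold ww
    rw [mul_one_div, div_le_div_iff₀ (by positivity) (by positivity)]
    linarith
  linarith

lemma claim_all {m q : ℕ} (h : Par m q) (j : ℕ) (hj : j + 1 ≤ m) : Claim (2 * m) j (ww m) := by
  induction j with
  | zero => exact claim_zero _ _ (ww_nonneg m)
  | succ j ih =>
    have hc := ih (by omega)
    exact claim_succ (by omega) _ (ww_nonneg m) (key_LF h (by omega) hc)

lemma final_sum {m q j : ℕ} (h : Par m q) (hj : j + 1 = m) (v : Lay (2 * m) j) :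
    ∑ D ∈ (LF v).filter (fun D => 2 * m - j ≤ (top j D).card), ((1 : ℝ) / 2) ^ gg j D
      ≤ 2 * (1 / 2 ^ (3 * m)) := by
  have hm := h.sq
  have hq := h.hq
  have h2 := h.h2
  refine (key_main (β := m ^ 2 / 60) (by omega) hq (by omega) h.h1 v (ww m) (ww_nonneg m) h.hgw
    (claim_all h j hj.le) _ (Finset.filter_subset _ _)
    (fun D hD => (LF_bb h hj.le (Finset.mem_filter.1 hD).1).2.2 (Finset.mem_filter.1 hD).2)
    (fun D hD => (LF_bb h hj.le (Finset.mem_filter.1 hD).1).2.1)).trans ?_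
  have h3 : ((3 * m : ℕ) : ℝ) ≤ ((m ^ 2 / 60 : ℕ) : ℝ) / (16 * q) := by
    have hq0 : (0 : ℝ) < q := by exact_mod_cast hq
    rw [le_div_iff₀ (by positivity)]
    have : 3 * m * (16 * q) ≤ m ^ 2 / 60 := by
      rw [Nat.le_div_iff_mul_le (by norm_num)]
      have := h.lin
      nlinarith
    exact_mod_cast this
  have h4 := half_rpow_le h3
  linarith

/-! ### The flipping argument -/

def DD {n : ℕ} (j : ℕ) (Δ : Finset (Finset (Fin n))) : Finset (Finset (Fin n)) :=
  Finset.univ.filter (fun y => y.Nonempty ∧ y.card ≤ j ∧ y ∉ Δ)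

lemma mem_DD {n j : ℕ} {Δ : Finset (Finset (Fin n))} {y : Finset (Fin n)} :
    y ∈ DD j Δ ↔ y.Nonempty ∧ y.card ≤ j ∧ y ∉ Δ := by simp [DD]

lemma mem_all {n : ℕ} {Δ : Finset (Finset (Fin n))} : Δ ∈ allComplexes n ↔ IsComplex Δ := by
  simp [allComplexes]

lemma DD_upTo {n j : ℕ} {Δ : Finset (Finset (Fin n))} (h : IsComplex Δ) : UpTo n j (DD j Δ) := by
  refine ⟨fun w hw => (mem_DD.1 hw).2.1, fun w hw u hwu hu => ?_⟩
  rw [mem_DD] at hw ⊢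
  exact ⟨hw.1.mono hwu, hu, fun hc => hw.2.2 (h.2 u hc w hw.1 hwu)⟩

lemma mem_NS {n j : ℕ} {X : Finset (Lay n j)} {z : Lay n (j + 1)} :
    z ∈ (layB n j).NS X ↔ ∃ u ∈ X, u.1 ⊆ z.1 := by
  simp only [Bip.NS, Finset.mem_biUnion, mem_layN]

def EE {n j : ℕ} (v : Lay n j) (D0 : Finset (Finset (Fin n))) : Finset (Finset (Finset (Fin n))) :=
  (allComplexes n).filter (fun Δ => v ∈ top j (DD j Δ) ∧ comp v (DD j Δ) = D0)

lemma flip_complex {n j : ℕ} {v : Lay n j} {D0 Δ : Finset (Finset (Fin n))} (h : Δ ∈ EE v D0)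
    (S : Finset (Lay n (j + 1))) (hS : S ⊆ (layB n j).NS (top j D0)) :
    IsComplex (Δ ∪ D0 ∪ raw S) := by
  rw [EE, Finset.mem_filter, mem_all] at h
  obtain ⟨hΔ, hv, rfl⟩ := h
  have hU := DD_upTo (j := j) hΔ
  refine ⟨fun x hx => ?_, fun x hx y hy hyx => ?_⟩
  · rw [Finset.mem_union, Finset.mem_union] at hx
    rcases hx with (hx | hx) | hx
    · exact hΔ.1 x hx
    · exact (mem_DD.1 (comp_sub v hx)).1
    · rw [raw, Finset.mem_image] at hx
      obtain ⟨z, _, rfl⟩ := hx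
      exact Finset.card_pos.1 (by rw [z.2]; omega)
  · rw [Finset.mem_union, Finset.mem_union] at hx ⊢
    by_cases hyΔ : y ∈ Δ
    · exact Or.inl (Or.inl hyΔ)
    rcases hx with (hx | hx) | hx
    · exact Or.inl (Or.inl (hΔ.2 x hx y hy hyx))
    · left; right
      have hx' := hx
      simp only [comp, Finset.mem_filter] at hx' ⊢
      obtain ⟨hxD, u, hu, hxu⟩ := hx'
      refine ⟨mem_DD.2 ⟨hy, (Finset.card_le_card hyx).trans (mem_DD.1 hxD).2.1, hyΔ⟩, u, hu,
        hyx.trans hxu⟩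
    · rw [raw, Finset.mem_image] at hx
      obtain ⟨z, hz, rfl⟩ := hx
      obtain ⟨u, hu, huz⟩ := mem_NS.1 (hS hz)
      rw [top_comp hU hv] at hu
      by_cases hyz : y = z.1
      · right; rw [hyz]; exact mem_raw.2 hz
      · left; right
        have hlt : y.card < z.1.card := Finset.card_lt_card (hyx.ssubset_of_ne hyz)
        rw [z.2] at hlt
        have hyD : y ∈ DD j Δ := mem_DD.2 ⟨hy, by omega, hyΔ⟩
        obtain ⟨y', h1, h2, h3⟩ := Finset.exists_subsuperset_card_eq hyx
          (show y.card ≤ j by omega) (by rw [z.2]; omega)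
        have hy' : (⟨y', h3⟩ : Lay n j) ∈ top j (DD j Δ) :=
          mem_top.2 (hU.2 y hyD y' h1 h3.le)
        have := compTop_step hu hy' ⟨z, mem_layN.2 huz, mem_layN.2 h2⟩
        simp only [comp, Finset.mem_filter]
        exact ⟨hyD, _, this, h1⟩

lemma flip_card {n j : ℕ} (v : Lay n j) (D0 : Finset (Finset (Fin n))) :
    (EE v D0).card * 2 ^ gg j D0 ≤ (allComplexes n).card := by
  rw [gg, ← Finset.card_powerset, ← Finset.card_product]
  refine Finset.card_le_card_of_injOn (fun p => p.1 ∪ D0 ∪ raw p.2) ?_ ?_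
  · rintro ⟨Δ, S⟩ hp
    simp only [Finset.coe_product, Set.mem_prod, Finset.mem_coe, Finset.mem_powerset] at hp
    exact mem_all.2 (flip_complex hp.1 S hp.2)
  · have key : ∀ Δ S, Δ ∈ EE v D0 → S ⊆ (layB n j).NS (top j D0) →
        (Δ = (Δ ∪ D0 ∪ raw S) \ (D0 ∪ raw ((layB n j).NS (top j D0)))) ∧
        (∀ z : Lay n (j + 1), z ∈ S ↔ z ∈ (layB n j).NS (top j D0) ∧ z.1 ∈ Δ ∪ D0 ∪ raw S) := by
      intro Δ S h hS
      rw [EE, Finset.mem_filter, mem_all] at h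
      obtain ⟨hΔ, hv, rfl⟩ := h
      have hnG : ∀ z ∈ (layB n j).NS (top j (comp v (DD j Δ))), z.1 ∉ Δ := by
        intro z hz hzΔ
        obtain ⟨u, hu, huz⟩ := mem_NS.1 hz
        have hu' := mem_DD.1 (comp_sub v (mem_top.1 hu))
        exact hu'.2.2 (hΔ.2 _ hzΔ _ hu'.1 huz)
      constructor
      · ext x
        simp only [Finset.mem_sdiff, Finset.mem_union, not_or]
        constructor
        · intro hx
          refine ⟨Or.inl (Or.inl hx), fun hc => (mem_DD.1 (comp_sub v hc)).2.2 hx, fun hc => ?_⟩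
          rw [raw, Finset.mem_image] at hc
          obtain ⟨z, hz, rfl⟩ := hc
          exact hnG z hz hx
        · rintro ⟨(hx | hx) | hx, h1, h2⟩
          · exact hx
          · exact absurd hx h1
          · exfalso
            apply h2
            rw [raw, Finset.mem_image] at hx ⊢
            obtain ⟨z, hz, rfl⟩ := hx
            exact ⟨z, hS hz, rfl⟩
      · intro z
        simp only [Finset.mem_union]
        constructor
        · intro hz
          exact ⟨hS hz, Or.inr (mem_raw.2 hz)⟩
        · rintro ⟨hz, (hx | hx) | hx⟩
          · exact absurd hx (hnG z hz)
          · have := (mem_DD.1 (comp_sub v hx)).2.1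
            rw [z.2] at this; omega
          · exact mem_raw.1 hx
    rintro ⟨Δ, S⟩ hp ⟨Δ', S'⟩ hp' heq
    simp only [Finset.coe_product, Set.mem_prod, Finset.mem_coe, Finset.mem_powerset] at hp hp'
    simp only at heq
    obtain ⟨a1, a2⟩ := key Δ S hp.1 hp.2
    obtain ⟨b1, b2⟩ := key Δ' S' hp'.1 hp'.2
    rw [Prod.mk.injEq]
    constructor
    · rw [a1, heq, ← b1]
    · ext z
      rw [a2, b2, heq]

def GoodP {n : ℕ} (m : ℕ) (Δ : Finset (Finset (Fin n))) : Prop :=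
  ∀ x : Finset (Fin n), x.Nonempty → x.card ≤ m - 2 → x ∈ Δ

lemma bad_cover {i : ℕ} {Δ : Finset (Finset (Fin (2 * (i + 2))))} (hi : 1 ≤ i)
    (h : Δ ∈ allComplexes (2 * (i + 2))) (hb : ¬ GoodP (i + 2) Δ) :
    ∃ v : Lay (2 * (i + 2)) (i + 1),
      ∃ D0 ∈ (LF v).filter (fun D => 2 * (i + 2) - (i + 1) ≤ (top (i + 1) D).card), Δ ∈ EE v D0 := by
  unfold GoodP at hb
  push Not at hb
  obtain ⟨x, hx, hxc, hxΔ⟩ := hb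
  have hΔ := mem_all.1 h
  obtain ⟨x', hx'⟩ := exists_sup (n := 2 * (i + 2)) (j := i) (by omega) x (by omega)
  have hx'Δ : x'.1 ∉ Δ := fun hc => hxΔ (hΔ.2 _ hc x hx hx')
  obtain ⟨v, hv⟩ := exists_sup (n := 2 * (i + 2)) (j := i + 1) (by omega) x'.1 (by rw [x'.2]; omega)
  have hU := DD_upTo (j := i + 1) hΔ
  have hx'D : x'.1 ∈ DD (i + 1) Δ := mem_DD.2 ⟨hx.mono hx', by rw [x'.2]; omega, hx'Δ⟩
  have hvt : v ∈ top (i + 1) (DD (i + 1) Δ) := mem_top.2 (hU.2 _ hx'D _ hv v.2.le)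
  have hx'c : x'.1 ∈ comp v (DD (i + 1) Δ) := by
    simp only [comp, Finset.mem_filter]
    exact ⟨hx'D, v, mem_compTop_self v, hv⟩
  refine ⟨v, comp v (DD (i + 1) Δ), ?_, ?_⟩
  · rw [Finset.mem_filter]
    constructor
    · rw [LF, Finset.mem_filter, UF, Finset.mem_filter]
      refine ⟨⟨Finset.mem_univ _, comp_upTo (by omega) hU v⟩, ?_⟩
      rw [top_comp hU hvt]
      exact compTop_linked v
    · have h1 := up_card x'
      have h2 : (Finset.univ : Finset (Lay (2 * (i + 2)) (i + 1))).filter (fun z => x'.1 ⊆ z.1) ⊆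
          top (i + 1) (comp v (DD (i + 1) Δ)) := by
        intro z hz
        rw [top_comp hU hvt]
        exact comp_sup hU hx'c z (Finset.mem_filter.1 hz).2
      have h3 := Finset.card_le_card h2
      omega
  · rw [EE, Finset.mem_filter]
    exact ⟨h, hvt, rfl⟩

lemma bad_count {i q : ℕ} (hp : Par (i + 2) q) (hi : 1 ≤ i) :
    (((allComplexes (2 * (i + 2))).filter (fun Δ => ¬ GoodP (i + 2) Δ)).card : ℝ) ≤
      (allComplexes (2 * (i + 2))).card * (2 / 2 ^ (i + 2)) := by
  set n := 2 * (i + 2) with hn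
  set N := (allComplexes n).card with hN
  set F : Lay n (i + 1) → Finset (Finset (Finset (Fin n))) := fun v =>
    (LF v).filter (fun D => n - (i + 1) ≤ (top (i + 1) D).card) with hF
  have hsub : (allComplexes n).filter (fun Δ => ¬ GoodP (i + 2) Δ) ⊆
      Finset.univ.biUnion (fun v => (F v).biUnion (fun D0 => EE v D0)) := by
    intro Δ hΔ
    rw [Finset.mem_filter] at hΔ
    obtain ⟨v, D0, h1, h2⟩ := bad_cover hi hΔ.1 hΔ.2
    rw [Finset.mem_biUnion]
    refine ⟨v, Finset.mem_univ _, ?_⟩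
    rw [Finset.mem_biUnion]
    exact ⟨D0, h1, h2⟩
  have h1 : ((allComplexes n).filter (fun Δ => ¬ GoodP (i + 2) Δ)).card ≤
      ∑ v, ∑ D0 ∈ F v, (EE v D0).card :=
    (Finset.card_le_card hsub).trans (Finset.card_biUnion_le.trans
      (Finset.sum_le_sum (fun v _ => Finset.card_biUnion_le)))
  have h2 : ∀ v : Lay n (i + 1), ∀ D0, ((EE v D0).card : ℝ) ≤ N * ((1 : ℝ) / 2) ^ gg (i + 1) D0 := by
    intro v D0
    have := flip_card v D0
    have h3 : ((EE v D0).card : ℝ) * 2 ^ gg (i + 1) D0 ≤ N := by exact_mod_cast this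
    rw [one_div_pow, mul_one_div, le_div_iff₀ (by positivity)]
    exact h3
  have h3 : ∀ v : Lay n (i + 1), ∑ D0 ∈ F v, ((1 : ℝ) / 2) ^ gg (i + 1) D0 ≤
      2 * (1 / 2 ^ (3 * (i + 2))) := fun v => final_sum hp rfl v
  have hcardL : Fintype.card (Lay n (i + 1)) ≤ 2 ^ n := by
    refine (Fintype.card_subtype_le _).trans ?_
    simp
  calc (((allComplexes n).filter (fun Δ => ¬ GoodP (i + 2) Δ)).card : ℝ)
      ≤ ∑ v, ∑ D0 ∈ F v, ((EE v D0).card : ℝ) := by exact_mod_cast h1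
    _ ≤ ∑ v, ∑ D0 ∈ F v, (N * ((1 : ℝ) / 2) ^ gg (i + 1) D0) :=
        Finset.sum_le_sum (fun v _ => Finset.sum_le_sum (fun D0 _ => h2 v D0))
    _ = ∑ v, N * ∑ D0 ∈ F v, ((1 : ℝ) / 2) ^ gg (i + 1) D0 := by
        simp only [Finset.mul_sum]
    _ ≤ ∑ _v : Lay n (i + 1), (N : ℝ) * (2 * (1 / 2 ^ (3 * (i + 2)))) :=
        Finset.sum_le_sum (fun v _ => mul_le_mul_of_nonneg_left (h3 v) (Nat.cast_nonneg _))
    _ = (Fintype.card (Lay n (i + 1)) : ℝ) * (N * (2 * (1 / 2 ^ (3 * (i + 2))))) := by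
        rw [Finset.sum_const, nsmul_eq_mul, Finset.card_univ]
    _ ≤ (2 ^ n : ℝ) * (N * (2 * (1 / 2 ^ (3 * (i + 2))))) := by
        apply mul_le_mul_of_nonneg_right _ (by positivity)
        exact_mod_cast hcardL
    _ = N * (2 / 2 ^ (i + 2)) := by
        have : (2 : ℝ) ^ (3 * (i + 2)) = 2 ^ n * 2 ^ (i + 2) := by
          rw [← pow_add]; congr 1; omega
        rw [this]
        field_simp

lemma prob_ge {i q : ℕ} (hp : Par (i + 2) q) (hi : 1 ≤ i) :
    1 - 2 / 2 ^ (i + 2) ≤ uniformProb (2 * (i + 2)) (fun Δ => GoodP (i + 2) Δ) := by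
  have h := bad_count hp hi
  unfold uniformProb
  have hpos : 0 < (allComplexes (2 * (i + 2))).card := by
    apply Finset.card_pos.2
    exact ⟨∅, mem_all.2 ⟨by simp, by simp⟩⟩
  have hposR : (0 : ℝ) < (allComplexes (2 * (i + 2))).card := by exact_mod_cast hpos
  have hsplit := Finset.card_filter_add_card_filter_not (s := allComplexes (2 * (i + 2)))
    (fun Δ => GoodP (i + 2) Δ)
  have hs : (((allComplexes (2 * (i + 2))).filter (fun Δ => GoodP (i + 2) Δ)).card : ℝ) +
    ((allComplexes (2 * (i + 2))).filter (fun Δ => ¬ GoodP (i + 2) Δ)).card =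
      (allComplexes (2 * (i + 2))).card := by exact_mod_cast hsplit
  rw [le_div_iff₀ hposR]
  linarith

lemma prob_le {n : ℕ} (P : Finset (Finset (Fin n)) → Prop) : uniformProb n P ≤ 1 := by
  unfold uniformProb
  apply div_le_one_of_le₀ _ (Nat.cast_nonneg _)
  exact_mod_cast Finset.card_filter_le _ _

lemma par_exists : ∃ M, ∀ m ≥ M, ∃ q, Par m q := by
  have ht := tendsto_pow_const_div_const_pow_of_one_lt 20 (by norm_num : (1 : ℝ) < 2)
  have hc : (0 : ℝ) < 1 / (2 ^ 60 * 127 ^ 20) := by positivity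
  have he := (ht.eventually (gt_mem_nhds hc)).and (Filter.eventually_ge_atTop 1)
  obtain ⟨L0, hL0⟩ := Filter.eventually_atTop.1 he
  refine ⟨2 ^ L0, fun m hm => ?_⟩
  have hm0 : m ≠ 0 := by
    have : 0 < 2 ^ L0 := by positivity
    omega
  set l := Nat.log 2 m with hl
  have hlL : L0 ≤ l := Nat.le_log_of_pow_le (by norm_num) hm
  obtain ⟨h1, h2⟩ := hL0 l hlL
  have hlow : 2 ^ l ≤ m := Nat.pow_log_le_self 2 hm0
  have hup : m < 2 ^ (l + 1) := Nat.lt_pow_succ_log_self (by norm_num) m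
  refine ⟨40 * l + 87, by omega, ?_, ?_⟩
  · have h3 : 2 * m + 1 ≤ 2 ^ (l + 2) := by rw [pow_succ]; omega
    calc 2 * (7 * (2 * m + 1) ^ 20) ^ 2 ≤ 2 * (8 * (2 ^ (l + 2)) ^ 20) ^ 2 := by
          gcongr; norm_num
      _ = 2 ^ (40 * l + 87) := by
          rw [show (8 : ℕ) = 2 ^ 3 by norm_num]
          ring
  · refine le_trans ?_ hlow
    have h4 : 2 ^ 60 * (40 * l + 87) ^ 20 ≤ 2 ^ 60 * (127 * l) ^ 20 := by
      gcongr; omega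
    refine h4.trans ?_
    rw [div_lt_div_iff₀ (by positivity) (by positivity), one_mul] at h1
    have h5 : l ^ 20 * (2 ^ 60 * 127 ^ 20) ≤ 2 ^ l := by exact_mod_cast h1.le
    rw [mul_pow]
    linarith
/-- For `Δ ~ U(n)` with `n` even, with high probability `Δ` has a complete
`(n/2 - 2)`-skeleton. -/
theorem stmt0 :
    Filter.Tendsto (fun m : ℕ =>
      uniformProb (2 * m) (fun Δ =>
        ∀ x : Finset (Fin (2 * m)), x.Nonempty → x.card ≤ m - 2 → x ∈ Δ))
      Filter.atTop (nhds 1) := by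
  obtain ⟨M, hM⟩ := par_exists
  have hlow : Filter.Tendsto (fun m : ℕ => (1 : ℝ) - 2 / 2 ^ m) Filter.atTop (nhds 1) := by
    have h1 : Filter.Tendsto (fun m : ℕ => ((1 : ℝ) / 2) ^ m) Filter.atTop (nhds 0) :=
      tendsto_pow_atTop_nhds_zero_of_lt_one (by norm_num) (by norm_num)
    have h2 := (h1.const_mul 2).const_sub 1
    simp only [mul_zero, sub_zero] at h2
    refine h2.congr (fun m => ?_)
    rw [one_div_pow, mul_one_div]
  refine tendsto_of_tendsto_of_tendsto_of_le_of_le' hlow tendsto_const_nhds ?_ ?_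
  · filter_upwards [Filter.eventually_ge_atTop (max M 3)] with m hm
    have h1 : M ≤ m := (le_max_left _ _).trans hm
    have h2 : 3 ≤ m := (le_max_right _ _).trans hm
    obtain ⟨q, hq⟩ := hM m h1
    obtain ⟨i, rfl⟩ : ∃ i, m = i + 2 := ⟨m - 2, by omega⟩
    exact prob_ge hq (by omega)
  · exact Filter.Eventually.of_forall (fun m => prob_le _)
end
end

section
/- Fix a real constant 0 < c < 1 and an integer k ≥ 2, and set C = α(c)·k!/(1−c)^k. There exists a constant q = q(c,k) > 0 such that the following holds: for n ranging over values with cn ∈ ℕ, let t = cn, t' = t − k, and p_n = n^{−(k−1)}·(C − q·(1−c)^{−k}·k!·(log n)/n). If Δ ∼ RP(n,t,p_n), then the probability that Δ has a complete t'-skeleton tends to 0 as n → ∞. -/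
open scoped Classical

noncomputable section

/-- The natural-log entropy function `α(c)`. -/
def entropy (c : ℝ) : ℝ := -c * Real.log c - (1 - c) * Real.log (1 - c)

/-- The simplicial complex generated by a family `F` of facets: all nonempty
subsets of members of `F`. -/
def genComplex {n : ℕ} (F : Finset (Finset (Fin n))) : Finset (Finset (Fin n)) :=
  Finset.univ.filter (fun x => x.Nonempty ∧ ∃ f ∈ F, x ⊆ f)

/-- The probability, under the random pure model `RP(n,t,p)` (each `t`-subset of
`[n]` is taken as a facet independently with probability `p`), of the event `P`
for the generated complex. -/
def rpProb (n t : ℕ) (p : ℝ) (P : Finset (Finset (Fin n)) → Prop) : ℝ :=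
  ∑ F ∈ (Finset.univ.filter (fun s : Finset (Fin n) => s.card = t)).powerset,
    (if P (genComplex F) then p ^ F.card * (1 - p) ^ (Nat.choose n t - F.card) else 0)

theorem aux_disj {β : Type*} (T U : Finset β) (hU : U ⊆ T) (p : ℝ) :
    ∑ F ∈ T.powerset, p ^ F.card * (1 - p) ^ (T.card - F.card) *
      (if Disjoint F U then (1 : ℝ) else 0) = (1 - p) ^ U.card := by
  have h1 : T.powerset.filter (fun F => Disjoint F U) = (T \ U).powerset := by
    ext F
    simp only [Finset.mem_filter, Finset.mem_powerset, Finset.subset_sdiff]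
  have h2 : ∑ F ∈ T.powerset, p ^ F.card * (1 - p) ^ (T.card - F.card) *
      (if Disjoint F U then (1 : ℝ) else 0)
      = ∑ F ∈ (T \ U).powerset, p ^ F.card * (1 - p) ^ (T.card - F.card) := by
    rw [← h1, Finset.sum_filter]
    refine Finset.sum_congr rfl fun F _ => ?_
    split_ifs <;> simp
  rw [h2]
  have h3 := Finset.sum_pow_mul_eq_add_pow p (1 - p) (T \ U)
  have h4 : ∑ F ∈ (T \ U).powerset, p ^ F.card * (1 - p) ^ (T.card - F.card)
      = (1 - p) ^ U.card * ∑ F ∈ (T \ U).powerset,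
          p ^ F.card * (1 - p) ^ ((T \ U).card - F.card) := by
    rw [Finset.mul_sum]
    refine Finset.sum_congr rfl fun F hF => ?_
    have hc := Finset.card_le_card (Finset.mem_powerset.1 hF)
    have hc2 := Finset.card_sdiff_add_card_eq_card hU
    have : T.card - F.card = U.card + ((T \ U).card - F.card) := by omega
    rw [this, pow_add]; ring
  rw [h4, h3]; simp

theorem aux_cheby {α β : Type*} (T : Finset β) (p : ℝ) (hp0 : 0 ≤ p) (hp1 : p ≤ 1)
    (A : Finset α) (S : α → Finset β) (hS : ∀ a ∈ A, S a ⊆ T)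
    (hd : ∀ a ∈ A, ∀ b ∈ A, a ≠ b → Disjoint (S a) (S b))
    (Q : Finset β → Prop) (hQ : ∀ F, F ⊆ T → Q F → ∀ a ∈ A, ¬ Disjoint F (S a)) :
    (∑ F ∈ T.powerset,
      (if Q F then p ^ F.card * (1 - p) ^ (T.card - F.card) else 0)) *
      (∑ a ∈ A, (1 - p) ^ (S a).card) ^ 2 ≤ ∑ a ∈ A, (1 - p) ^ (S a).card := by
  set W : Finset β → ℝ := fun F => p ^ F.card * (1 - p) ^ (T.card - F.card) with hW
  have hW0 : ∀ F, 0 ≤ W F := fun F =>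
    mul_nonneg (pow_nonneg hp0 _) (pow_nonneg (by linarith) _)
  set I : α → Finset β → ℝ := fun a F => if Disjoint F (S a) then 1 else 0 with hI
  set u : α → ℝ := fun a => (1 - p) ^ (S a).card with hu
  have hu0 : ∀ a, 0 ≤ u a := fun a => pow_nonneg (by linarith) _
  have e0 : ∑ F ∈ T.powerset, W F = 1 := by
    have := Finset.sum_pow_mul_eq_add_pow p (1 - p) T
    rw [hW, this]; simp
  have e1 : ∀ a ∈ A, ∑ F ∈ T.powerset, W F * I a F = u a := fun a ha =>
    aux_disj T (S a) (hS a ha) p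
  have e2 : ∀ a ∈ A, ∀ b ∈ A, a ≠ b →
      ∑ F ∈ T.powerset, W F * (I a F * I b F) = u a * u b := by
    intro a ha b hb hab
    have := aux_disj T (S a ∪ S b) (Finset.union_subset (hS a ha) (hS b hb)) p
    rw [Finset.card_union_of_disjoint (hd a ha b hb hab), pow_add] at this
    rw [← this]
    refine Finset.sum_congr rfl fun F _ => ?_
    simp only [hW, hI, Finset.disjoint_union_right]
    by_cases h1 : Disjoint F (S a) <;> by_cases h2 : Disjoint F (S b) <;> simp [h1, h2]
  have e3 : ∀ a ∈ A, ∀ b ∈ A,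
      ∑ F ∈ T.powerset, W F * ((I a F - u a) * (I b F - u b)) ≤ if a = b then u a else 0 := by
    intro a ha b hb
    have hexp : ∑ F ∈ T.powerset, W F * ((I a F - u a) * (I b F - u b))
        = ∑ F ∈ T.powerset, W F * (I a F * I b F) - u b * ∑ F ∈ T.powerset, W F * I a F
          - u a * ∑ F ∈ T.powerset, W F * I b F + u a * u b * ∑ F ∈ T.powerset, W F := by
      simp only [Finset.mul_sum, ← Finset.sum_sub_distrib, ← Finset.sum_add_distrib]
      refine Finset.sum_congr rfl fun F _ => ?_
      ring
    rw [hexp, e0, e1 a ha, e1 b hb]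
    split_ifs with h
    · subst h
      have : ∑ F ∈ T.powerset, W F * (I a F * I a F) = u a := by
        rw [← e1 a ha]
        refine Finset.sum_congr rfl fun F _ => ?_
        simp only [hI]; split_ifs <;> simp
      rw [this]
      nlinarith [hu0 a]
    · rw [e2 a ha b hb h]
      linarith
  have e4 : ∑ F ∈ T.powerset, W F * (∑ a ∈ A, (I a F - u a)) ^ 2 ≤ ∑ a ∈ A, u a := by
    have : ∑ F ∈ T.powerset, W F * (∑ a ∈ A, (I a F - u a)) ^ 2
        = ∑ a ∈ A, ∑ b ∈ A, ∑ F ∈ T.powerset, W F * ((I a F - u a) * (I b F - u b)) := by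
      have h1 : ∀ F, W F * (∑ a ∈ A, (I a F - u a)) ^ 2
          = ∑ a ∈ A, ∑ b ∈ A, W F * ((I a F - u a) * (I b F - u b)) := by
        intro F
        rw [sq, Finset.sum_mul_sum]
        simp only [Finset.mul_sum]
      simp only [h1]
      rw [Finset.sum_comm]
      refine Finset.sum_congr rfl fun a _ => ?_
      rw [Finset.sum_comm]
    rw [this]
    refine Finset.sum_le_sum fun a ha => ?_
    calc _ ≤ ∑ b ∈ A, (if a = b then u a else 0) := Finset.sum_le_sum fun b hb => e3 a ha b hb
      _ = u a := by simp [ha]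
  refine le_trans ?_ e4
  rw [Finset.sum_mul]
  refine Finset.sum_le_sum fun F hF => ?_
  split_ifs with h
  · have : ∑ a ∈ A, (I a F - u a) = - ∑ a ∈ A, u a := by
      rw [← Finset.sum_neg_distrib]
      refine Finset.sum_congr rfl fun a ha => ?_
      simp [hI, hQ F (Finset.mem_powerset.1 hF) h a ha]
    rw [this, neg_sq]
  · rw [zero_mul]; exact mul_nonneg (hW0 F) (sq_nonneg _)

/-- maximal packing -/
theorem aux_pack {α β : Type*} (Y : Finset α) (S : α → Finset β) :
    ∃ A ⊆ Y, (∀ a ∈ A, ∀ b ∈ A, a ≠ b → Disjoint (S a) (S b)) ∧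
      ∀ y ∈ Y, y ∈ A ∨ ∃ a ∈ A, ¬ Disjoint (S a) (S y) := by
  obtain ⟨A, hA, hmax⟩ := Finset.exists_max_image
    (Y.powerset.filter (fun A => ∀ a ∈ A, ∀ b ∈ A, a ≠ b → Disjoint (S a) (S b)))
    Finset.card ⟨∅, by simp⟩
  simp only [Finset.mem_filter, Finset.mem_powerset] at hA hmax
  refine ⟨A, hA.1, hA.2, fun y hy => ?_⟩
  by_contra! hcon
  have := hmax (insert y A) ⟨Finset.insert_subset hy hA.1, ?_⟩
  · rw [Finset.card_insert_of_notMem hcon.1] at this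
    omega
  · intro a ha b hb hab
    rw [Finset.mem_insert] at ha hb
    rcases ha with rfl | ha <;> rcases hb with rfl | hb
    · exact absurd rfl hab
    · exact (hcon.2 b hb).symm
    · exact hcon.2 a ha
    · exact hA.2 a ha b hb hab

def starOf {n : ℕ} (t : ℕ) (x : Finset (Fin n)) : Finset (Finset (Fin n)) :=
  Finset.univ.filter (fun f => f.card = t ∧ x ⊆ f)

theorem starOf_card {n t k : ℕ} (hk : k ≤ t) (htn : t ≤ n) (x : Finset (Fin n))
    (hx : x.card = t - k) : (starOf t x).card ≤ (n - t + k).choose k := by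
  have hsub : starOf t x ⊆ (Finset.powersetCard k xᶜ).image (fun g => x ∪ g) := by
    intro f hf
    simp only [starOf, Finset.mem_filter, Finset.mem_univ, true_and] at hf
    refine Finset.mem_image.2 ⟨f \ x, ?_, Finset.union_sdiff_of_subset hf.2⟩
    rw [Finset.mem_powersetCard]
    refine ⟨fun i hi => ?_, ?_⟩
    · simp only [Finset.mem_sdiff] at hi
      simp [hi.2]
    · rw [Finset.card_sdiff_of_subset hf.2]; omega
  refine (Finset.card_le_card hsub).trans (Finset.card_image_le.trans ?_)
  rw [Finset.card_powersetCard, Finset.card_compl, Fintype.card_fin, hx]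
  have : n - (t - k) = n - t + k := by omega
  rw [this]

theorem aux_comb {n t k : ℕ} (hk : k < t) (htn : t ≤ n) (p : ℝ) (hp0 : 0 ≤ p) (hp1 : p < 1) :
    rpProb n t p (fun Δ => ∀ x : Finset (Fin n), x.Nonempty → x.card ≤ t - k → x ∈ Δ) *
      ((n.choose (t - k) : ℝ) * (1 - p) ^ ((n - t + k).choose k)) ≤ (n : ℝ) ^ (2 * k) := by
  set Y : Finset (Finset (Fin n)) := Finset.powersetCard (t - k) Finset.univ with hY
  obtain ⟨A, hAY, hdis, hmax⟩ := aux_pack Y (starOf t)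
  have hYc : ∀ x ∈ Y, x.card = t - k := fun x hx => (Finset.mem_powersetCard.1 hx).2
  -- covering
  have hcov : Y ⊆ A.biUnion (fun a => (starOf t a).biUnion
      (fun f => Finset.powersetCard (t - k) f)) := by
    intro y hy
    have key : ∃ a ∈ A, ¬ Disjoint (starOf t a) (starOf t y) := by
      rcases hmax y hy with h | h
      · refine ⟨y, h, ?_⟩
        obtain ⟨f, hf1, hf2⟩ := Finset.exists_superset_card_eq (s := y) (n := t)
          (by rw [hYc y hy]; omega) (by simpa using htn)
        rw [Finset.not_disjoint_iff]
        exact ⟨f, by simp [starOf, hf1, hf2], by simp [starOf, hf1, hf2]⟩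
      · exact h
    obtain ⟨a, ha, hna⟩ := key
    obtain ⟨f, hf1, hf2⟩ := Finset.not_disjoint_iff.1 hna
    refine Finset.mem_biUnion.2 ⟨a, ha, Finset.mem_biUnion.2 ⟨f, hf1, ?_⟩⟩
    simp only [starOf, Finset.mem_filter, Finset.mem_univ, true_and] at hf2
    exact Finset.mem_powersetCard.2 ⟨hf2.2, hYc y hy⟩
  have hball : Y.card ≤ A.card * n ^ (2 * k) := by
    refine (Finset.card_le_card hcov).trans (Finset.card_biUnion_le_card_mul _ _ _ fun a ha => ?_)
    have h1 : ((starOf t a).biUnion (fun f => Finset.powersetCard (t - k) f)).card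
        ≤ (starOf t a).card * n ^ k := by
      refine Finset.card_biUnion_le_card_mul _ _ _ fun f hf => ?_
      simp only [starOf, Finset.mem_filter, Finset.mem_univ, true_and] at hf
      rw [Finset.card_powersetCard, hf.1, Nat.choose_symm hk.le]
      exact (Nat.choose_le_pow _ _).trans (Nat.pow_le_pow_left htn k)
    have h2 : (starOf t a).card ≤ n ^ k :=
      (starOf_card hk.le htn a (hYc a (hAY ha))).trans
        ((Nat.choose_le_pow _ _).trans (Nat.pow_le_pow_left (by omega) k))
    calc _ ≤ _ := h1
      _ ≤ n ^ k * n ^ k := Nat.mul_le_mul_right _ h2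
      _ = n ^ (2 * k) := by ring
  have hYcard : Y.card = n.choose (t - k) := by simp [hY]
  rw [hYcard] at hball
  have hch := aux_cheby (Finset.univ.filter (fun s : Finset (Fin n) => s.card = t)) p hp0 hp1.le A
    (starOf t) (fun a _ f hf => by simp only [starOf, Finset.mem_filter] at hf ⊢; exact ⟨hf.1, hf.2.1⟩)
    hdis
    (fun F => ∀ x : Finset (Fin n), x.Nonempty → x.card ≤ t - k → x ∈ genComplex F) (by
      intro F hFT hF a ha
      have hc := hYc a (hAY ha)
      have := hF a (Finset.card_pos.1 (by omega)) hc.le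
      simp only [genComplex, Finset.mem_filter, Finset.mem_univ, true_and] at this
      obtain ⟨_, f, hf, haf⟩ := this
      rw [Finset.not_disjoint_iff]
      have := hFT hf
      simp only [Finset.mem_filter, Finset.mem_univ, true_and] at this
      exact ⟨f, hf, by simp [starOf, this, haf]⟩)
  have hT : (Finset.univ.filter (fun s : Finset (Fin n) => s.card = t)).card = n.choose t := by
    have : Finset.univ.filter (fun s : Finset (Fin n) => s.card = t)
        = Finset.powersetCard t Finset.univ := by
      ext s; simp [Finset.mem_powersetCard]
    rw [this]
    simp
  rw [hT] at hch
  change rpProb n t p (fun Δ => ∀ x : Finset (Fin n), x.Nonempty → x.card ≤ t - k → x ∈ Δ) * _ ≤ _ at hch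
  set P := rpProb n t p (fun Δ => ∀ x : Finset (Fin n), x.Nonempty → x.card ≤ t - k → x ∈ Δ)
  have hP0 : 0 ≤ P := by
    refine Finset.sum_nonneg fun F _ => ?_
    split_ifs
    · exact mul_nonneg (pow_nonneg hp0 _) (pow_nonneg (by linarith) _)
    · exact le_rfl
  set s := ∑ a ∈ A, (1 - p) ^ (starOf t a).card
  have hs : (A.card : ℝ) * (1 - p) ^ ((n - t + k).choose k) ≤ s := by
    rw [← nsmul_eq_mul]
    refine Finset.card_nsmul_le_sum _ _ _ fun a ha => ?_
    exact pow_le_pow_of_le_one (by linarith) (by linarith)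
      (starOf_card hk.le htn a (hYc a (hAY ha)))
  have hq : 0 < (1 - p) ^ ((n - t + k).choose k) := pow_pos (by linarith) _
  have hcp : 0 < n.choose (t - k) := Nat.choose_pos (by omega)
  have hA : 0 < A.card := by
    rcases Nat.eq_zero_or_pos A.card with h | h
    · rw [h] at hball; omega
    · exact h
  have hs0 : 0 < s := lt_of_lt_of_le (mul_pos (by exact_mod_cast hA) hq) hs
  have hPs : P * s ≤ 1 := by
    by_contra! hcon
    nlinarith
  have hball' : (n.choose (t - k) : ℝ) ≤ A.card * (n : ℝ) ^ (2 * k) := by exact_mod_cast hball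
  calc P * ((n.choose (t - k) : ℝ) * (1 - p) ^ ((n - t + k).choose k))
      ≤ P * ((A.card * (n : ℝ) ^ (2 * k)) * (1 - p) ^ ((n - t + k).choose k)) := by gcongr
    _ = P * (A.card * (1 - p) ^ ((n - t + k).choose k)) * (n : ℝ) ^ (2 * k) := by ring
    _ ≤ P * s * (n : ℝ) ^ (2 * k) := by gcongr
    _ ≤ 1 * (n : ℝ) ^ (2 * k) := by gcongr
    _ = _ := one_mul _

theorem aux_logfac (m : ℕ) (hm : 0 < m) :
    Real.log (m.factorial : ℝ) ≤ m * Real.log m - m + 1 + Real.log m / 2 := by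
  obtain ⟨j, rfl⟩ : ∃ j, m = j + 1 := ⟨m - 1, by omega⟩
  have h := Stirling.log_stirlingSeq'_antitone (Nat.zero_le j)
  simp only [Function.comp, Nat.succ_eq_add_one, zero_add] at h
  rw [Stirling.log_stirlingSeq_formula, Stirling.log_stirlingSeq_formula] at h
  have hp : (0 : ℝ) < ((j + 1 : ℕ) : ℝ) := by positivity
  rw [Real.log_mul (by norm_num) hp.ne', Real.log_div hp.ne' (Real.exp_pos 1).ne',
    Real.log_exp] at h
  simp at h
  push_cast at h ⊢
  nlinarith

theorem aux_choose (n t : ℕ) (c : ℝ) (hc0 : 0 < c) (hc1 : c < 1) (hn : 0 < n)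
    (ht : (t : ℝ) = c * n) :
    entropy c * n - 2 - Real.log n ≤ Real.log (n.choose t : ℝ) := by
  have hn' : (0 : ℝ) < n := by exact_mod_cast hn
  have ht0 : (0 : ℝ) < t := by rw [ht]; positivity
  have htn : (t : ℝ) < n := by rw [ht]; nlinarith
  have htn' : t < n := by exact_mod_cast htn
  have hm : ((n - t : ℕ) : ℝ) = (1 - c) * n := by
    rw [Nat.cast_sub htn'.le, ht]; ring
  have h1 := aux_logfac t (by exact_mod_cast ht0)
  have h2 := aux_logfac (n - t) (by omega)
  have h3 := Stirling.le_log_factorial_stirling (n := n) (by omega)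
  have h4 : Real.log (n.factorial : ℝ) = Real.log (n.choose t : ℝ) + Real.log (t.factorial : ℝ)
      + Real.log ((n - t).factorial : ℝ) := by
    rw [← Nat.choose_mul_factorial_mul_factorial htn'.le]
    have := Nat.choose_pos htn'.le
    push_cast
    rw [Real.log_mul (by positivity) (by positivity), Real.log_mul (by positivity) (by positivity)]
  have l1 : Real.log (t : ℝ) = Real.log c + Real.log n := by
    rw [ht, Real.log_mul hc0.ne' hn'.ne']
  have l2 : Real.log ((n - t : ℕ) : ℝ) = Real.log (1 - c) + Real.log n := by
    rw [hm, Real.log_mul (by linarith) hn'.ne']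
  have l3 : Real.log c < 0 := Real.log_neg hc0 hc1
  have l4 : Real.log (1 - c) < 0 := Real.log_neg (by linarith) (by linarith)
  have l5 : 0 < Real.log (2 * Real.pi) := Real.log_pos (by nlinarith [Real.pi_gt_three])
  have l6 : 0 ≤ Real.log (n : ℝ) := Real.log_natCast_nonneg n
  rw [l1, ht] at h1
  rw [l2, hm] at h2
  unfold entropy
  nlinarith

theorem aux_choose2 (n t k : ℕ) (hk : k ≤ t) :
    n.choose t ≤ n ^ k * n.choose (t - k) := by
  induction k with
  | zero => simp
  | succ k ih =>
    have h := ih (by omega)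
    have h2 : n.choose (t - k) ≤ n * n.choose (t - (k + 1)) := by
      have e : t - k = (t - (k + 1)) + 1 := by omega
      rw [e]
      have := Nat.choose_succ_right_eq n (t - (k + 1))
      calc n.choose (t - (k + 1) + 1) ≤ n.choose (t - (k + 1) + 1) * (t - (k + 1) + 1) :=
            Nat.le_mul_of_pos_right _ (by omega)
        _ = n.choose (t - (k + 1)) * (n - (t - (k + 1))) := this
        _ ≤ n.choose (t - (k + 1)) * n := Nat.mul_le_mul_left _ (Nat.sub_le _ _)
        _ = _ := mul_comm _ _
    calc _ ≤ _ := h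
      _ ≤ n ^ k * (n * n.choose (t - (k + 1))) := Nat.mul_le_mul_left _ h2
      _ = _ := by ring

theorem entropy_pos (c : ℝ) (hc0 : 0 < c) (hc1 : c < 1) : 0 < entropy c := by
  have l3 : Real.log c < 0 := Real.log_neg hc0 hc1
  have l4 : Real.log (1 - c) < 0 := Real.log_neg (by linarith) (by linarith)
  unfold entropy
  nlinarith

/-- lower bound on the probability of being uncovered -/
theorem aux_u (n t k : ℕ) (hk : 2 ≤ k) (c : ℝ) (hc0 : 0 < c) (hc1 : c < 1) (hn : 0 < n)
    (ht : (t : ℝ) = c * n) (B C p : ℝ) (hB0 : 0 ≤ B) (hBC : B ≤ C) (hCn : 2 * C ≤ n)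
    (hm : (k : ℝ) ^ 2 ≤ (1 - c) * n) (hp : p = 1 / (n : ℝ) ^ (k - 1) * B)
    (G a K1 : ℝ) (hG : G = B * (1 - c) ^ k / k.factorial * n) (hGa : G ≤ a * n)
    (hK1 : K1 = 2 * k ^ 2 * a / (1 - c)) (ha : 0 ≤ a) :
    0 ≤ p ∧ p ≤ 1 / 2 ∧
      Real.exp (-(G + K1 + 2 * C * (a + K1))) ≤ (1 - p) ^ ((n - t + k).choose k) := by
  have hn' : (0 : ℝ) < n := by exact_mod_cast hn
  have hn1 : (1 : ℝ) ≤ n := by exact_mod_cast hn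
  have hc : 0 < 1 - c := by linarith
  have htn : (t : ℝ) < n := by rw [ht]; nlinarith
  have htn' : t < n := by exact_mod_cast htn
  have hmm : ((n - t : ℕ) : ℝ) = (1 - c) * n := by
    rw [Nat.cast_sub htn'.le, ht]; ring
  set m : ℝ := (1 - c) * n with hmdef
  have hm0 : 0 < m := by positivity
  have hp0 : 0 ≤ p := by rw [hp]; positivity
  have hpow : (n : ℝ) ≤ (n : ℝ) ^ (k - 1) := le_self_pow₀ hn1 (by omega)
  have hpC : p ≤ C / n := by
    rw [hp]
    calc 1 / (n : ℝ) ^ (k - 1) * B ≤ 1 / n * C := by gcongr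
      _ = C / n := by ring
  have hp2 : p ≤ 1 / 2 := hpC.trans (by rw [div_le_div_iff₀ hn' two_pos]; linarith)
  refine ⟨hp0, hp2, ?_⟩
  set M : ℝ := (((n - t + k).choose k : ℕ) : ℝ) with hM
  have hM0 : 0 ≤ M := by positivity
  have hK10 : 0 ≤ K1 := by rw [hK1]; positivity
  -- bound on M
  have hMle : M ≤ m ^ k * (1 + 2 * (k ^ 2 / m)) / k.factorial := by
    have h1 : M ≤ ((n - t + k : ℕ) : ℝ) ^ k / k.factorial := Nat.choose_le_pow_div k (n - t + k)
    refine h1.trans ?_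
    gcongr
    push_cast
    rw [hmm]
    have e : m + k = m * (1 + k / m) := by field_simp
    rw [e, mul_pow]
    gcongr
    have h2 : 1 + (k : ℝ) / m ≤ Real.exp (k / m) := by
      have := Real.add_one_le_exp ((k : ℝ) / m); linarith
    have h3 : (1 + (k : ℝ) / m) ^ k ≤ Real.exp (k ^ 2 / m) := by
      calc _ ≤ (Real.exp (k / m)) ^ k := by gcongr
        _ = _ := by rw [← Real.exp_nat_mul]; congr 1; ring
    have h4 : (k : ℝ) ^ 2 / m ≤ 1 := by rw [div_le_one hm0]; exact hm
    have h5 : 0 ≤ (k : ℝ) ^ 2 / m := by positivity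
    have h6 := Real.abs_exp_sub_one_le (x := (k : ℝ) ^ 2 / m) (by rw [abs_of_nonneg h5]; exact h4)
    rw [abs_of_nonneg h5] at h6
    have h7 := (abs_le.1 h6).2
    linarith
  have hpM : p * M ≤ G + K1 := by
    calc p * M ≤ p * (m ^ k * (1 + 2 * (k ^ 2 / m)) / k.factorial) := by gcongr
      _ = G * (1 + 2 * (k ^ 2 / m)) := by
        have e : (n : ℝ) ^ k = n ^ (k - 1) * n := by
          rw [← pow_succ]; congr 1; omega
        rw [hp, hG]
        have : m ^ k = (1 - c) ^ k * (n ^ (k - 1) * n) := by rw [hmdef, mul_pow, e]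
        rw [this]
        have hnk : (n : ℝ) ^ (k - 1) ≠ 0 := by positivity
        field_simp
      _ = G + G * (2 * (k ^ 2 / m)) := by ring
      _ ≤ G + a * n * (2 * (k ^ 2 / m)) := by gcongr
      _ = G + K1 := by rw [hK1, hmdef]; field_simp
  have hpM2 : 2 * p ^ 2 * M ≤ 2 * C * (a + K1) := by
    have hC0 : 0 ≤ C := hB0.trans hBC
    calc 2 * p ^ 2 * M = 2 * p * (p * M) := by ring
      _ ≤ 2 * (C / n) * (a * n + K1 * n) := by
        have : p * M ≤ a * n + K1 * n := by nlinarith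
        gcongr
      _ = _ := by field_simp
  have hlog : -(p + 2 * p ^ 2) ≤ Real.log (1 - p) := by
    have h := Real.one_sub_inv_le_log_of_pos (x := 1 - p) (by linarith)
    refine le_trans ?_ h
    have h1p : 0 < 1 - p := by linarith
    have : (1 - p)⁻¹ ≤ 1 + p + 2 * p ^ 2 := by
      rw [inv_le_iff_one_le_mul₀ h1p]
      nlinarith [mul_nonneg (sq_nonneg p) (by linarith : 0 ≤ 1 - 2 * p)]
    linarith
  rw [← Real.le_log_iff_exp_le (pow_pos (by linarith) _), Real.log_pow]
  change _ ≤ M * Real.log (1 - p)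
  nlinarith [mul_le_mul_of_nonneg_left hlog hM0]

/-- For constants `0 < c < 1`, `k ≥ 2`, with `C = α(c)·k!/(1-c)^k`, there is a
constant `q > 0` so that for `t = cn`, `t' = t - k` and
`p = n^{-(k-1)}(C - q(1-c)^{-k} k! log n / n)`, the complex `Δ ~ RP(n,t,p)` with
high probability does not have a complete `t'`-skeleton. -/
theorem stmt2 (c : ℝ) (hc0 : 0 < c) (hc1 : c < 1) (k : ℕ) (hk : 2 ≤ k) :
    ∃ q : ℝ, 0 < q ∧
      ∀ ε : ℝ, 0 < ε → ∃ N : ℕ, ∀ n : ℕ, N ≤ n → ∀ t : ℕ, (t : ℝ) = c * n →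
        rpProb n t
          ((1 / (n : ℝ) ^ (k - 1)) *
            (entropy c * k.factorial / (1 - c) ^ k -
              q * (k.factorial : ℝ) / (1 - c) ^ k * Real.log n / n))
          (fun Δ => ∀ x : Finset (Fin n), x.Nonempty → x.card ≤ t - k → x ∈ Δ) ≤ ε := by
  set a := entropy c with ha
  have ha0 : 0 < a := entropy_pos c hc0 hc1
  have hc : 0 < 1 - c := by linarith
  set C : ℝ := a * k.factorial / (1 - c) ^ k with hC
  have hC0 : 0 < C := by positivity
  set q : ℝ := 3 * k + 2 with hq
  have hq0 : 0 < q := by positivity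
  refine ⟨q, hq0, fun ε hε => ?_⟩
  set K1 : ℝ := 2 * k ^ 2 * a / (1 - c) with hK1
  set K0 : ℝ := K1 + 2 * C * (a + K1) with hK0
  set D : ℝ := q * (k.factorial : ℝ) / (1 - c) ^ k with hD
  have hD0 : 0 < D := by positivity
  have hcast := tendsto_natCast_atTop_atTop (R := ℝ)
  have ev1 : ∀ᶠ n : ℕ in Filter.atTop, Real.log n ≤ C / D * n := by
    have h := Real.isLittleO_log_id_atTop.bound (show 0 < C / D by positivity)
    filter_upwards [hcast.eventually h] with n hn
    simp only [id, Real.norm_eq_abs, Nat.abs_cast] at hn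
    exact (le_abs_self _).trans hn
  have evx : ∀ x : ℝ, ∀ᶠ n : ℕ in Filter.atTop, x ≤ n := fun x =>
    hcast.eventually_ge_atTop x
  have ev := (ev1.and ((evx ((k + 1) / c)).and ((evx (2 * C)).and ((evx (k ^ 2 / (1 - c))).and
    ((evx (Real.exp (2 + K0) / ε)).and (Filter.eventually_gt_atTop 0))))))
  obtain ⟨N, hN⟩ := Filter.eventually_atTop.1 ev
  refine ⟨N, fun n hnN t ht => ?_⟩
  obtain ⟨h1, h2, h3, h4, h5, hn⟩ := hN n hnN
  have hn' : (0 : ℝ) < n := by exact_mod_cast hn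
  have hkt : k < t := by
    have : (k : ℝ) + 1 ≤ t := by
      rw [div_le_iff₀ hc0] at h2; rw [ht]; linarith
    have : k + 1 ≤ t := by exact_mod_cast this
    omega
  have htn : t ≤ n := by
    have : (t : ℝ) ≤ n := by rw [ht]; nlinarith
    exact_mod_cast this
  rw [div_le_iff₀ hc] at h4
  have hl0 : 0 ≤ Real.log (n : ℝ) := Real.log_natCast_nonneg n
  set B : ℝ := C - D * Real.log n / n with hB
  have hB0 : 0 ≤ B := by
    have : D * Real.log n / n ≤ C := by
      rw [div_le_iff₀ hn']
      calc D * Real.log n ≤ D * (C / D * n) := by gcongr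
        _ = C * n := by field_simp
    linarith
  have hBC : B ≤ C := by
    have : 0 ≤ D * Real.log n / n := by positivity
    linarith
  set p : ℝ := 1 / (n : ℝ) ^ (k - 1) * B with hp
  have hG : a * n - q * Real.log n = B * (1 - c) ^ k / k.factorial * n := by
    rw [hB, hC, hD]
    field_simp
  obtain ⟨hp0, hp1, hu⟩ := aux_u n t k hk c hc0 hc1 hn ht B C p hB0 hBC h3 (by linarith) hp
    (a * n - q * Real.log n) a K1 hG (by have := mul_nonneg hq0.le hl0; linarith) hK1 ha0.le
  have hmain := aux_comb hkt htn p hp0 (by linarith)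
  set P := rpProb n t p (fun Δ => ∀ x : Finset (Fin n), x.Nonempty → x.card ≤ t - k → x ∈ Δ)
  set u := (1 - p) ^ ((n - t + k).choose k)
  by_cases hP : P ≤ 0
  · exact hP.trans hε.le
  push Not at hP
  have hch := aux_choose n t c hc0 hc1 hn ht
  rw [Real.le_log_iff_exp_le (by exact_mod_cast Nat.choose_pos htn)] at hch
  have hch2 : (n.choose t : ℝ) ≤ (n : ℝ) ^ k * n.choose (t - k) := by
    exact_mod_cast aux_choose2 n t k hkt.le
  have hprod : Real.exp (-(2 + K0)) * (n : ℝ) ^ (3 * k + 1) ≤ (n : ℝ) ^ k * n.choose (t - k) * u := by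
    have e : (n : ℝ) ^ (3 * k + 1) = Real.exp ((3 * k + 1) * Real.log n) := by
      rw [← Real.exp_log hn', ← Real.exp_nat_mul, Real.log_exp]
      push_cast; rfl
    rw [e, ← Real.exp_add]
    calc _ = Real.exp (a * n - 2 - Real.log n) *
          Real.exp (-(a * n - q * Real.log n + K1 + 2 * C * (a + K1))) := by
          rw [← Real.exp_add]; congr 1; rw [hK0, hq]; ring
      _ ≤ _ := by
        gcongr
        exact hch.trans hch2
  have hfin : P * (Real.exp (-(2 + K0)) * (n : ℝ) ^ (3 * k + 1)) ≤ (n : ℝ) ^ (3 * k) := by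
    calc _ ≤ P * ((n : ℝ) ^ k * n.choose (t - k) * u) := by gcongr
      _ = (n : ℝ) ^ k * (P * (n.choose (t - k) * u)) := by ring
      _ ≤ (n : ℝ) ^ k * (n : ℝ) ^ (2 * k) := by gcongr
      _ = _ := by ring
  have hfin2 : P * n ≤ Real.exp (2 + K0) := by
    have hnk : (0 : ℝ) < (n : ℝ) ^ (3 * k) := by positivity
    have e1 : P * (Real.exp (-(2 + K0)) * (n : ℝ) ^ (3 * k + 1))
        = (P * n * Real.exp (-(2 + K0))) * (n : ℝ) ^ (3 * k) := by ring
    rw [e1] at hfin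
    have h6 : P * n * Real.exp (-(2 + K0)) ≤ 1 := by
      refine le_of_mul_le_mul_right ?_ hnk
      rw [one_mul]; exact hfin
    rw [Real.exp_neg, ← div_eq_mul_inv, div_le_one (Real.exp_pos _)] at h6
    exact h6
  rw [div_le_iff₀ hε] at h5
  refine le_of_mul_le_mul_right ?_ hn'
  calc P * n ≤ Real.exp (2 + K0) := hfin2
    _ ≤ n * ε := h5
    _ = ε * n := mul_comm _ _
end
end
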